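/- Assume the Riemann Hypothesis. Then there exists x₀ such that for every r ≥ 1 with p_r ≥ x₀ one has 1.95 ≤ ( γ_r·e^{γ} − 1 ) · √(p_r) · (log p_r)² ≤ 2.05; equivalently, γ_r = e^{−γ}( 1 + g(p_r)/(√(p_r)(log p_r)²) ) with 1.95 ≤ g(p_r) ≤ 2.05 for p_r ≥ x₀. -/

import Mathlib

open Filter

/-- Generalized Euler constant for a finite set of primes `P`:
`γ(P) = ∏_{p∈P}(1 - 1/p) * (γ + ∑_{p∈P} log p / (p-1))`. -/
noncomputable def gammaP (P : Finset ℕ) : ℝ :=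
  (∏ p ∈ P, (1 - 1 / (p : ℝ))) *
    (Real.eulerMascheroniConstant + ∑ p ∈ P, Real.log p / ((p : ℝ) - 1))

/-- `γ_r = γ({p_1, …, p_r})`, the generalized Euler constant for the first `r` primes. -/
noncomputable def gammaR (r : ℕ) : ℝ :=
  gammaP ((Finset.range r).image (Nat.nth Nat.Prime))

/-- `p_r`, the `r`-th prime (`p_1 = 2`). -/
noncomputable def nthPrime (r : ℕ) : ℕ := Nat.nth Nat.Prime (r - 1)

section

open Filter Complex Metric Topology

lemma logDeriv_sub_le_of_norm_le {g : ℂ → ℂ} {R B : ℝ} (hR : 0 < R) (hB : 0 < B)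
    (hg : DifferentiableOn ℂ g (ball 0 R)) (h0 : ∀ z ∈ ball (0 : ℂ) R, g z ≠ 0)
    (hb : ∀ z ∈ ball (0 : ℂ) R, ‖g z‖ ≤ ‖g 0‖ * Real.exp B)
    {z w : ℂ} (hz : ‖z‖ ≤ R / 4) (hw : ‖w‖ ≤ R / 4) :
    ‖logDeriv g z - logDeriv g w‖ ≤ 128 * B / R ^ 2 * ‖z - w‖ := by
  have hdg : DifferentiableOn ℂ (logDeriv g) (ball 0 R) :=
    (hg.deriv isOpen_ball).div hg h0
  obtain ⟨l, hl0, hl⟩ := hdg.isExactOn_ball.with_val_at 0 0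
  have hld : DifferentiableOn ℂ l (ball 0 R) := fun x hx =>
    (hl x hx).differentiableAt.differentiableWithinAt
  have h0R : (0 : ℂ) ∈ ball (0 : ℂ) R := by simpa using hR
  have hga : ∀ x ∈ ball (0 : ℂ) R, HasDerivAt g (deriv g x) x := fun x hx =>
    (hg.differentiableAt (isOpen_ball.mem_nhds hx)).hasDerivAt
  have hconst : ∀ x ∈ ball (0 : ℂ) R, g x = g 0 * exp (l x) := by
    intro x hx
    have hd : ∀ y ∈ ball (0 : ℂ) R, HasDerivAt (fun y => g y * exp (-l y)) 0 y := by
      intro y hy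
      have := (hga y hy).mul (hl y hy).neg.cexp
      refine this.congr_deriv ?_
      rw [logDeriv_apply]
      have := h0 y hy
      field_simp
      simp
    have := (convex_ball (0 : ℂ) R).is_const_of_fderivWithin_eq_zero (𝕜 := ℂ)
      (f := fun y => g y * exp (-l y))
      (fun y hy => (hd y hy).differentiableAt.differentiableWithinAt)
      (fun y hy => by
        rw [fderivWithin_of_isOpen isOpen_ball hy]
        ext
        simp [(hd y hy).deriv]) hx h0R
    simp only [hl0, neg_zero, exp_zero, mul_one] at this
    rw [← this, mul_assoc, ← exp_add]
    simp
  have hg0 : 0 < ‖g 0‖ := norm_pos_iff.2 (h0 0 h0R)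
  have hre : Set.MapsTo l (ball 0 R) {z | z.re ≤ B} := by
    intro x hx
    have h1 := hb x hx
    rw [hconst x hx, norm_mul, Complex.norm_exp] at h1
    have := le_of_mul_le_mul_left h1 hg0
    simpa using this
  have hlb : ∀ x : ℂ, ‖x‖ ≤ R / 2 → ‖l x‖ ≤ 2 * B := by
    intro x hx
    have hxR : x ∈ ball (0 : ℂ) R := by simp; linarith
    refine (borelCaratheodory_zero hB hld hre hR hxR hl0).trans ?_
    have : 0 < R - ‖x‖ := by linarith
    rw [div_le_iff₀ this]
    nlinarith
  have hlog : ∀ x : ℂ, ‖x‖ ≤ 3 * R / 8 → ‖logDeriv g x‖ ≤ 16 * B / R := by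
    intro x hx
    have hxR : x ∈ ball (0 : ℂ) R := by simp; linarith
    have hsub : ∀ y ∈ closedBall x (R / 8), ‖y‖ ≤ R / 2 := by
      intro y hy
      rw [mem_closedBall, dist_eq_norm] at hy
      have := norm_le_norm_add_norm_sub' y x
      linarith
    have := Complex.norm_deriv_le_of_forall_mem_sphere_norm_le (c := x) (R := R / 8)
      (C := 2 * B) (f := l) (by positivity) (DifferentiableOn.diffContOnCl_ball (U := ball 0 R) hld
        (fun y hy => by have := hsub y hy; simp; linarith))
      (fun y hy => hlb y (hsub y (sphere_subset_closedBall hy)))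
    rw [(hl x hxR).deriv] at this
    refine this.trans (le_of_eq ?_)
    field_simp
    norm_num
  have hlog2 : ∀ x ∈ closedBall (0 : ℂ) (R / 4), ‖deriv (logDeriv g) x‖ ≤ 128 * B / R ^ 2 := by
    intro x hx
    rw [mem_closedBall_zero_iff] at hx
    have hsub : ∀ y ∈ closedBall x (R / 8), ‖y‖ ≤ 3 * R / 8 := by
      intro y hy
      rw [mem_closedBall, dist_eq_norm] at hy
      have := norm_le_norm_add_norm_sub' y x
      linarith
    have := Complex.norm_deriv_le_of_forall_mem_sphere_norm_le (c := x) (R := R / 8)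
      (C := 16 * B / R) (f := logDeriv g) (by positivity)
      (DifferentiableOn.diffContOnCl_ball (U := ball 0 R) hdg
        (fun y hy => by have := hsub y hy; simp; linarith))
      (fun y hy => hlog y (hsub y (sphere_subset_closedBall hy)))
    refine this.trans (le_of_eq ?_)
    field_simp
    norm_num
  refine Convex.norm_image_sub_le_of_norm_deriv_le (s := closedBall (0 : ℂ) (R / 4))
    (fun x hx => hdg.differentiableAt (isOpen_ball.mem_nhds ?_)) hlog2 (convex_closedBall _ _)
    (by simpa using hw) (by simpa using hz)
  rw [mem_closedBall_zero_iff] at hx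
  simp; linarith

lemma exists_eq_pow_mul_of_entire {h : ℂ → ℂ} (hd : Differentiable ℂ h) (ρ : ℂ)
    (ho : analyticOrderAt h ρ ≠ ⊤) :
    ∃ g : ℂ → ℂ, Differentiable ℂ g ∧ g ρ ≠ 0 ∧
      ∀ z, h z = (z - ρ) ^ analyticOrderNatAt h ρ * g z := by
  set n := analyticOrderNatAt h ρ with hn
  have hn' : analyticOrderAt h ρ = n := by
    rw [hn, Nat.cast_analyticOrderNatAt ho]
  obtain ⟨g0, hg0, hg0ne, hev⟩ := ((hd.analyticAt ρ).analyticOrderAt_eq_natCast).1 hn'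
  refine ⟨Function.update (fun z => h z / (z - ρ) ^ n) ρ (g0 ρ), ?_, by simpa using hg0ne, ?_⟩
  · intro z
    by_cases hz : z = ρ
    · subst hz
      refine hg0.differentiableAt.congr_of_eventuallyEq ?_
      filter_upwards [hev] with y hy
      by_cases hyz : y = z
      · subst hyz; simp
      · have : (y - z) ^ n ≠ 0 := pow_ne_zero _ (sub_ne_zero.2 hyz)
        simp only [Function.update_of_ne hyz, hy, smul_eq_mul]
        field_simp
    · have h1 : DifferentiableAt ℂ (fun z => h z / (z - ρ) ^ n) z := by
        refine hd.differentiableAt.div (by fun_prop) (pow_ne_zero _ (sub_ne_zero.2 hz))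
      refine h1.congr_of_eventuallyEq ?_
      filter_upwards [isOpen_ne.mem_nhds hz] with y hy
      simp [Function.update_of_ne hy]
  · intro z
    by_cases hz : z = ρ
    · subst hz
      simpa using hev.self_of_nhds
    · have : (z - ρ) ^ n ≠ 0 := pow_ne_zero _ (sub_ne_zero.2 hz)
      simp only [Function.update_of_ne hz]
      field_simp

lemma exists_eq_prod_mul_of_entire {h : ℂ → ℂ} (hd : Differentiable ℂ h)
    (ho : ∀ ρ, analyticOrderAt h ρ ≠ ⊤) (Z : Finset ℂ) :
    ∃ g : ℂ → ℂ, Differentiable ℂ g ∧ (∀ ρ ∈ Z, g ρ ≠ 0) ∧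
      ∀ z, h z = (∏ ρ ∈ Z, (z - ρ) ^ analyticOrderNatAt h ρ) * g z := by
  classical
  induction Z using Finset.induction_on with
  | empty => exact ⟨h, hd, by simp, by simp⟩
  | insert a Z ha ih =>
    obtain ⟨g, hg, hgne, hgh⟩ := ih
    have horder : analyticOrderAt h a = analyticOrderAt g a := by
      have hP : AnalyticAt ℂ (fun z => ∏ ρ ∈ Z, (z - ρ) ^ analyticOrderNatAt h ρ) a := by
        refine Finset.analyticAt_fun_prod _ fun ρ _ => by fun_prop
      have hh : h = (fun z => ∏ ρ ∈ Z, (z - ρ) ^ analyticOrderNatAt h ρ) * g := by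
        ext z; exact hgh z
      conv_lhs => rw [hh]
      rw [analyticOrderAt_mul hP (hg.analyticAt a), hP.analyticOrderAt_eq_zero.2, zero_add]
      refine Finset.prod_ne_zero_iff.2 fun ρ hρ => pow_ne_zero _ (sub_ne_zero.2 ?_)
      rintro rfl
      exact ha hρ
    obtain ⟨k, hk, hka, hkg⟩ := exists_eq_pow_mul_of_entire hg a (horder ▸ ho a)
    refine ⟨k, hk, ?_, fun z => ?_⟩
    · intro ρ hρ
      rcases Finset.mem_insert.1 hρ with rfl | hρ
      · exact hka
      · intro h0
        apply hgne ρ hρ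
        rw [hkg, h0, mul_zero]
    · rw [Finset.prod_insert ha, hgh, hkg]
      simp only [analyticOrderNatAt, horder]
      ring

lemma analyticOrderAt_ne_top_of_entire {h : ℂ → ℂ} (hd : Differentiable ℂ h) {c : ℂ}
    (hc : h c ≠ 0) (ρ : ℂ) : analyticOrderAt h ρ ≠ ⊤ := by
  intro htop
  rw [analyticOrderAt_eq_top] at htop
  have := (Complex.analyticOnNhd_univ_iff_differentiable.2 hd).eqOn_zero_of_preconnected_of_eventuallyEq_zero
    isPreconnected_univ (Set.mem_univ ρ) htop (Set.mem_univ c)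
  exact hc this

lemma finite_zeros_closedBall {h : ℂ → ℂ} (hd : Differentiable ℂ h) {c : ℂ}
    (hc : h c ≠ 0) (R : ℝ) : {ρ : ℂ | h ρ = 0 ∧ ‖ρ‖ ≤ R}.Finite := by
  have hcod := (Complex.analyticOnNhd_univ_iff_differentiable.2 hd).preimage_zero_mem_codiscrete hc
  have hcl : IsClosed (h ⁻¹' {0}) := isClosed_singleton.preimage hd.continuous
  have hdi : IsDiscrete (h ⁻¹' {0}) := by
    simpa using (mem_codiscrete'.mp hcod).2
  have := ((isCompact_closedBall (0 : ℂ) R).inter_right hcl).finite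
    (hdi.mono Set.inter_subset_right)
  refine this.subset ?_
  rintro ρ ⟨h1, h2⟩
  exact ⟨by simpa using h2, h1⟩

lemma tendsto_sum_zeros_logDeriv_sub {h : ℂ → ℂ} (hd : Differentiable ℂ h)
    (hc : h 0 = 1) {L : ℝ → ℝ} (hL : ∀ R, 1 ≤ R → ∀ z : ℂ, ‖z‖ ≤ R → ‖h z‖ ≤ Real.exp (L R))
    (hL0 : Tendsto (fun R => L R / R ^ 2) atTop (𝓝 0)) {z w : ℂ} (hz : h z ≠ 0) (hw : h w ≠ 0)
    (Z : ℕ → Finset ℂ) (hZ : ∀ N ρ, ρ ∈ Z N ↔ h ρ = 0 ∧ ‖ρ‖ ≤ N) :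
    Tendsto (fun N : ℕ => ∑ ρ ∈ Z N,
      (analyticOrderNatAt h ρ : ℂ) * (1 / (z - ρ) - 1 / (w - ρ))) atTop
      (𝓝 (logDeriv h z - logDeriv h w)) := by
  have hc0 : h 0 ≠ 0 := by rw [hc]; exact one_ne_zero
  have ho := analyticOrderAt_ne_top_of_entire hd hc0
  have key : ∀ N : ℕ, 1 ≤ N → 4 * ‖z‖ ≤ N → 4 * ‖w‖ ≤ N →
      ‖∑ ρ ∈ Z N, (analyticOrderNatAt h ρ : ℂ) * (1 / (z - ρ) - 1 / (w - ρ)) -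
        (logDeriv h z - logDeriv h w)‖ ≤
        128 * (L (2 * N) + 1) / (N : ℝ) ^ 2 * ‖z - w‖ := by
    intro N hN hzN hwN
    have hNpos : (0 : ℝ) < N := by exact_mod_cast hN
    have hN1 : (1 : ℝ) ≤ N := by exact_mod_cast hN
    obtain ⟨g, hg, hgne, hgh⟩ := exists_eq_prod_mul_of_entire hd ho (Z N)
    set P : ℂ → ℂ := fun z => ∏ ρ ∈ Z N, (z - ρ) ^ analyticOrderNatAt h ρ with hP
    have hg0 : ∀ x ∈ ball (0 : ℂ) N, g x ≠ 0 := by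
      intro x hx h0
      have : h x = 0 := by rw [hgh, h0, mul_zero]
      exact hgne x ((hZ N x).2 ⟨this, by simpa using (mem_ball_zero_iff.1 hx).le⟩) h0
    have hP0 : h 0 = P 0 * g 0 := hgh 0
    have hP0ne : P 0 ≠ 0 := fun h0 => hc0 (by rw [hP0, h0, zero_mul])
    have hPs : ∀ x : ℂ, ‖x‖ = 2 * N → ‖P 0‖ ≤ ‖P x‖ := by
      intro x hx
      simp only [hP, norm_prod, norm_pow]
      refine Finset.prod_le_prod (fun _ _ => by positivity) fun ρ hρ => ?_
      refine pow_le_pow_left₀ (norm_nonneg _) ?_ _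
      have h1 := ((hZ N ρ).1 hρ).2
      have := norm_sub_norm_le x ρ
      simp only [zero_sub, norm_neg]
      linarith
    have hLnn : 0 ≤ L (2 * N) := by
      have := hL (2 * N) (by linarith) 0 (by simp)
      rw [hc, norm_one] at this
      exact Real.one_le_exp_iff.1 this
    have hgb : ∀ x ∈ closedBall (0 : ℂ) (2 * N), ‖g x‖ ≤ ‖g 0‖ * Real.exp (L (2 * N) + 1) := by
      intro x hx
      refine Complex.norm_le_of_forall_mem_frontier_norm_le (U := ball (0 : ℂ) (2 * N))
        isBounded_ball (hg.diffContOnCl) ?_ ?_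
      · intro y hy
        rw [frontier_ball _ (by positivity), mem_sphere_zero_iff_norm] at hy
        have h1 := hL (2 * N) (by linarith) y hy.le
        rw [hgh y, norm_mul] at h1
        have h2 : ‖P 0‖ * ‖g 0‖ = 1 := by rw [← norm_mul, ← hP0, hc, norm_one]
        have h3 : ‖P 0‖ * ‖g y‖ ≤ Real.exp (L (2 * N)) :=
          (mul_le_mul_of_nonneg_right (hPs y hy) (norm_nonneg _)).trans h1
        have h4 : 0 < ‖P 0‖ := norm_pos_iff.2 hP0ne
        have h5 : ‖g 0‖ = 1 / ‖P 0‖ := by field_simp; linarith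
        rw [h5, Real.exp_add]
        have h6 : 1 ≤ Real.exp 1 := Real.one_le_exp zero_le_one
        have h7 := Real.exp_pos (L (2 * N))
        rw [div_mul_eq_mul_div, one_mul, le_div_iff₀ h4]
        nlinarith
      · rwa [closure_ball _ (by positivity)]
    have hgl := logDeriv_sub_le_of_norm_le (g := g) (R := N) (B := L (2 * N) + 1) hNpos
      (by positivity) hg.differentiableOn hg0
      (fun x hx => hgb x (by
        have := mem_ball_zero_iff.1 hx
        simp; linarith)) (z := z) (w := w) (by linarith) (by linarith)
    have hlog : ∀ x, h x ≠ 0 → logDeriv h x =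
        (∑ ρ ∈ Z N, (analyticOrderNatAt h ρ : ℂ) * (1 / (x - ρ))) + logDeriv g x := by
      intro x hx
      have hfun : h = fun z => P z * g z := funext hgh
      have hPx : P x ≠ 0 := fun h0 => hx (by rw [hgh, show (∏ ρ ∈ Z N, (x - ρ) ^ analyticOrderNatAt h ρ) = P x from rfl, h0, zero_mul])
      have hgx : g x ≠ 0 := fun h0 => hx (by rw [hgh, h0, mul_zero])
      have hne : ∀ ρ ∈ Z N, x - ρ ≠ 0 := by
        intro ρ hρ h0
        rw [sub_eq_zero] at h0
        exact hx (h0 ▸ ((hZ N ρ).1 hρ).1)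
      have e1 : logDeriv h x = logDeriv P x + logDeriv g x := by
        conv_lhs => rw [hfun]
        exact logDeriv_mul x hPx hgx (by
          refine DifferentiableAt.fun_finsetProd fun ρ _ => by fun_prop) hg.differentiableAt
      rw [e1]
      congr 1
      have := logDeriv_prod (s := Z N) (f := fun ρ z => (z - ρ) ^ analyticOrderNatAt h ρ) (x := x)
        (fun ρ hρ => pow_ne_zero _ (hne ρ hρ)) (fun ρ _ => by fun_prop)
      rw [hP, this]
      refine Finset.sum_congr rfl fun ρ _ => ?_
      rw [logDeriv_fun_pow (by fun_prop)]
      simp [logDeriv_apply]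
    have : ∑ ρ ∈ Z N, (analyticOrderNatAt h ρ : ℂ) * (1 / (z - ρ) - 1 / (w - ρ)) -
        (logDeriv h z - logDeriv h w) = -(logDeriv g z - logDeriv g w) := by
      rw [hlog z hz, hlog w hw]
      simp only [mul_sub, Finset.sum_sub_distrib]
      ring
    rw [this, norm_neg]
    exact hgl
  rw [tendsto_iff_norm_sub_tendsto_zero]
  have hlim : Tendsto (fun N : ℕ => 128 * (L (2 * N) + 1) / (N : ℝ) ^ 2 * ‖z - w‖) atTop (𝓝 0) := by
    have t1 : Tendsto (fun N : ℕ => (2 * N : ℝ)) atTop atTop :=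
      tendsto_natCast_atTop_atTop.const_mul_atTop (by norm_num)
    have t2 : Tendsto (fun N : ℕ => L (2 * N) / (2 * N : ℝ) ^ 2) atTop (𝓝 0) := hL0.comp t1
    have t3 : Tendsto (fun N : ℕ => 1 / (N : ℝ) ^ 2) atTop (𝓝 0) := by
      have := (tendsto_natCast_atTop_atTop (R := ℝ))
      have := (tendsto_pow_atTop (α := ℝ) two_ne_zero).comp this
      simpa [Function.comp_def, Pi.inv_def] using this.inv_tendsto_atTop
    have := ((t2.const_mul 512).add (t3.const_mul 128)).mul_const ‖z - w‖
    simp only [mul_zero, add_zero, zero_mul] at this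
    refine this.congr fun N => ?_
    congr 1
    by_cases hN : (N : ℝ) = 0
    · simp [hN]
    · field_simp
      ring
  refine squeeze_zero' (Eventually.of_forall fun _ => norm_nonneg _) ?_ hlim
  have e1 := tendsto_natCast_atTop_atTop.eventually_ge_atTop (4 * ‖z‖)
  have e2 := tendsto_natCast_atTop_atTop.eventually_ge_atTop (4 * ‖w‖)
  filter_upwards [e1, e2, eventually_ge_atTop 1] with N h1 h2 h3
  exact key N h3 h1 h2

end

section

open Filter Complex Metric Topology MeasureTheory

/-- The entire function `1 + s (s + 1) Λ₀(1 + s)`, i.e. twice the Riemann `ξ`-function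
evaluated at `1 + s`. -/
noncomputable def xiShift (s : ℂ) : ℂ := 1 + s * (s + 1) * completedRiemannZeta₀ (1 + s)

lemma differentiable_xiShift : Differentiable ℂ xiShift := by
  have h := differentiable_completedZeta₀
  unfold xiShift
  fun_prop

lemma xiShift_zero : xiShift 0 = 1 := by simp [xiShift]

lemma xiShift_neg_one_sub (s : ℂ) : xiShift (-1 - s) = xiShift s := by
  unfold xiShift
  rw [← completedRiemannZeta₀_one_sub (1 + s)]
  ring_nf

lemma hasDerivAt_xiShift_zero : HasDerivAt xiShift (completedRiemannZeta₀ 1) 0 := by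
  have h1 : HasDerivAt (fun s : ℂ => completedRiemannZeta₀ (1 + s))
      (deriv (fun s : ℂ => completedRiemannZeta₀ (1 + s)) 0) 0 := by
    have h := differentiable_completedZeta₀
    exact DifferentiableAt.hasDerivAt (by fun_prop)
  have h2 : HasDerivAt (fun s : ℂ => s * (s + 1)) 1 0 := by
    have := (hasDerivAt_id (0 : ℂ)).mul ((hasDerivAt_id (0 : ℂ)).add_const 1)
    refine this.congr_deriv ?_
    simp
  have := (h2.mul h1).const_add 1
  refine this.congr_deriv ?_
  simp

lemma xiShift_eq_completedRiemannZeta {s : ℂ} (h0 : s ≠ 0) (h1 : s ≠ -1) :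
    xiShift s = s * (s + 1) * completedRiemannZeta (1 + s) := by
  have h2 : s + 1 ≠ 0 := fun h => h1 (eq_neg_of_add_eq_zero_left h)
  have h3 : 1 + s ≠ 0 := by rwa [add_comm]
  rw [completedRiemannZeta_eq, xiShift]
  have h4 : (1 : ℂ) - (1 + s) = -s := by ring
  rw [h4]
  field_simp
  ring

lemma xiShift_eq_riemannZeta {s : ℂ} (hs : 0 < s.re) :
    xiShift s = s * (s + 1) * (Gammaℝ (1 + s) * riemannZeta (1 + s)) := by
  have h0 : s ≠ 0 := by rintro rfl; simp at hs
  have h1 : s ≠ -1 := by rintro rfl; norm_num at hs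
  have h2 : (1 : ℂ) + s ≠ 0 := by intro h; apply h1; linear_combination h
  have hG : Gammaℝ (1 + s) ≠ 0 := Gammaℝ_ne_zero_of_re_pos (by simp; linarith)
  rw [xiShift_eq_completedRiemannZeta h0 h1, riemannZeta_def_of_ne_zero h2]
  field_simp

lemma xiShift_ne_zero {s : ℂ} (hs : 0 < s.re) : xiShift s ≠ 0 := by
  have h0 : s ≠ 0 := by rintro rfl; simp at hs
  have h1 : s + 1 ≠ 0 := by
    intro h
    have : s.re + 1 = 0 := by simpa using congrArg Complex.re h
    linarith
  rw [xiShift_eq_riemannZeta hs]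
  refine mul_ne_zero (mul_ne_zero h0 h1) (mul_ne_zero
    (Gammaℝ_ne_zero_of_re_pos (by simp; linarith))
    (riemannZeta_ne_zero_of_one_le_re (by simp; linarith)))

lemma re_eq_of_xiShift_eq_zero (hRH : RiemannHypothesis) {ρ : ℂ} (h : xiShift ρ = 0) :
    ρ.re = -1 / 2 := by
  have h0 : ρ ≠ 0 := by rintro rfl; simp [xiShift_zero] at h
  have h1 : ρ ≠ -1 := by
    rintro rfl
    have := xiShift_neg_one_sub 0
    simp [xiShift_zero] at this
    simp [this] at h
  have h2 : ρ + 1 ≠ 0 := fun h => h1 (eq_neg_of_add_eq_zero_left h)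
  have hL : completedRiemannZeta (1 + ρ) = 0 := by
    rw [xiShift_eq_completedRiemannZeta h0 h1] at h
    simpa [h0, h2] using h
  have hz : riemannZeta (1 + ρ) = 0 := by
    rw [riemannZeta_def_of_ne_zero (by rwa [add_comm]), hL, zero_div]
  have := hRH (1 + ρ) hz ?_ ?_
  · simp at this; linarith
  · rintro ⟨n, hn⟩
    have hρ : -1 - ρ = 2 * (n + 1) := by linear_combination -hn
    have := xiShift_ne_zero (s := -1 - ρ) (by rw [hρ]; norm_cast; positivity)
    rw [xiShift_neg_one_sub] at this
    exact this h
  · intro h; apply h0; linear_combination h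

lemma logDeriv_xiShift {s : ℂ} (hs : 0 < s.re) :
    logDeriv xiShift s = 1 / s + 1 / (s + 1) + logDeriv Gammaℝ (1 + s) +
      logDeriv riemannZeta (1 + s) := by
  have h0 : s ≠ 0 := by rintro rfl; simp at hs
  have h1 : s + 1 ≠ 0 := by
    intro h
    have : s.re + 1 = 0 := by simpa using congrArg Complex.re h
    linarith
  have hG0 : Gammaℝ (1 + s) ≠ 0 := Gammaℝ_ne_zero_of_re_pos (by simp; linarith)
  have hZ0 : riemannZeta (1 + s) ≠ 0 := riemannZeta_ne_zero_of_one_le_re (by simp; linarith)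
  have hG : DifferentiableAt ℂ Gammaℝ (1 + s) := by
    have h := (differentiable_Gammaℝ_inv (1 + s)).inv (inv_ne_zero hG0)
    refine h.congr_of_eventuallyEq (Eventually.of_forall fun x => ?_)
    simp
  have hZ : DifferentiableAt ℂ riemannZeta (1 + s) :=
    differentiableAt_riemannZeta (by simpa using h0)
  have hev : xiShift =ᶠ[𝓝 s] fun s => s * (s + 1) * (Gammaℝ (1 + s) * riemannZeta (1 + s)) := by
    filter_upwards [(isOpen_lt continuous_const continuous_re).mem_nhds hs] with x hx
    exact xiShift_eq_riemannZeta hx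
  have hG' : DifferentiableAt ℂ (fun s => Gammaℝ (1 + s)) s :=
    hG.comp s (by fun_prop : DifferentiableAt ℂ (fun s : ℂ => 1 + s) s)
  have hZ' : DifferentiableAt ℂ (fun s => riemannZeta (1 + s)) s :=
    hZ.comp s (by fun_prop : DifferentiableAt ℂ (fun s : ℂ => 1 + s) s)
  have e : logDeriv xiShift s =
      logDeriv (fun s => s * (s + 1) * (Gammaℝ (1 + s) * riemannZeta (1 + s))) s := by
    rw [logDeriv_apply, logDeriv_apply, hev.deriv_eq, hev.self_of_nhds]
  rw [e, logDeriv_mul (f := fun s : ℂ => s * (s + 1))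
    (g := fun s => Gammaℝ (1 + s) * riemannZeta (1 + s)) s (mul_ne_zero h0 h1)
    (mul_ne_zero hG0 hZ0) (by fun_prop) (hG'.mul hZ'),
    logDeriv_mul (f := fun s : ℂ => s) (g := fun s : ℂ => s + 1) s h0 h1 (by fun_prop)
      (by fun_prop),
    logDeriv_mul (f := fun s => Gammaℝ (1 + s)) (g := fun s => riemannZeta (1 + s))
      s hG0 hZ0 hG' hZ']
  simp only [logDeriv_apply, deriv_id'', deriv_add_const', deriv_comp_const_add]
  ring

lemma exists_norm_completedRiemannZeta₀_le (a b : ℝ) :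
    ∃ C : ℝ, ∀ s : ℂ, a ≤ s.re → s.re ≤ b → ‖completedRiemannZeta₀ s‖ ≤ C := by
  set P := HurwitzZeta.hurwitzEvenFEPair 0
  have hconv : ∀ x : ℝ, IntegrableOn (fun t : ℝ => t ^ (x - 1) * ‖P.f_modif t‖) (Set.Ioi 0) := by
    intro x
    have : IntegrableOn _ _ _ := (P.isStrongFEPair_toStrongFEPair.hasMellin (x : ℂ)).1.norm
    refine IntegrableOn.congr_fun this (fun t ht => ?_) measurableSet_Ioi
    have ht : 0 < t := ht
    simp only [norm_smul]
    rw [Complex.norm_cpow_eq_rpow_re_of_pos ht]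
    simp [WeakFEPair.toStrongFEPair]
  refine ⟨(∫ t in Set.Ioi (0 : ℝ), (t ^ (a / 2 - 1) * ‖P.f_modif t‖ +
    t ^ (b / 2 - 1) * ‖P.f_modif t‖)) / 2, fun s hsa hsb => ?_⟩
  have hdef : completedRiemannZeta₀ s = mellin P.f_modif (s / 2) / 2 := rfl
  rw [hdef, norm_div, Complex.norm_ofNat]
  gcongr
  rw [mellin]
  refine (norm_integral_le_integral_norm _).trans ?_
  refine setIntegral_mono_on ?_ ((hconv _).add (hconv _)) measurableSet_Ioi ?_
  · exact (P.isStrongFEPair_toStrongFEPair.hasMellin (s / 2)).1.norm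
  · intro t ht
    have ht : 0 < t := ht
    rw [norm_smul, Complex.norm_cpow_eq_rpow_re_of_pos ht, ← add_mul]
    gcongr
    have hre : (s / 2 - 1).re = s.re / 2 - 1 := by simp
    rw [hre]
    rcases le_total 1 t with h | h
    · have := Real.rpow_le_rpow_of_exponent_le h (show s.re / 2 - 1 ≤ b / 2 - 1 by linarith)
      have := Real.rpow_nonneg ht.le (a / 2 - 1)
      linarith
    · have := Real.rpow_le_rpow_of_exponent_ge ht h (show a / 2 - 1 ≤ s.re / 2 - 1 by linarith)
      have := Real.rpow_nonneg ht.le (b / 2 - 1)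
      linarith

lemma Gamma_le_pow {x : ℝ} {n : ℕ} (hx : 1 ≤ x) (hn : x ≤ n) :
    Real.Gamma x ≤ (n + 1 : ℝ) ^ (n + 1) := by
  have h1 : Real.Gamma x ≤ Real.Gamma (x + 1) := by
    rw [Real.Gamma_add_one (by linarith)]
    have := Real.Gamma_pos_of_pos (show 0 < x by linarith)
    nlinarith
  have h2 : Real.Gamma (x + 1) ≤ Real.Gamma ((n + 1 : ℕ) + 1) := by
    refine Real.Gamma_strictMonoOn_Ici.monotoneOn (by simp; linarith) ?_ ?_
    · simp; linarith
    · push_cast; linarith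
  rw [Real.Gamma_nat_eq_factorial] at h2
  refine (h1.trans h2).trans ?_
  exact_mod_cast Nat.factorial_le_pow (n + 1)

lemma exists_norm_completedRiemannZeta₀_le_of_two_le :
    ∃ C : ℝ, ∀ (n : ℕ) (s : ℂ), 2 ≤ s.re → s.re ≤ n →
      ‖completedRiemannZeta₀ s‖ ≤ C * (n + 1 : ℝ) ^ (n + 1) + 2 := by
  refine ⟨∑' n : ℕ, 1 / (n : ℝ) ^ 2, fun n s hs hn => ?_⟩
  have hs0 : s ≠ 0 := by rintro rfl; norm_num at hs
  have hL : completedRiemannZeta₀ s = Gammaℝ s * riemannZeta s + 1 / s + 1 / (1 - s) := by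
    have hG : Gammaℝ s ≠ 0 := Gammaℝ_ne_zero_of_re_pos (by linarith)
    rw [riemannZeta_def_of_ne_zero hs0, completedRiemannZeta_eq]
    field_simp
    ring
  have hz : ‖riemannZeta s‖ ≤ ∑' n : ℕ, 1 / (n : ℝ) ^ 2 := by
    rw [zeta_eq_tsum_one_div_nat_cpow (by linarith)]
    have hsum : Summable fun n : ℕ => 1 / (n : ℝ) ^ 2 :=
      Real.summable_one_div_nat_pow.2 (by norm_num)
    refine tsum_of_norm_bounded hsum.hasSum fun k => ?_
    rcases Nat.eq_zero_or_pos k with rfl | hk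
    · simp [Complex.zero_cpow hs0]
    · rw [norm_div, norm_one, Complex.norm_natCast_cpow_of_pos hk]
      have hk1 : (1 : ℝ) ≤ k := by exact_mod_cast hk
      have := Real.rpow_le_rpow_of_exponent_le hk1 hs
      rw [Real.rpow_two] at this
      gcongr
  have hGb : ‖Gammaℝ s‖ ≤ (n + 1 : ℝ) ^ (n + 1) := by
    rw [Gammaℝ_def, norm_mul]
    have h1 : ‖(Real.pi : ℂ) ^ (-s / 2)‖ ≤ 1 := by
      rw [Complex.norm_cpow_eq_rpow_re_of_pos Real.pi_pos]
      refine Real.rpow_le_one_of_one_le_of_nonpos (by linarith [Real.pi_gt_three]) ?_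
      simp; linarith
    have h2 : ‖Complex.Gamma (s / 2)‖ ≤ Real.Gamma (s.re / 2) := by
      rw [Complex.Gamma_eq_integral (by simp; linarith), Real.Gamma_eq_integral (by linarith),
        Complex.GammaIntegral]
      refine (norm_integral_le_integral_norm _).trans (le_of_eq ?_)
      refine setIntegral_congr_fun measurableSet_Ioi fun t ht => ?_
      have ht : 0 < t := ht
      simp only [norm_mul]
      rw [Complex.norm_cpow_eq_rpow_re_of_pos ht, Complex.norm_real, Real.norm_eq_abs,
        abs_of_pos (Real.exp_pos _)]
      simp
    have h3 := Gamma_le_pow (x := s.re / 2) (n := n) (by linarith) (by linarith)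
    have := norm_nonneg (Complex.Gamma (s / 2))
    nlinarith [norm_nonneg ((Real.pi : ℂ) ^ (-s / 2))]
  have i1 : ‖1 / s‖ ≤ 1 := by
    rw [norm_div, norm_one]
    have := Complex.re_le_norm s
    rw [div_le_one (by linarith)]; linarith
  have i2 : ‖1 / (1 - s)‖ ≤ 1 := by
    rw [norm_div, norm_one]
    have := Complex.re_le_norm (-(1 - s))
    rw [norm_neg] at this
    simp at this
    rw [div_le_one (by linarith)]; linarith
  rw [hL]
  refine (norm_add₃_le).trans ?_
  rw [norm_mul]
  have hz0 : 0 ≤ ∑' n : ℕ, 1 / (n : ℝ) ^ 2 := (norm_nonneg _).trans hz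
  have : ‖Gammaℝ s‖ * ‖riemannZeta s‖ ≤
      (∑' n : ℕ, 1 / (n : ℝ) ^ 2) * (n + 1 : ℝ) ^ (n + 1) := by
    rw [mul_comm]; gcongr
  linarith

lemma exists_norm_xiShift_le : ∃ K : ℝ, ∀ R, 1 ≤ R → ∀ z : ℂ, ‖z‖ ≤ R →
    ‖xiShift z‖ ≤ Real.exp (K + 2 * R + 5 * R * Real.log (5 * R)) := by
  obtain ⟨C1, hC1⟩ := exists_norm_completedRiemannZeta₀_le (-1) 2
  obtain ⟨C2, hC2⟩ := exists_norm_completedRiemannZeta₀_le_of_two_le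
  set C := |C1| + |C2| + 3 with hC
  have hCpos : 0 < C := by positivity
  refine ⟨Real.log C, fun R hR z hz => ?_⟩
  have hE1 : 1 ≤ Real.exp (5 * R * Real.log (5 * R)) := by
    apply Real.one_le_exp
    have : 0 ≤ Real.log (5 * R) := Real.log_nonneg (by linarith)
    positivity
  have hbig : ∀ s : ℂ, 2 ≤ s.re → ‖s‖ ≤ R + 1 →
      ‖completedRiemannZeta₀ s‖ ≤ (C - 1) * Real.exp (5 * R * Real.log (5 * R)) := by
    intro s hs hsR
    have hn := Nat.le_ceil (R + 1)
    have hn2 := Nat.ceil_lt_add_one (show 0 ≤ R + 1 by linarith)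
    set n := ⌈R + 1⌉₊
    have h1 := hC2 n s hs ((Complex.re_le_norm s).trans (hsR.trans hn))
    have h2 : (n + 1 : ℝ) ^ (n + 1) ≤ Real.exp (5 * R * Real.log (5 * R)) := by
      rw [mul_comm, Real.exp_mul, Real.exp_log (by linarith), ← Real.rpow_natCast]
      push_cast
      calc (n + 1 : ℝ) ^ (n + 1 : ℝ) ≤ (5 * R) ^ (n + 1 : ℝ) := by
            gcongr; linarith
        _ ≤ (5 * R) ^ (5 * R) := by
            apply Real.rpow_le_rpow_of_exponent_le <;> linarith
    have h3 : C2 * (n + 1 : ℝ) ^ (n + 1) ≤ |C2| * Real.exp (5 * R * Real.log (5 * R)) := by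
      refine mul_le_mul (le_abs_self _) h2 (by positivity) (abs_nonneg _)
    rw [hC]
    nlinarith [abs_nonneg C1]
  have hall : ‖completedRiemannZeta₀ (1 + z)‖ ≤
      (C - 1) * Real.exp (5 * R * Real.log (5 * R)) := by
    rcases le_total 2 (1 + z).re with h | h
    · exact hbig _ h ((norm_add_le _ _).trans (by simp; linarith))
    · rcases le_total (-1) (1 + z).re with h' | h'
      · have := hC1 _ h' h
        have h4 := le_abs_self C1
        rw [hC]
        nlinarith [abs_nonneg C1, abs_nonneg C2]
      · rw [← completedRiemannZeta₀_one_sub]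
        apply hbig
        · simp at h' ⊢; linarith
        · simp; linarith
  have hpoly : 1 + R * (R + 1) ≤ Real.exp (2 * R) := by
    have := Real.quadratic_le_exp_of_nonneg (show 0 ≤ 2 * R by linarith)
    nlinarith
  rw [Real.exp_add, Real.exp_add, Real.exp_log hCpos]
  have hz1 : ‖z * (z + 1)‖ ≤ R * (R + 1) := by
    rw [norm_mul]
    have : ‖z + 1‖ ≤ R + 1 := (norm_add_le _ _).trans (by simp; linarith)
    gcongr
  set E := Real.exp (5 * R * Real.log (5 * R))
  have hC1' : 0 ≤ C - 1 := by linarith [abs_nonneg C1, abs_nonneg C2]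
  calc ‖xiShift z‖ ≤ 1 + R * (R + 1) * ((C - 1) * E) := by
        unfold xiShift
        refine (norm_add_le _ _).trans ?_
        rw [norm_one, norm_mul]
        gcongr
    _ ≤ (1 + R * (R + 1)) * (C * E) := by
        have : 0 ≤ R * (R + 1) := by positivity
        have h5 : 2 ≤ C - 1 := by rw [hC]; linarith [abs_nonneg C1, abs_nonneg C2]
        nlinarith [mul_nonneg this (by positivity : 0 ≤ E)]
    _ ≤ Real.exp (2 * R) * (C * E) := by gcongr
    _ = _ := by ring

lemma tendsto_growth (K : ℝ) :
    Tendsto (fun R : ℝ => (K + 2 * R + 5 * R * Real.log (5 * R)) / R ^ 2) atTop (𝓝 0) := by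
  have h1 : Tendsto (fun R : ℝ => R⁻¹) atTop (𝓝 0) := tendsto_inv_atTop_zero
  have h2 : Tendsto (fun R : ℝ => Real.log (5 * R) / (5 * R)) atTop (𝓝 0) := by
    have h := Real.isLittleO_log_id_atTop.tendsto_div_nhds_zero
    exact h.comp (tendsto_id.const_mul_atTop (by norm_num : (0 : ℝ) < 5))
  have h3 := (((h1.mul h1).const_mul K).add (h1.const_mul 2)).add (h2.const_mul 25)
  simp only [mul_zero, add_zero] at h3
  refine h3.congr' ?_
  filter_upwards [eventually_gt_atTop 0] with R hR
  field_simp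
  ring

end

section

open Filter Complex Metric Topology

/-- The set of zeros of `xiShift`. -/
abbrev XiZero : Type := {ρ : ℂ // xiShift ρ = 0}

/-- The multiplicity of a zero of `xiShift`. -/
noncomputable def xiMult (ρ : XiZero) : ℝ := analyticOrderNatAt xiShift ρ.1

lemma xiMult_nonneg (ρ : XiZero) : 0 ≤ xiMult ρ := Nat.cast_nonneg _

lemma finite_xiZero_le (R : ℝ) : {ρ : ℂ | xiShift ρ = 0 ∧ ‖ρ‖ ≤ R}.Finite :=
  finite_zeros_closedBall differentiable_xiShift (c := 0) (by simp [xiShift_zero]) R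

/-- The zeros of `xiShift` of norm at most `N`. -/
noncomputable def xiZerosLe (N : ℕ) : Finset XiZero :=
  ((finite_xiZero_le N).preimage (Subtype.val_injective.injOn (s := _))).toFinset

lemma mem_xiZerosLe {N : ℕ} {ρ : XiZero} : ρ ∈ xiZerosLe N ↔ ‖ρ.1‖ ≤ N := by
  simp [xiZerosLe, ρ.2]

lemma tendsto_xiZerosLe : Tendsto xiZerosLe atTop atTop := by
  refine tendsto_atTop_finset_of_monotone (fun M N h ρ hρ => ?_) fun ρ => ?_
  · rw [mem_xiZerosLe] at *
    exact hρ.trans (by exact_mod_cast h)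
  · obtain ⟨N, hN⟩ := exists_nat_ge ‖ρ.1‖
    exact ⟨N, mem_xiZerosLe.2 hN⟩

instance : Countable XiZero := by
  have : (Set.univ : Set XiZero) ⊆ ⋃ N, (xiZerosLe N : Set XiZero) := fun ρ _ => by
    obtain ⟨N, hN⟩ := exists_nat_ge ‖ρ.1‖
    exact Set.mem_iUnion.2 ⟨N, mem_xiZerosLe.2 hN⟩
  exact Set.countable_univ_iff.1
    ((Set.countable_iUnion fun N => (xiZerosLe N).countable_toSet).mono this)

lemma tendsto_sum_xiZerosLe {z w : ℂ} (hz : xiShift z ≠ 0) (hw : xiShift w ≠ 0) :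
    Tendsto (fun N : ℕ => ∑ ρ ∈ xiZerosLe N,
      (xiMult ρ : ℂ) * (1 / (z - ρ) - 1 / (w - ρ))) atTop
      (𝓝 (logDeriv xiShift z - logDeriv xiShift w)) := by
  obtain ⟨K, hK⟩ := exists_norm_xiShift_le
  have h := tendsto_sum_zeros_logDeriv_sub differentiable_xiShift xiShift_zero hK
    (tendsto_growth K) hz hw (fun N => (finite_xiZero_le N).toFinset) (by simp)
  refine h.congr fun N => ?_
  symm
  refine Finset.sum_bij (fun ρ _ => ρ.1) (fun ρ hρ => ?_) (fun _ _ _ _ => Subtype.ext)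
    (fun ρ hρ => ?_) (fun ρ _ => ?_)
  · simpa [ρ.2] using mem_xiZerosLe.1 hρ
  · have hρ : xiShift ρ = 0 ∧ ‖ρ‖ ≤ N := by simpa using hρ
    exact ⟨⟨ρ, hρ.1⟩, mem_xiZerosLe.2 hρ.2, rfl⟩
  · simp [xiMult]

lemma logDeriv_xiShift_neg_one_sub (s : ℂ) :
    logDeriv xiShift (-1 - s) = - logDeriv xiShift s := by
  have h : deriv xiShift s = - deriv xiShift (-1 - s) := by
    conv_lhs => rw [← funext xiShift_neg_one_sub]
    exact deriv_comp_const_sub (f := xiShift) (-1) s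
  rw [logDeriv_apply, logDeriv_apply, xiShift_neg_one_sub, h]
  ring

lemma logDeriv_xiShift_zero : logDeriv xiShift 0 = completedRiemannZeta₀ 1 := by
  rw [logDeriv_apply, hasDerivAt_xiShift_zero.deriv, xiShift_zero, div_one]

lemma XiZero.re_neg (hRH : RiemannHypothesis) (ρ : XiZero) : (-ρ.1).re = 1 / 2 := by
  have := re_eq_of_xiShift_eq_zero hRH ρ.2
  rw [neg_re, this]; norm_num

lemma hasSum_xiMult_div_normSq (hRH : RiemannHypothesis) :
    HasSum (fun ρ : XiZero => xiMult ρ / ‖-ρ.1‖ ^ 2)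
      (Real.eulerMascheroniConstant - Real.log (4 * Real.pi) + 2) := by
  have h0 : xiShift 0 ≠ 0 := by simp [xiShift_zero]
  have h1 : xiShift (-1 - 0) ≠ 0 := by
    rw [xiShift_neg_one_sub]; exact h0
  have h := tendsto_sum_xiZerosLe h0 h1
  rw [logDeriv_xiShift_neg_one_sub, logDeriv_xiShift_zero] at h
  have e : completedRiemannZeta₀ 1 - -completedRiemannZeta₀ 1 =
      ((Real.eulerMascheroniConstant - Real.log (4 * Real.pi) + 2 : ℝ) : ℂ) := by
    rw [completedRiemannZeta₀_one]
    push_cast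
    rw [Complex.ofReal_log (by positivity)]
    push_cast
    ring
  rw [e] at h
  have hterm : ∀ ρ : XiZero, (xiMult ρ : ℂ) * (1 / (0 - ρ) - 1 / (-1 - 0 - ρ)) =
      ((xiMult ρ / ‖-ρ.1‖ ^ 2 : ℝ) : ℂ) := by
    intro ρ
    have hre := XiZero.re_neg hRH ρ
    set a := -ρ.1 with ha
    have hρ : ρ.1 = -a := by simp [ha]
    have ha0 : a ≠ 0 := by intro h; rw [h] at hre; simp at hre
    have hc : (starRingEnd ℂ) a = 1 - a := by
      apply Complex.ext <;> simp [hre]; norm_num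
    have hc0 : 1 - a ≠ 0 := by
      rw [← hc]; simpa using ha0
    have hn : ((‖a‖ ^ 2 : ℝ) : ℂ) = a * (1 - a) := by
      rw [← hc, Complex.mul_conj, Complex.normSq_eq_norm_sq]
    rw [Complex.ofReal_div, hn, hρ]
    have h3 : (-1 - 0 - -a) ≠ 0 := by
      intro h; apply hc0; linear_combination -h
    have h4 : (0 - -a) ≠ 0 := by simpa using ha0
    have h5 : -1 - 0 - -a = -(1 - a) := by ring
    rw [h5]
    field_simp
    ring
  simp only [hterm, ← Complex.ofReal_sum] at h
  have hreal : Tendsto (fun N => ∑ ρ ∈ xiZerosLe N, xiMult ρ / ‖-ρ.1‖ ^ 2) atTop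
      (𝓝 (Real.eulerMascheroniConstant - Real.log (4 * Real.pi) + 2)) := by
    exact (Complex.continuous_re.tendsto _).comp h
  have hnn : ∀ ρ : XiZero, 0 ≤ xiMult ρ / ‖-ρ.1‖ ^ 2 := fun ρ => by
    have := xiMult_nonneg ρ; positivity
  have hmono : Monotone fun N => ∑ ρ ∈ xiZerosLe N, xiMult ρ / ‖-ρ.1‖ ^ 2 := by
    intro M N hMN
    refine Finset.sum_le_sum_of_subset_of_nonneg (fun ρ hρ => ?_) fun _ _ _ => hnn _
    rw [mem_xiZerosLe] at *
    exact hρ.trans (by exact_mod_cast hMN)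
  have hs : Summable fun ρ : XiZero => xiMult ρ / ‖-ρ.1‖ ^ 2 := by
    refine summable_of_sum_le hnn
      (c := Real.eulerMascheroniConstant - Real.log (4 * Real.pi) + 2) fun u => ?_
    obtain ⟨N, hN⟩ := (tendsto_xiZerosLe.eventually_ge_atTop u).exists
    exact (Finset.sum_le_sum_of_subset_of_nonneg hN fun _ _ _ => hnn _).trans
      (hmono.ge_of_tendsto hreal N)
  have := hs.hasSum.comp tendsto_xiZerosLe
  rw [tendsto_nhds_unique hreal this]
  exact hs.hasSum

lemma hasSum_xiMult_logDeriv (hRH : RiemannHypothesis) {s : ℂ} (hs : 0 < s.re) :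
    HasSum (fun ρ : XiZero => (xiMult ρ : ℂ) * (s / (-ρ.1 * (s + -ρ.1))))
      (logDeriv xiShift 0 - logDeriv xiShift s) := by
  have h0 : xiShift 0 ≠ 0 := by simp [xiShift_zero]
  have h := tendsto_sum_xiZerosLe h0 (xiShift_ne_zero hs)
  have hterm : ∀ ρ : XiZero, (xiMult ρ : ℂ) * (1 / (0 - ρ) - 1 / (s - ρ)) =
      (xiMult ρ : ℂ) * (s / (-ρ.1 * (s + -ρ.1))) := by
    intro ρ
    have hre := XiZero.re_neg hRH ρ
    set a := -ρ.1 with ha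
    have hρ : ρ.1 = -a := by simp [ha]
    have ha0 : a ≠ 0 := by intro h; rw [h] at hre; simp at hre
    have hsa : s + a ≠ 0 := by
      intro h
      have := congrArg Complex.re h
      rw [add_re, hre, zero_re] at this
      linarith
    rw [hρ, zero_sub, neg_neg, sub_neg_eq_add]
    have e : (1 / a - 1 / (s + a)) = s / (a * (s + a)) := by
      field_simp
      ring
    rw [e]
  simp only [hterm] at h
  have hsum : Summable fun ρ : XiZero => (xiMult ρ : ℂ) * (s / (-ρ.1 * (s + -ρ.1))) := by
    refine Summable.of_norm_bounded
      ((hasSum_xiMult_div_normSq hRH).summable.mul_left (‖s‖ * (2 * ‖s‖ + 1))) fun ρ => ?_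
    have hre := XiZero.re_neg hRH ρ
    set a := -ρ.1 with ha
    have ha0 : a ≠ 0 := by intro h; rw [h] at hre; simp at hre
    have hsa : 1 / 2 ≤ ‖s + a‖ := by
      have := Complex.re_le_norm (s + a)
      rw [add_re, hre] at this
      linarith
    have han : ‖a‖ ≤ (2 * ‖s‖ + 1) * ‖s + a‖ := by
      have : ‖a‖ ≤ ‖s + a‖ + ‖s‖ := by
        calc ‖a‖ = ‖(s + a) - s‖ := by ring_nf
          _ ≤ _ := norm_sub_le _ _
      nlinarith [norm_nonneg s]
    have ha1 : 0 < ‖a‖ := norm_pos_iff.2 ha0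
    rw [norm_mul, norm_div, norm_mul, Complex.norm_real, Real.norm_eq_abs,
      abs_of_nonneg (xiMult_nonneg ρ)]
    have key : ‖s‖ / (‖a‖ * ‖s + a‖) ≤ ‖s‖ * (2 * ‖s‖ + 1) / ‖a‖ ^ 2 := by
      rw [div_le_div_iff₀ (by positivity) (by positivity)]
      have := mul_le_mul_of_nonneg_left han (by positivity : 0 ≤ ‖s‖ * ‖a‖)
      nlinarith
    calc xiMult ρ * (‖s‖ / (‖a‖ * ‖s + a‖))
        ≤ xiMult ρ * (‖s‖ * (2 * ‖s‖ + 1) / ‖a‖ ^ 2) :=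
          mul_le_mul_of_nonneg_left key (xiMult_nonneg ρ)
      _ = _ := by ring
  rw [← tendsto_nhds_unique (hsum.hasSum.comp tendsto_xiZerosLe) h]
  exact hsum.hasSum

end

section

lemma harmonic_256_lt : (harmonic 256 : ℝ) < 6.1244 := by
  have : harmonic 256 < 61244 / 10000 := by
    decide +kernel
  have h : ((harmonic 256 : ℚ) : ℝ) < ((61244 / 10000 : ℚ) : ℝ) := by exact_mod_cast this
  refine h.trans_eq ?_
  norm_num

lemma eulerMascheroniConstant_sub_log_four_pi_lt :
    Real.eulerMascheroniConstant - Real.log (4 * Real.pi) + 2 < 0.0499 := by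
  have h1 := Real.eulerMascheroniConstant_lt_eulerMascheroniSeq' 256
  have h2 : Real.eulerMascheroniSeq' 256 < 0.5793 := by
    have hl : Real.log 256 = 8 * Real.log 2 := by
      rw [show (256 : ℝ) = 2 ^ 8 by norm_num, Real.log_pow]; norm_num
    have := Real.log_two_gt_d9
    have := harmonic_256_lt
    rw [Real.eulerMascheroniSeq', if_neg (by norm_num)]
    have e : ((256 : ℕ) : ℝ) = 256 := by norm_num
    rw [e, hl]
    linarith
  have h3 : 2.53 ≤ Real.log (4 * Real.pi) := by
    rw [Real.le_log_iff_exp_le (by positivity)]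
    have e1 : Real.exp 2.53 = Real.exp 1 ^ 2 * Real.exp 0.53 := by
      rw [← Real.exp_nat_mul, ← Real.exp_add]; norm_num
    have e2 : Real.exp 0.53 ≤ 1.69895 := by
      have := Real.exp_bound' (x := 0.53) (n := 6) (by norm_num) (by norm_num) (by norm_num)
      norm_num [Finset.sum_range_succ, Nat.factorial] at this ⊢
      linarith
    have e3 : Real.exp 1 ^ 2 ≤ 2.71829 ^ 2 := by
      have := Real.exp_one_lt_d9
      gcongr
      linarith
    rw [e1]
    calc _ ≤ (2.71829 : ℝ) ^ 2 * 1.69895 := by gcongr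
      _ ≤ 4 * 3.1415 := by norm_num
      _ ≤ _ := by linarith [Real.pi_gt_d4]
  linarith

end

section

open Filter Complex Metric Topology

lemma ne_neg_nat_of_re_pos {z : ℂ} (hz : 0 < z.re) (m : ℕ) : z ≠ -m := by
  rintro rfl
  have : (0 : ℝ) ≤ m := m.cast_nonneg
  simp at hz
  linarith

lemma digamma_ofReal {x : ℝ} (hx : 0 < x) :
    Complex.digamma x = (deriv (Real.log ∘ Real.Gamma) x : ℝ) := by
  have hne : ∀ m : ℕ, x ≠ -m := fun m h => by
    have : (0 : ℝ) ≤ m := m.cast_nonneg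
    linarith
  have h1 := (Complex.differentiableAt_Gamma (x : ℂ)
    (ne_neg_nat_of_re_pos (by simpa using hx))).hasDerivAt.comp_ofReal
  have hG := (Real.differentiableAt_Gamma hne).hasDerivAt
  have h2 := hG.ofReal_comp
  simp only [Complex.Gamma_ofReal] at h1
  have hpos := Real.Gamma_pos_of_pos hx
  have h3 : deriv (Real.log ∘ Real.Gamma) x = deriv Real.Gamma x / Real.Gamma x :=
    (hG.log hpos.ne').deriv
  rw [h3, Complex.digamma, logDeriv_apply, h1.unique h2, Complex.Gamma_ofReal]
  push_cast
  rfl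

lemma digamma_re_monotoneOn : MonotoneOn (deriv (Real.log ∘ Real.Gamma)) (Set.Ioi 0) := by
  refine Real.convexOn_log_Gamma.monotoneOn_deriv fun x hx => ?_
  have hx : 0 < x := hx
  have hne : ∀ m : ℕ, x ≠ -m := fun m h => by
    have : (0 : ℝ) ≤ m := m.cast_nonneg
    linarith
  exact (Real.differentiableAt_Gamma hne).log (Real.Gamma_pos_of_pos hx).ne'

lemma deriv_log_Gamma_add_nat {x : ℝ} (hx : 0 < x) (N : ℕ) :
    deriv (Real.log ∘ Real.Gamma) (x + N) =
      deriv (Real.log ∘ Real.Gamma) x + ∑ n ∈ Finset.range N, 1 / (x + n) := by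
  induction N with
  | zero => simp
  | succ N ih =>
    have h0 : 0 < x + N := by positivity
    have h := Complex.digamma_apply_add_one ((x + N : ℝ) : ℂ)
      (ne_neg_nat_of_re_pos (by simpa using h0))
    have e : ((x + N : ℝ) : ℂ) + 1 = ((x + (N + 1 : ℕ) : ℝ) : ℂ) := by push_cast; ring
    rw [e, digamma_ofReal h0, digamma_ofReal (by positivity)] at h
    have h' : deriv (Real.log ∘ Real.Gamma) (x + (N + 1 : ℕ)) =
        deriv (Real.log ∘ Real.Gamma) (x + N) + (x + N)⁻¹ := by exact_mod_cast h
    rw [h', ih, Finset.sum_range_succ, one_div (x + N)]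
    ring

lemma hasSum_deriv_log_Gamma_sub {x y : ℝ} (hy : 0 < y) (hxy : y ≤ x) :
    HasSum (fun n : ℕ => 1 / (y + n) - 1 / (x + n))
      (deriv (Real.log ∘ Real.Gamma) x - deriv (Real.log ∘ Real.Gamma) y) := by
  have hx : 0 < x := hy.trans_le hxy
  rw [hasSum_iff_tendsto_nat_of_nonneg]
  · set d := deriv (Real.log ∘ Real.Gamma)
    obtain ⟨M, hM⟩ := exists_nat_ge (x - y)
    have hlim : Tendsto (fun N : ℕ => d (x + N) - d (y + N)) atTop (𝓝 0) := by
      have hup : Tendsto (fun N : ℕ => (M : ℝ) / (y + N)) atTop (𝓝 0) :=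
        tendsto_const_nhds.div_atTop
          (tendsto_atTop_add_const_left _ _ tendsto_natCast_atTop_atTop)
      refine squeeze_zero (fun N => ?_) (fun N => ?_) hup
      · rw [sub_nonneg]
        exact digamma_re_monotoneOn (show 0 < y + N by positivity)
          (show 0 < x + N by positivity) (by linarith)
      · have h1 : d (x + N) ≤ d (y + N + M) :=
          digamma_re_monotoneOn (show 0 < x + N by positivity)
            (show 0 < y + N + M by positivity) (by linarith)
        have h3 : d (y + N + M) = _ := deriv_log_Gamma_add_nat (by positivity) M
        rw [h3] at h1
        have h2 : ∑ n ∈ Finset.range M, 1 / (y + N + n) ≤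
            ∑ n ∈ Finset.range M, 1 / (y + N) := by
          refine Finset.sum_le_sum fun n _ => ?_
          have : (0 : ℝ) ≤ n := n.cast_nonneg
          exact one_div_le_one_div_of_le (by positivity) (by linarith)
        rw [Finset.sum_const, Finset.card_range, nsmul_eq_mul, mul_one_div] at h2
        linarith
    have h := (hlim.const_sub (d x - d y))
    rw [sub_zero] at h
    refine h.congr fun N => ?_
    have h4 : d (x + N) = _ := deriv_log_Gamma_add_nat hx N
    have h5 : d (y + N) = _ := deriv_log_Gamma_add_nat hy N
    rw [Finset.sum_sub_distrib, h4, h5]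
    ring
  · intro n
    rw [sub_nonneg]
    exact one_div_le_one_div_of_le (by positivity) (by linarith)

lemma hasSum_digamma_ofReal {s : ℝ} (hs : 0 < s) :
    HasSum (fun n : ℕ => (s : ℂ) / ((2 * n + 3) * (s + (2 * n + 3))))
      ((digamma ((3 + s) / 2) - digamma (3 / 2)) / 2) := by
  have h := ((hasSum_deriv_log_Gamma_sub (x := (3 + s) / 2) (y := 3 / 2) (by norm_num)
    (by linarith)).div_const 2)
  rw [← Complex.hasSum_ofReal] at h
  have e1 := digamma_ofReal (x := (3 + s) / 2) (by linarith)
  have e2 := digamma_ofReal (x := 3 / 2) (by norm_num)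
  push_cast at h e1 e2
  rw [e1, e2]
  refine h.congr_fun fun n => ?_
  have h3 : (2 * n + 3 : ℂ) ≠ 0 := by
    exact_mod_cast (by positivity : (2 * n + 3 : ℝ) ≠ 0)
  have h4 : (s + (2 * n + 3) : ℂ) ≠ 0 := by
    exact_mod_cast (by positivity : (s + (2 * n + 3) : ℝ) ≠ 0)
  have e3 : (3 / 2 + n : ℂ) = (2 * n + 3) / 2 := by ring
  have e4 : ((3 + s) / 2 + n : ℂ) = (s + (2 * n + 3)) / 2 := by ring
  rw [e3, e4]
  field_simp
  ring

lemma norm_trivial_term_le {s : ℂ} (hs : 0 < s.re) (n : ℕ) :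
    ‖s / ((2 * n + 3) * (s + (2 * n + 3)))‖ ≤ ‖s‖ * (1 / (2 * n + 3) ^ 2) := by
  have h1 : ‖(2 * n + 3 : ℂ)‖ = 2 * n + 3 := by
    have : (2 * n + 3 : ℂ) = ((2 * n + 3 : ℝ) : ℂ) := by push_cast; ring
    rw [this, Complex.norm_real, Real.norm_of_nonneg (by positivity)]
  have h2 : (2 * n + 3 : ℝ) ≤ ‖s + (2 * n + 3)‖ := by
    have := Complex.re_le_norm (s + (2 * n + 3))
    simp at this
    linarith
  rw [norm_div, norm_mul, h1, mul_one_div]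
  gcongr
  rw [sq]
  gcongr

lemma summable_one_div_two_mul_add_three_sq :
    Summable fun n : ℕ => 1 / (2 * n + 3 : ℝ) ^ 2 := by
  have h : Summable fun n : ℕ => 1 / ((n + 1 : ℕ) : ℝ) ^ 2 :=
    (summable_nat_add_iff 1).2 (Real.summable_one_div_nat_pow.2 (by norm_num))
  refine Summable.of_nonneg_of_le (fun n => by positivity) (fun n => ?_) h
  push_cast
  gcongr
  · linarith
  · norm_num

lemma hasSum_digamma {s : ℂ} (hs : 0 < s.re) :
    HasSum (fun n : ℕ => s / ((2 * n + 3) * (s + (2 * n + 3))))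
      ((digamma ((3 + s) / 2) - digamma (3 / 2)) / 2) := by
  have hsum : Summable (fun n : ℕ => s / ((2 * n + 3) * (s + (2 * n + 3)))) :=
    Summable.of_norm_bounded (summable_one_div_two_mul_add_three_sq.mul_left ‖s‖)
      (norm_trivial_term_le hs)
  set U : Set ℂ := {z | 0 < z.re} ∩ ball 0 (‖s‖ + 2) with hU
  have hUo : IsOpen U := (isOpen_lt continuous_const continuous_re).inter isOpen_ball
  have hUp : IsPreconnected U :=
    ((convex_halfSpace_re_gt 0).inter (convex_ball _ _)).isPreconnected
  have hF : DifferentiableOn ℂ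
      (fun z : ℂ => ∑' n : ℕ, z / ((2 * n + 3) * (z + (2 * n + 3)))) U := by
    refine differentiableOn_tsum_of_summable_norm
      (u := fun n : ℕ => (‖s‖ + 2) * (1 / (2 * n + 3 : ℝ) ^ 2))
      (summable_one_div_two_mul_add_three_sq.mul_left _) (fun n => ?_) hUo fun n z hz => ?_
    · refine DifferentiableOn.div (by fun_prop) (by fun_prop) fun z hz => ?_
      have hz : 0 < z.re := hz.1
      refine mul_ne_zero ?_ fun h => ?_
      · exact_mod_cast (by positivity : (2 * n + 3 : ℝ) ≠ 0)
      · have := congrArg Complex.re h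
        simp at this
        have : (0 : ℝ) ≤ n := n.cast_nonneg
        linarith
    · refine (norm_trivial_term_le hz.1 n).trans ?_
      have := mem_ball_zero_iff.1 hz.2
      gcongr
  have hG : DifferentiableOn ℂ
      (fun z : ℂ => (digamma ((3 + z) / 2) - digamma (3 / 2)) / 2) U := by
    have hdg : DifferentiableOn ℂ digamma {z | 0 < z.re} := by
      have ho : IsOpen {z : ℂ | 0 < z.re} := isOpen_lt continuous_const continuous_re
      have hd : DifferentiableOn ℂ Complex.Gamma {z | 0 < z.re} := fun z hz =>
        (Complex.differentiableAt_Gamma z (ne_neg_nat_of_re_pos hz)).differentiableWithinAt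
      exact (hd.deriv ho).div hd fun z hz => Complex.Gamma_ne_zero (ne_neg_nat_of_re_pos hz)
    have hc : DifferentiableOn ℂ (fun z : ℂ => digamma ((3 + z) / 2)) U := by
      refine hdg.comp (t := {z : ℂ | 0 < z.re}) (f := fun z => (3 + z) / 2) (by fun_prop)
        fun z hz => ?_
      have hz : 0 < z.re := hz.1
      simp
      linarith
    fun_prop
  have h1U : (1 : ℂ) ∈ U := ⟨by simp, by rw [mem_ball_zero_iff]; simp; linarith [norm_nonneg s]⟩
  have heq := AnalyticOnNhd.eqOn_of_preconnected_of_frequently_eq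
    (hF.analyticOnNhd hUo) (hG.analyticOnNhd hUo) hUp h1U ?_
  · have := heq ⟨hs, by rw [mem_ball_zero_iff]; linarith⟩
    simp only at this
    rw [← this]
    exact hsum.hasSum
  · have ht : Tendsto (fun n : ℕ => ((1 + 1 / (n + 1) : ℝ) : ℂ)) atTop (𝓝[≠] 1) := by
      refine tendsto_nhdsWithin_iff.2 ⟨?_, Eventually.of_forall fun n => ?_⟩
      · have := (tendsto_one_div_add_atTop_nhds_zero_nat (𝕜 := ℝ)).const_add 1
        rw [add_zero] at this
        exact (Complex.continuous_ofReal.tendsto 1).comp this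
      · have : (1 + 1 / (n + 1) : ℝ) ≠ 1 := by
          have : (0 : ℝ) < 1 / (n + 1) := by positivity
          linarith
        exact fun h => this (Complex.ofReal_eq_one.1 h)
    refine ht.frequently (Frequently.of_forall fun n => ?_)
    exact (hasSum_digamma_ofReal (by positivity)).tsum_eq

end

section

open Filter Complex Topology MeasureTheory

lemma hasSum_integral_of_norm_le_exp {ι : Type*} [Countable ι] {F : ι → ℝ → ℂ} {b : ι → ℝ}
    {δ : ℝ} (hδ : 0 < δ) (hF : ∀ i, Continuous (F i)) (hb : Summable b)
    (hle : ∀ i u, 0 < u → ‖F i u‖ ≤ b i * Real.exp (-δ * u)) :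
    IntegrableOn (fun u => ∑' i, F i u) (Set.Ioi 0) ∧
      HasSum (fun i => ∫ u in Set.Ioi 0, F i u) (∫ u in Set.Ioi 0, ∑' i, F i u) := by
  have hexp : IntegrableOn (fun u => Real.exp (-δ * u)) (Set.Ioi 0) :=
    integrableOn_exp_mul_Ioi (by linarith) 0
  have hsum : ∀ u : ℝ, 0 < u → Summable fun i => F i u := fun u hu =>
    Summable.of_norm_bounded (hb.mul_right _) fun i => hle i u hu
  have hae : ∀ᵐ u ∂(volume.restrict (Set.Ioi (0 : ℝ))), u ∈ Set.Ioi (0 : ℝ) :=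
    ae_restrict_mem measurableSet_Ioi
  have hmeas : AEStronglyMeasurable (fun u => ∑' i, F i u) (volume.restrict (Set.Ioi 0)) := by
    refine aestronglyMeasurable_of_tendsto_ae (u := (atTop : Filter (Finset ι)))
      (f := fun S u => ∑ i ∈ S, F i u) (fun S => ?_) ?_
    · exact (continuous_finsetSum S fun i _ => hF i).aestronglyMeasurable
    · filter_upwards [hae] with u hu
      exact (hsum u hu).hasSum
  refine ⟨?_, ?_⟩
  · refine Integrable.mono' (hexp.const_mul (∑' i, b i)) hmeas ?_
    filter_upwards [hae] with u hu
    refine tsum_of_norm_bounded ?_ fun i => hle i u hu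
    exact hb.hasSum.mul_right _
  · refine hasSum_integral_of_dominated_convergence
      (fun i u => b i * Real.exp (-δ * u)) (fun i => (hF i).aestronglyMeasurable)
      (fun i => ?_) ?_ ?_ ?_
    · filter_upwards [hae] with u hu using hle i u hu
    · exact Eventually.of_forall fun u => hb.mul_right _
    · simp_rw [tsum_mul_right]
      exact hexp.const_mul _
    · filter_upwards [hae] with u hu using (hsum u hu).hasSum

lemma norm_ramp_mul_exp_le {s : ℂ} (hs : 0 < s.re) (l u : ℝ) :
    ‖((max (u - l) 0 : ℝ) : ℂ) * cexp (-s * u)‖ ≤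
      2 / s.re * Real.exp (-(s.re / 2) * l) * Real.exp (-(s.re / 2) * u) := by
  rw [norm_mul, Complex.norm_real, Real.norm_of_nonneg (le_max_right _ _), Complex.norm_exp]
  have h1 : (-s * u).re = -(s.re / 2) * u - s.re / 2 * u := by simp; ring
  have h2 : max (u - l) 0 ≤ 2 / s.re * Real.exp (s.re / 2 * (u - l)) := by
    have h3 := Real.add_one_le_exp (s.re / 2 * (u - l))
    have h4 := Real.exp_pos (s.re / 2 * (u - l))
    refine max_le ?_ (by positivity)
    rw [div_mul_eq_mul_div, le_div_iff₀ hs]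
    linarith
  calc _ ≤ 2 / s.re * Real.exp (s.re / 2 * (u - l)) * Real.exp ((-s * u).re) := by gcongr
    _ = _ := by
      rw [h1, mul_assoc, mul_assoc, ← Real.exp_add, ← Real.exp_add]
      ring_nf

lemma continuous_ramp_mul_exp (s : ℂ) (l : ℝ) :
    Continuous fun u : ℝ => ((max (u - l) 0 : ℝ) : ℂ) * cexp (-s * u) := by
  fun_prop

lemma tendsto_exp_neg_mul {s : ℂ} (hs : 0 < s.re) :
    Tendsto (fun u : ℝ => cexp (-s * u)) atTop (𝓝 0) := by
  rw [tendsto_zero_iff_norm_tendsto_zero]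
  simp only [Complex.norm_exp]
  refine Real.tendsto_exp_atBot.comp ?_
  have : (fun u : ℝ => (-s * u).re) = fun u => -s.re * u := by ext; simp
  rw [this]
  exact tendsto_id.const_mul_atTop_of_neg (by linarith)

lemma tendsto_mul_exp_neg_mul {s : ℂ} (hs : 0 < s.re) :
    Tendsto (fun u : ℝ => (u : ℂ) * cexp (-s * u)) atTop (𝓝 0) := by
  rw [tendsto_zero_iff_norm_tendsto_zero]
  have h := Real.tendsto_pow_mul_exp_neg_atTop_nhds_zero 1
  have h2 : Tendsto (fun u => (s.re)⁻¹ * ((s.re * u) ^ 1 * Real.exp (-(s.re * u))))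
      atTop (𝓝 ((s.re)⁻¹ * 0)) :=
    (h.comp (tendsto_id.const_mul_atTop hs)).const_mul _
  rw [mul_zero] at h2
  refine h2.congr' ?_
  filter_upwards [eventually_ge_atTop 0] with u hu
  rw [norm_mul, Complex.norm_exp, Complex.norm_real, Real.norm_of_nonneg hu]
  have : (-s * u).re = -(s.re * u) := by simp
  rw [this]
  field_simp

lemma integral_ramp_mul_exp {s : ℂ} (hs : 0 < s.re) {l : ℝ} (hl : 0 ≤ l) :
    ∫ u in Set.Ioi (0 : ℝ), ((max (u - l) 0 : ℝ) : ℂ) * cexp (-s * u) =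
      cexp (-s * l) / s ^ 2 := by
  have hs0 : s ≠ 0 := by rintro rfl; simp at hs
  have hint : IntegrableOn (fun u : ℝ => ((max (u - l) 0 : ℝ) : ℂ) * cexp (-s * u))
      (Set.Ioi l) := by
    have hexp : IntegrableOn (fun u => Real.exp (-(s.re / 2) * u)) (Set.Ioi l) :=
      integrableOn_exp_mul_Ioi (by linarith) l
    refine Integrable.mono' (hexp.const_mul _)
      (continuous_ramp_mul_exp s l).aestronglyMeasurable
      (Eventually.of_forall fun u => norm_ramp_mul_exp_le hs l u)
  have h1 : ∫ u in Set.Ioi (0 : ℝ), ((max (u - l) 0 : ℝ) : ℂ) * cexp (-s * u) =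
      ∫ u in Set.Ioi l, ((max (u - l) 0 : ℝ) : ℂ) * cexp (-s * u) := by
    refine setIntegral_eq_of_subset_of_forall_sdiff_eq_zero measurableSet_Ioi
      (Set.Ioi_subset_Ioi hl) fun u hu => ?_
    have : u ≤ l := by simpa using hu.2
    rw [max_eq_right (by linarith)]
    simp
  rw [h1]
  have hd : ∀ u ∈ Set.Ioi l, HasDerivAt
      (fun u : ℝ => -((((u : ℂ) - l) / s + 1 / s ^ 2) * cexp (-s * u)))
      (((max (u - l) 0 : ℝ) : ℂ) * cexp (-s * u)) u := by
    intro u hu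
    have hu : l < u := hu
    have e1 : HasDerivAt (fun z : ℂ => -(((z - l) / s + 1 / s ^ 2) * cexp (-s * z)))
        (-((1 / s) * cexp (-s * u) + (((u : ℂ) - l) / s + 1 / s ^ 2) *
          (cexp (-s * u) * (-s * 1)))) (u : ℂ) := by
      have a1 : HasDerivAt (fun z : ℂ => (z - l) / s + 1 / s ^ 2) (1 / s) (u : ℂ) :=
        (((hasDerivAt_id _).sub_const _).div_const s).add_const _
      have a2 : HasDerivAt (fun z : ℂ => cexp (-s * z)) (cexp (-s * u) * (-s * 1)) (u : ℂ) :=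
        ((hasDerivAt_id _).const_mul (-s)).cexp
      exact (a1.mul a2).neg
    convert e1.comp_ofReal using 1
    rw [max_eq_left (by linarith)]
    push_cast
    field_simp
    ring
  have hlim : Tendsto (fun u : ℝ => -((((u : ℂ) - l) / s + 1 / s ^ 2) * cexp (-s * u)))
      atTop (𝓝 0) := by
    have h2 := ((tendsto_mul_exp_neg_mul hs).const_mul (1 / s)).add
      ((tendsto_exp_neg_mul hs).const_mul (1 / s ^ 2 - l / s))
    rw [mul_zero, mul_zero, add_zero] at h2
    have h3 := h2.neg
    rw [neg_zero] at h3
    refine h3.congr fun u => ?_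
    ring
  rw [integral_Ioi_of_hasDerivAt_of_tendsto (by fun_prop) hd hint hlim]
  simp
  ring

lemma integral_ramp_zero {s : ℂ} (hs : 0 < s.re) :
    ∫ u in Set.Ioi (0 : ℝ), (u : ℂ) * cexp (-s * u) = 1 / s ^ 2 := by
  have h := integral_ramp_mul_exp hs le_rfl
  simp only [sub_zero, Complex.ofReal_zero, mul_zero, Complex.exp_zero] at h
  rw [← h]
  refine setIntegral_congr_fun measurableSet_Ioi fun u hu => ?_
  have hu : 0 < u := hu
  simp only [max_eq_left hu.le]

lemma integral_exp_neg_mul_complex {s : ℂ} (hs : 0 < s.re) :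
    ∫ u in Set.Ioi (0 : ℝ), cexp (-s * u) = 1 / s := by
  rw [integral_exp_mul_complex_Ioi (by simpa using hs)]
  simp

lemma integrableOn_mul_exp {s : ℂ} (hs : 0 < s.re) :
    IntegrableOn (fun u : ℝ => (u : ℂ) * cexp (-s * u)) (Set.Ioi 0) := by
  have hexp : IntegrableOn (fun u => Real.exp (-(s.re / 2) * u)) (Set.Ioi 0) :=
      integrableOn_exp_mul_Ioi (by linarith) 0
  refine Integrable.mono' (hexp.const_mul (2 / s.re * Real.exp (-(s.re / 2) * 0)))
      (by fun_prop) ?_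
  filter_upwards [ae_restrict_mem measurableSet_Ioi] with u hu
  have hu : 0 < u := hu
  have := norm_ramp_mul_exp_le hs 0 u
  rwa [sub_zero, max_eq_left hu.le] at this

lemma norm_sq_mul_exp_le {s : ℂ} (hs : 0 < s.re) {u : ℝ} (hu : 0 ≤ u) :
    ‖(u : ℂ) ^ 2 * cexp (-s * u)‖ ≤ 8 / s.re ^ 2 * Real.exp (-(s.re / 2) * u) := by
  rw [norm_mul, norm_pow, Complex.norm_real, Real.norm_of_nonneg hu, Complex.norm_exp]
  have h1 : (-s * u).re = -(s.re / 2) * u - s.re / 2 * u := by simp; ring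
  have h2 : u ^ 2 ≤ 8 / s.re ^ 2 * Real.exp (s.re / 2 * u) := by
    have h3 := Real.quadratic_le_exp_of_nonneg (show 0 ≤ s.re / 2 * u by positivity)
    rw [div_mul_eq_mul_div, le_div_iff₀ (by positivity)]
    nlinarith [mul_nonneg hs.le hu]
  calc _ ≤ 8 / s.re ^ 2 * Real.exp (s.re / 2 * u) * Real.exp ((-s * u).re) := by gcongr
    _ = _ := by
      rw [h1, mul_assoc, ← Real.exp_add]
      ring_nf

lemma integrableOn_sq_mul_exp {s : ℂ} (hs : 0 < s.re) :
    IntegrableOn (fun u : ℝ => (u : ℂ) ^ 2 * cexp (-s * u)) (Set.Ioi 0) := by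
  have hexp : IntegrableOn (fun u => Real.exp (-(s.re / 2) * u)) (Set.Ioi 0) :=
      integrableOn_exp_mul_Ioi (by linarith) 0
  refine Integrable.mono' (hexp.const_mul (8 / s.re ^ 2)) (by fun_prop) ?_
  filter_upwards [ae_restrict_mem measurableSet_Ioi] with u hu
  exact norm_sq_mul_exp_le hs (le_of_lt hu)

lemma tendsto_sq_mul_exp_neg_mul {s : ℂ} (hs : 0 < s.re) :
    Tendsto (fun u : ℝ => (u : ℂ) ^ 2 * cexp (-s * u)) atTop (𝓝 0) := by
  rw [tendsto_zero_iff_norm_tendsto_zero]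
  have h : Tendsto (fun u : ℝ => 8 / s.re ^ 2 * Real.exp (-(s.re / 2) * u)) atTop
      (𝓝 (8 / s.re ^ 2 * 0)) :=
    (Real.tendsto_exp_atBot.comp
      (tendsto_id.const_mul_atTop_of_neg (by linarith : -(s.re / 2) < 0))).const_mul _
  rw [mul_zero] at h
  refine squeeze_zero' (Eventually.of_forall fun _ => norm_nonneg _) ?_ h
  filter_upwards [eventually_ge_atTop 0] with u hu using norm_sq_mul_exp_le hs hu

lemma integral_sq_mul_exp {s : ℂ} (hs : 0 < s.re) :
    ∫ u in Set.Ioi (0 : ℝ), (u : ℂ) ^ 2 * cexp (-s * u) = 2 / s ^ 3 := by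
  have hs0 : s ≠ 0 := by rintro rfl; simp at hs
  have hd : ∀ u ∈ Set.Ioi (0 : ℝ), HasDerivAt
      (fun u : ℝ => -((u : ℂ) ^ 2 / s + 2 * u / s ^ 2 + 2 / s ^ 3) * cexp (-s * u))
      ((u : ℂ) ^ 2 * cexp (-s * u)) u := by
    intro u hu
    have a1 : HasDerivAt (fun z : ℂ => -(z ^ 2 / s + 2 * z / s ^ 2 + 2 / s ^ 3))
        (-(2 * u / s + 2 / s ^ 2)) (u : ℂ) := by
      have b1 := (hasDerivAt_pow 2 (u : ℂ)).div_const s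
      have b2 := ((hasDerivAt_id (u : ℂ)).const_mul 2).div_const (s ^ 2)
      have b3 : HasDerivAt (fun z : ℂ => -(z ^ 2 / s + 2 * z / s ^ 2 + 2 / s ^ 3)) _ (u : ℂ) :=
        ((b1.add b2).add_const (2 / s ^ 3)).neg
      convert b3 using 1
      norm_num
    have a2 : HasDerivAt (fun z : ℂ => cexp (-s * z)) (cexp (-s * u) * (-s * 1)) (u : ℂ) :=
      ((hasDerivAt_id _).const_mul (-s)).cexp
    have a3 : HasDerivAt (fun z : ℂ => -(z ^ 2 / s + 2 * z / s ^ 2 + 2 / s ^ 3) *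
        cexp (-s * z)) _ (u : ℂ) := a1.mul a2
    convert a3.comp_ofReal using 1
    field_simp
    ring
  have hlim : Tendsto (fun u : ℝ => -((u : ℂ) ^ 2 / s + 2 * u / s ^ 2 + 2 / s ^ 3) *
      cexp (-s * u)) atTop (𝓝 0) := by
    have h2 := (((tendsto_sq_mul_exp_neg_mul hs).const_mul (-1 / s)).add
      ((tendsto_mul_exp_neg_mul hs).const_mul (-2 / s ^ 2))).add
      ((tendsto_exp_neg_mul hs).const_mul (-2 / s ^ 3))
    simp only [mul_zero, add_zero] at h2
    refine h2.congr fun u => ?_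
    ring
  rw [integral_Ioi_of_hasDerivAt_of_tendsto (by fun_prop) hd (integrableOn_sq_mul_exp hs) hlim]
  simp

end

section

open Filter Complex Topology MeasureTheory

/-- Indices of the terms in the explicit formula: nontrivial zeros and trivial zeros. -/
abbrev ExIdx : Type := XiZero ⊕ ℕ

/-- The multiplicity of a zero in the explicit formula. -/
noncomputable def exWt : ExIdx → ℝ := Sum.elim xiMult fun _ => 1

/-- The decay exponent of a zero in the explicit formula. -/
noncomputable def exPt : ExIdx → ℂ := Sum.elim (fun ρ => -ρ.1) fun n => 2 * n + 3

lemma exWt_nonneg (i : ExIdx) : 0 ≤ exWt i := by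
  rcases i with ρ | n
  · exact xiMult_nonneg ρ
  · exact zero_le_one

lemma exPt_inr_eq (n : ℕ) : exPt (Sum.inr n) = ((2 * n + 3 : ℝ) : ℂ) := by
  simp [exPt]

lemma half_le_exPt_re (hRH : RiemannHypothesis) (i : ExIdx) : 1 / 2 ≤ (exPt i).re := by
  rcases i with ρ | n
  · exact (XiZero.re_neg hRH ρ).ge
  · rw [exPt_inr_eq, Complex.ofReal_re]
    have : (0 : ℝ) ≤ n := n.cast_nonneg
    linarith

lemma exPt_ne_zero (hRH : RiemannHypothesis) (i : ExIdx) : exPt i ≠ 0 := by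
  intro h
  have := half_le_exPt_re hRH i
  rw [h] at this
  norm_num at this

lemma norm_exPt_inr (n : ℕ) : ‖exPt (Sum.inr n)‖ = 2 * n + 3 := by
  rw [exPt_inr_eq, Complex.norm_real, Real.norm_of_nonneg (by positivity)]

lemma summable_exWt (hRH : RiemannHypothesis) :
    Summable fun i => exWt i / ‖exPt i‖ ^ 2 := by
  have h1 : Summable ((fun i => exWt i / ‖exPt i‖ ^ 2) ∘ Sum.inl) :=
    (hasSum_xiMult_div_normSq hRH).summable
  have h2 : Summable ((fun i => exWt i / ‖exPt i‖ ^ 2) ∘ Sum.inr) := by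
    refine summable_one_div_two_mul_add_three_sq.congr fun n => ?_
    simp only [Function.comp, norm_exPt_inr]
    rfl
  exact (h1.hasSum.sum h2.hasSum).summable

lemma logDeriv_Gammaℝ {z : ℂ} (hz : 0 < z.re) :
    logDeriv Gammaℝ z = -(Real.log Real.pi : ℂ) / 2 + digamma (z / 2) / 2 := by
  have hz2 : 0 < (z / 2).re := by simp; linarith
  have hpi : (Real.pi : ℂ) ≠ 0 := by exact_mod_cast Real.pi_ne_zero
  have hG := (Complex.differentiableAt_Gamma _ (ne_neg_nat_of_re_pos hz2)).hasDerivAt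
  have hG0 := Complex.Gamma_ne_zero (ne_neg_nat_of_re_pos hz2)
  have h1 : HasDerivAt (fun z : ℂ => (Real.pi : ℂ) ^ (-z / 2))
      ((Real.pi : ℂ) ^ (-z / 2) * Complex.log Real.pi * (-1 / 2)) z :=
    (((hasDerivAt_id z).neg).div_const 2).const_cpow (Or.inl hpi)
  have h2 : HasDerivAt (fun z : ℂ => Complex.Gamma (z / 2))
      (deriv Complex.Gamma (z / 2) * (1 / 2)) z :=
    HasDerivAt.comp z hG ((hasDerivAt_id z).div_const 2)
  have h3 : HasDerivAt Gammaℝ _ z :=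
    (h1.mul h2).congr_of_eventuallyEq (Eventually.of_forall fun z => Gammaℝ_def z)
  have hp0 : (Real.pi : ℂ) ^ (-z / 2) ≠ 0 := by
    rw [Complex.cpow_def_of_ne_zero hpi]
    exact Complex.exp_ne_zero _
  rw [logDeriv_apply, h3.deriv, Gammaℝ_def, Complex.digamma, logDeriv_apply,
    Complex.ofReal_log Real.pi_pos.le]
  field_simp

lemma digamma_three_half : digamma (3 / 2) =
    2 - 2 * (Real.log 2 : ℂ) - Real.eulerMascheroniConstant := by
  have h := Complex.digamma_apply_add_one (1 / 2) (ne_neg_nat_of_re_pos (by norm_num))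
  rw [Complex.digamma_one_half] at h
  rw [show (3 / 2 : ℂ) = 1 / 2 + 1 by norm_num, h, Complex.ofReal_log (by norm_num)]
  push_cast
  norm_num
  ring

lemma hasSum_exWt_logDeriv (hRH : RiemannHypothesis) {s : ℂ} (hs : 0 < s.re) :
    HasSum (fun i => (exWt i : ℂ) * (s / (exPt i * (s + exPt i))))
      (-logDeriv riemannZeta (1 + s) - 1 / s + Real.eulerMascheroniConstant) := by
  have h1 := hasSum_xiMult_logDeriv hRH hs
  have h2 := hasSum_digamma hs
  have h3 : HasSum (fun i => (exWt i : ℂ) * (s / (exPt i * (s + exPt i)))) _ :=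
    HasSum.sum (f := fun i => (exWt i : ℂ) * (s / (exPt i * (s + exPt i)))) h1
      (by simpa [Function.comp_def, exWt, exPt] using h2)
  convert h3 using 1
  have h1s : 0 < (1 + s).re := by simp; linarith
  rw [logDeriv_xiShift_zero, logDeriv_xiShift hs, logDeriv_Gammaℝ h1s,
    completedRiemannZeta₀_one, digamma_three_half]
  have hd := Complex.digamma_apply_add_one ((1 + s) / 2)
    (ne_neg_nat_of_re_pos (by simp; linarith))
  rw [show (1 + s) / 2 + 1 = (3 + s) / 2 by ring] at hd
  rw [hd]
  have hl : Complex.log (4 * Real.pi) = 2 * (Real.log 2 : ℂ) + Real.log Real.pi := by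
    have : Real.log (4 * Real.pi) = 2 * Real.log 2 + Real.log Real.pi := by
      rw [Real.log_mul (by norm_num) Real.pi_ne_zero,
        show (4 : ℝ) = 2 ^ 2 by norm_num, Real.log_pow]
      norm_num
    have h4 := Complex.ofReal_log (show 0 ≤ 4 * Real.pi by positivity)
    rw [this] at h4
    push_cast at h4
    rw [← h4]
  have h1s0 : 1 + s ≠ 0 := by intro h; rw [h] at h1s; simp at h1s
  rw [hl, add_comm s 1]
  have e : ((1 + s) / 2)⁻¹ = 2 * (1 / (1 + s)) := by field_simp
  rw [e]
  ring

lemma add_exPt_ne_zero (hRH : RiemannHypothesis) {s : ℂ} (hs : 0 < s.re) (i : ExIdx) :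
    s + exPt i ≠ 0 := by
  intro h
  have h1 := half_le_exPt_re hRH i
  have := congrArg Complex.re h
  rw [add_re, zero_re] at this
  linarith

/-- The sum over zeros in the explicit formula. -/
noncomputable def zeroSum (u : ℝ) : ℂ :=
  ∑' i, (exWt i : ℂ) * ((1 - cexp (-exPt i * u)) / exPt i ^ 2)

lemma norm_zeroSum_term_le (hRH : RiemannHypothesis) {u : ℝ} (hu : 0 ≤ u) (i : ExIdx) :
    ‖(exWt i : ℂ) * ((1 - cexp (-exPt i * u)) / exPt i ^ 2)‖ ≤
      2 * (exWt i / ‖exPt i‖ ^ 2) := by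
  have h1 : ‖1 - cexp (-exPt i * u)‖ ≤ 2 := by
    refine (norm_sub_le _ _).trans ?_
    have : ‖cexp (-exPt i * u)‖ ≤ 1 := by
      rw [Complex.norm_exp, Real.exp_le_one_iff]
      have := half_le_exPt_re hRH i
      simp
      nlinarith
    rw [norm_one]; linarith
  rw [norm_mul, norm_div, norm_pow, Complex.norm_real, Real.norm_of_nonneg (exWt_nonneg i)]
  calc _ ≤ exWt i * (2 / ‖exPt i‖ ^ 2) := by
        have := exWt_nonneg i
        gcongr
    _ = _ := by ring

lemma continuous_zeroSum_max (hRH : RiemannHypothesis) :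
    Continuous fun u : ℝ => zeroSum (max u 0) := by
  unfold zeroSum
  refine continuous_tsum (fun i => ?_) ((summable_exWt hRH).mul_left 2)
    fun i u => norm_zeroSum_term_le hRH (le_max_right u 0) i
  fun_prop

lemma zeroSum_zero : zeroSum 0 = 0 := by simp [zeroSum]

lemma laplace_zeroSum (hRH : RiemannHypothesis) {s : ℂ} (hs : 0 < s.re) :
    IntegrableOn (fun u : ℝ => zeroSum u * cexp (-s * u)) (Set.Ioi 0) ∧
    ∫ u in Set.Ioi (0 : ℝ), zeroSum u * cexp (-s * u) =
      (-logDeriv riemannZeta (1 + s) - 1 / s + Real.eulerMascheroniConstant) / s ^ 2 := by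
  have hs0 : s ≠ 0 := by rintro rfl; simp at hs
  have h := hasSum_integral_of_norm_le_exp
    (F := fun i (u : ℝ) => (exWt i : ℂ) * ((1 - cexp (-exPt i * u)) / exPt i ^ 2) * cexp (-s * u))
    (b := fun i => 2 * (exWt i / ‖exPt i‖ ^ 2)) hs (fun i => by fun_prop)
    ((summable_exWt hRH).mul_left 2) fun i u hu => by
      rw [norm_mul]
      refine mul_le_mul (norm_zeroSum_term_le hRH hu.le i) ?_ (norm_nonneg _) ?_
      · rw [Complex.norm_exp]; simp
      · have := exWt_nonneg i
        positivity
  simp_rw [tsum_mul_right] at h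
  refine ⟨h.1, ?_⟩
  have h2 := h.2
  have hterm : ∀ i, ∫ u in Set.Ioi (0 : ℝ), (exWt i : ℂ) *
      ((1 - cexp (-exPt i * u)) / exPt i ^ 2) * cexp (-s * u) =
      (exWt i : ℂ) * (s / (exPt i * (s + exPt i))) / s ^ 2 := by
    intro i
    have ha := exPt_ne_zero hRH i
    have hsa := add_exPt_ne_zero hRH hs i
    have hsa' : 0 < (s + exPt i).re := by
      have := half_le_exPt_re hRH i
      rw [add_re]; linarith
    have e : ∀ u : ℝ, (exWt i : ℂ) * ((1 - cexp (-exPt i * u)) / exPt i ^ 2) * cexp (-s * u) =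
        (exWt i / exPt i ^ 2 : ℂ) * (cexp (-s * u) - cexp (-(s + exPt i) * u)) := by
      intro u
      rw [show -(s + exPt i) * (u : ℂ) = -exPt i * u + -s * u by ring, Complex.exp_add]
      ring
    simp_rw [e]
    rw [integral_const_mul, integral_sub (integrableOn_exp_mul_complex_Ioi (by simpa using hs) 0)
      (integrableOn_exp_mul_complex_Ioi (by rw [neg_re]; linarith) 0),
      integral_exp_neg_mul_complex hs, integral_exp_neg_mul_complex hsa']
    field_simp
    ring
  simp_rw [hterm] at h2
  exact h2.unique ((hasSum_exWt_logDeriv hRH hs).div_const _)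

end

section

open Filter Complex Topology MeasureTheory ArithmeticFunction
open scoped FourierTransform

/-- The error term `∑_{n ≤ e^v} Λ(n)/n - v + γ`. -/
noncomputable def mangoldtErr (v : ℝ) : ℝ :=
  ∑ n ∈ Finset.Icc 1 ⌊Real.exp v⌋₊, vonMangoldt n / n - v + Real.eulerMascheroniConstant

lemma monotone_sum_Icc_floor_exp {c : ℕ → ℝ} (hc : ∀ n, 0 ≤ c n) :
    Monotone fun v : ℝ => ∑ n ∈ Finset.Icc 1 ⌊Real.exp v⌋₊, c n := fun _ _ h =>
  Finset.sum_le_sum_of_subset_of_nonneg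
    (Finset.Icc_subset_Icc_right (Nat.floor_mono (Real.exp_le_exp.2 h))) fun n _ _ => hc n

lemma vonMangoldt_div_nonneg (n : ℕ) : 0 ≤ vonMangoldt n / (n : ℝ) :=
  div_nonneg vonMangoldt_nonneg n.cast_nonneg

lemma monotone_mangoldtErr_add : Monotone fun v => mangoldtErr v + v := by
  intro v w h
  have := monotone_sum_Icc_floor_exp vonMangoldt_div_nonneg h
  simp only [mangoldtErr] at this ⊢
  linarith

lemma intervalIntegrable_mangoldtErr (a b : ℝ) : IntervalIntegrable mangoldtErr volume a b := by
  have h1 : IntervalIntegrable (fun v => mangoldtErr v + v) volume a b :=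
    monotone_mangoldtErr_add.intervalIntegrable
  have h2 : IntervalIntegrable (fun v : ℝ => v) volume a b := continuous_id.intervalIntegrable a b
  simpa using h1.sub h2

/-- The integrated sum `∑_{n ≤ e^u} Λ(n)/n (u - log n)`. -/
noncomputable def mangoldtRamp (u : ℝ) : ℝ :=
  ∑' n : ℕ, vonMangoldt n / n * max (u - Real.log n) 0

lemma log_le_iff_mem_Icc {n : ℕ} (hn : 1 ≤ n) (v : ℝ) :
    Real.log n ≤ v ↔ n ∈ Finset.Icc 1 ⌊Real.exp v⌋₊ := by
  rw [Finset.mem_Icc, Real.log_le_iff_le_exp (by exact_mod_cast hn),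
    Nat.le_floor_iff (Real.exp_pos v).le]
  exact ⟨fun h => ⟨hn, h⟩, fun h => h.2⟩

lemma mangoldtRamp_eq_sum (u : ℝ) {N : ℕ} (hN : ⌊Real.exp u⌋₊ ≤ N) :
    mangoldtRamp u = ∑ n ∈ Finset.Icc 1 N, vonMangoldt n / n * max (u - Real.log n) 0 := by
  refine tsum_eq_sum fun n hn => ?_
  rcases Nat.eq_zero_or_pos n with rfl | h
  · simp
  · have : ¬ Real.log n ≤ u := by
      rw [log_le_iff_mem_Icc h]
      intro h'
      exact hn (Finset.Icc_subset_Icc_right hN h')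
    rw [max_eq_right (by linarith), mul_zero]

lemma hasDerivWithinAt_ramp (l x : ℝ) :
    HasDerivWithinAt (fun u : ℝ => max (u - l) 0) (if l ≤ x then 1 else 0) (Set.Ioi x) x := by
  split_ifs with h
  · refine (((hasDerivAt_id x).sub_const l).hasDerivWithinAt).congr (fun u hu => ?_) ?_
    · have hu : x < u := hu
      simp only [id]
      exact max_eq_left (by linarith)
    · exact max_eq_left (by simpa using h)
  · push Not at h
    refine ((hasDerivAt_const x (0 : ℝ)).congr_of_eventuallyEq ?_).hasDerivWithinAt
    filter_upwards [gt_mem_nhds h] with u hu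
    exact max_eq_right (by linarith)

lemma integral_mangoldtErr {u : ℝ} (hu : 0 ≤ u) :
    ∫ v in (0 : ℝ)..u, mangoldtErr v =
      mangoldtRamp u - u ^ 2 / 2 + Real.eulerMascheroniConstant * u := by
  set N := ⌊Real.exp u⌋₊
  set f : ℝ → ℝ := fun v => ∑ n ∈ Finset.Icc 1 N, vonMangoldt n / n * max (v - Real.log n) 0
    - v ^ 2 / 2 + Real.eulerMascheroniConstant * v with hf
  have h := intervalIntegral.integral_eq_sub_of_hasDeriv_right (f := f) (f' := mangoldtErr)
    (a := 0) (b := u) (by fun_prop) ?_ (intervalIntegrable_mangoldtErr _ _)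
  · have h0 : f 0 = 0 := by
      simp only [hf]
      rw [Finset.sum_eq_zero fun n hn => ?_]
      · simp
      · have : (1 : ℝ) ≤ n := by exact_mod_cast (Finset.mem_Icc.1 hn).1
        rw [max_eq_right (by linarith [Real.log_nonneg this]), mul_zero]
    rw [h, h0, mangoldtRamp_eq_sum u le_rfl, sub_zero]
  · intro x hx
    rw [min_eq_left hu, max_eq_right hu] at hx
    have h1 : HasDerivWithinAt
        (fun v : ℝ => ∑ n ∈ Finset.Icc 1 N, vonMangoldt n / n * max (v - Real.log n) 0)
        (∑ n ∈ Finset.Icc 1 N, vonMangoldt n / n * if Real.log n ≤ x then 1 else 0)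
        (Set.Ioi x) x :=
      HasDerivWithinAt.fun_sum fun n _ => (hasDerivWithinAt_ramp _ x).const_mul _
    have h2 : HasDerivWithinAt (fun v : ℝ => v ^ 2 / 2) x (Set.Ioi x) x := by
      have := ((hasDerivAt_pow 2 x).div_const 2).hasDerivWithinAt (s := Set.Ioi x)
      simpa using this
    have h3 : HasDerivWithinAt (fun v : ℝ => Real.eulerMascheroniConstant * v)
        (Real.eulerMascheroniConstant * 1) (Set.Ioi x) x :=
      ((hasDerivAt_id x).const_mul _).hasDerivWithinAt
    convert (h1.sub h2).add h3 using 1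
    · rfl
    simp only [mangoldtErr, mul_one]
    congr 2
    simp only [mul_ite, mul_one, mul_zero]
    rw [← Finset.sum_filter]
    refine Finset.sum_congr ?_ fun _ _ => rfl
    ext n
    rw [Finset.mem_filter]
    constructor
    · intro hn
      have h1n := (Finset.mem_Icc.1 hn).1
      refine ⟨Finset.Icc_subset_Icc_right (Nat.floor_mono (Real.exp_le_exp.2 hx.2.le)) hn, ?_⟩
      rwa [log_le_iff_mem_Icc h1n]
    · rintro ⟨hn, hx⟩
      rwa [log_le_iff_mem_Icc (Finset.mem_Icc.1 hn).1] at hx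

lemma continuous_integral_mangoldtErr :
    Continuous fun u : ℝ => ∫ v in (0 : ℝ)..u, mangoldtErr v :=
  intervalIntegral.continuous_primitive (fun a b => intervalIntegrable_mangoldtErr a b) 0

lemma exp_neg_mul_log {n : ℕ} (hn : n ≠ 0) (s : ℂ) :
    cexp (-s * (Real.log n : ℝ)) = 1 / (n : ℂ) ^ s := by
  rw [Complex.cpow_def_of_ne_zero (by exact_mod_cast hn), ← Complex.natCast_log, one_div,
    ← Complex.exp_neg]
  ring_nf

lemma laplace_mangoldtRamp {s : ℂ} (hs : 0 < s.re) :
    IntegrableOn (fun u : ℝ => (mangoldtRamp u : ℂ) * cexp (-s * u)) (Set.Ioi 0) ∧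
    ∫ u in Set.Ioi (0 : ℝ), (mangoldtRamp u : ℂ) * cexp (-s * u) =
      -logDeriv riemannZeta (1 + s) / s ^ 2 := by
  have hb : Summable fun n : ℕ => ‖LSeries.term (fun n => (vonMangoldt n : ℂ)) (1 + s.re / 2) n‖ :=
    (LSeriesSummable_vonMangoldt (s := 1 + s.re / 2) (by simp; linarith)).norm
  have h := hasSum_integral_of_norm_le_exp
    (F := fun (n : ℕ) (u : ℝ) => ((vonMangoldt n / n : ℝ) : ℂ) *
      (((max (u - Real.log n) 0 : ℝ) : ℂ) * cexp (-s * u)))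
    (b := fun n => 2 / s.re * ‖LSeries.term (fun n => (vonMangoldt n : ℂ)) (1 + s.re / 2) n‖)
    (δ := s.re / 2) (by linarith)
    (fun n => by fun_prop) (hb.mul_left _) fun n u _ => ?_
  · have e : ∀ u : ℝ, ∑' n : ℕ, ((vonMangoldt n / n : ℝ) : ℂ) *
      (((max (u - Real.log n) 0 : ℝ) : ℂ) * cexp (-s * u)) =
        (mangoldtRamp u : ℂ) * cexp (-s * u) := by
      intro u
      simp_rw [← mul_assoc]
      rw [tsum_mul_right, mangoldtRamp, Complex.ofReal_tsum]
      congr 2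
      ext n
      push_cast
      rfl
    simp_rw [e] at h
    refine ⟨h.1, ?_⟩
    have h2 := h.2
    have hterm : ∀ n : ℕ, ∫ u in Set.Ioi (0 : ℝ), ((vonMangoldt n / n : ℝ) : ℂ) *
      (((max (u - Real.log n) 0 : ℝ) : ℂ) * cexp (-s * u)) =
        LSeries.term (fun n => (vonMangoldt n : ℂ)) (1 + s) n / s ^ 2 := by
      intro n
      rcases Nat.eq_zero_or_pos n with rfl | hn
      · simp
      · rw [integral_const_mul, integral_ramp_mul_exp hs
          (Real.log_nonneg (by exact_mod_cast hn)), exp_neg_mul_log hn.ne',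
          LSeries.term_of_ne_zero hn.ne', Complex.cpow_add _ _ (by exact_mod_cast hn.ne'),
          Complex.cpow_one]
        push_cast
        field_simp
    simp_rw [hterm] at h2
    have h1s : 1 < (1 + s).re := by simp; linarith
    have h3 := (LSeriesSummable_vonMangoldt h1s).hasSum.div_const (s ^ 2)
    rw [h2.unique h3]
    have h4 := LSeries_vonMangoldt_eq_deriv_riemannZeta_div h1s
    rw [LSeries] at h4
    rw [h4, logDeriv_apply]
    ring
  · have h1 := norm_ramp_mul_exp_le hs (Real.log n) u
    rw [norm_mul, Complex.norm_real, Real.norm_of_nonneg (vonMangoldt_div_nonneg n)]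
    rcases Nat.eq_zero_or_pos n with rfl | hn
    · simp
    have hn0 : (0 : ℝ) < n := by exact_mod_cast hn
    have h2 : ‖LSeries.term (fun n => (vonMangoldt n : ℂ)) (1 + s.re / 2) n‖ =
        vonMangoldt n / n * Real.exp (-(s.re / 2) * Real.log n) := by
      rw [LSeries.term_of_ne_zero hn.ne', norm_div, Complex.norm_natCast_cpow_of_pos hn,
        Complex.norm_real, Real.norm_of_nonneg vonMangoldt_nonneg]
      have : (1 + (s.re : ℂ) / 2).re = 1 + s.re / 2 := by simp
      rw [this, Real.rpow_add hn0, Real.rpow_one, Real.rpow_def_of_pos hn0, neg_mul,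
        Real.exp_neg, div_mul_eq_div_div, ← div_eq_mul_inv, mul_comm (Real.log n)]
    rw [h2]
    calc _ ≤ vonMangoldt n / n * (2 / s.re * Real.exp (-(s.re / 2) * Real.log n) *
          Real.exp (-(s.re / 2) * u)) := by
          have := vonMangoldt_div_nonneg n
          gcongr
      _ = _ := by ring

lemma laplace_integral_mangoldtErr {s : ℂ} (hs : 0 < s.re) :
    IntegrableOn (fun u : ℝ => ((∫ v in (0 : ℝ)..u, mangoldtErr v : ℝ) : ℂ) * cexp (-s * u))
      (Set.Ioi 0) ∧
    ∫ u in Set.Ioi (0 : ℝ), ((∫ v in (0 : ℝ)..u, mangoldtErr v : ℝ) : ℂ) * cexp (-s * u) =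
      (-logDeriv riemannZeta (1 + s) - 1 / s + Real.eulerMascheroniConstant) / s ^ 2 := by
  have hs0 : s ≠ 0 := by rintro rfl; simp at hs
  obtain ⟨h1, h2⟩ := laplace_mangoldtRamp hs
  have hsq := (integrableOn_sq_mul_exp hs).const_mul (1 / 2)
  have hli := (integrableOn_mul_exp hs).const_mul (Real.eulerMascheroniConstant : ℂ)
  have e : Set.EqOn (fun u : ℝ => (mangoldtRamp u : ℂ) * cexp (-s * u) -
      1 / 2 * ((u : ℂ) ^ 2 * cexp (-s * u)) +
      (Real.eulerMascheroniConstant : ℂ) * (u * cexp (-s * u)))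
      (fun u : ℝ => ((∫ v in (0 : ℝ)..u, mangoldtErr v : ℝ) : ℂ) * cexp (-s * u))
      (Set.Ioi 0) := by
    intro u hu
    simp only
    rw [integral_mangoldtErr (le_of_lt hu)]
    push_cast
    ring
  have hA : IntegrableOn (fun u : ℝ => (mangoldtRamp u : ℂ) * cexp (-s * u) -
      1 / 2 * ((u : ℂ) ^ 2 * cexp (-s * u))) (Set.Ioi 0) := h1.sub hsq
  refine ⟨IntegrableOn.congr_fun (hA.add hli) e measurableSet_Ioi, ?_⟩
  rw [← setIntegral_congr_fun measurableSet_Ioi e, integral_add hA hli,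
    integral_sub h1 hsq, h2, integral_const_mul, integral_const_mul, integral_sq_mul_exp hs,
    integral_ramp_zero hs]
  field_simp

/-- A continuous function on `[0, ∞)` vanishing at `0` whose Laplace transform vanishes on the
line `Re s = 1` is zero. -/
lemma eq_zero_of_laplace_eq_zero {g : ℝ → ℂ} (hg : Continuous fun u => g (max u 0))
    (h0 : g 0 = 0)
    (hint : IntegrableOn (fun u : ℝ => g u * cexp (-(1 : ℂ) * u)) (Set.Ioi 0))
    (hL : ∀ s : ℂ, s.re = 1 → ∫ u in Set.Ioi (0 : ℝ), g u * cexp (-s * u) = 0)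
    {u : ℝ} (hu : 0 ≤ u) : g u = 0 := by
  set f : ℝ → ℂ := fun u => g (max u 0) * cexp (-u) with hf
  have hfc : Continuous f := hg.mul (by fun_prop)
  have hsupp : ∀ u, u ∉ Set.Ioi (0 : ℝ) → f u = 0 := by
    intro u hu
    have : u ≤ 0 := by simpa using hu
    simp [hf, max_eq_right this, h0]
  have heq : Set.EqOn (fun u : ℝ => g u * cexp (-(1 : ℂ) * u)) f (Set.Ioi 0) := by
    intro u hu
    simp only [hf, max_eq_left (le_of_lt (Set.mem_Ioi.1 hu)), neg_mul, one_mul]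
  have hfint : Integrable f := by
    rw [← integrableOn_univ]
    exact (hint.congr_fun heq measurableSet_Ioi).of_forall_sdiff_eq_zero MeasurableSet.univ
      fun u hu => hsupp u hu.2
  have hF : 𝓕 f = 0 := by
    ext τ
    rw [Real.fourier_real_eq_integral_exp_smul]
    have h1 := hL (1 + 2 * Real.pi * τ * I) (by simp)
    rw [Pi.zero_apply, ← h1, ← setIntegral_eq_integral_of_forall_compl_eq_zero (s := Set.Ioi 0)]
    · refine setIntegral_congr_fun measurableSet_Ioi fun u hu => ?_
      simp only [hf, max_eq_left (le_of_lt (Set.mem_Ioi.1 hu)), smul_eq_mul]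
      rw [mul_comm, mul_assoc, ← Complex.exp_add]
      congr 2
      push_cast
      ring
    · intro u hu
      rw [hsupp u hu, smul_zero]
  have hinv := hfc.fourierInv_fourier_eq hfint (by rw [hF]; exact integrable_zero _ _ _)
  have hz : f u = 0 := by
    rw [← hinv, hF, Real.fourierInv_eq]
    simp
  simpa [hf, max_eq_left hu] using hz

theorem integral_mangoldtErr_eq_zeroSum (hRH : RiemannHypothesis) {u : ℝ} (hu : 0 ≤ u) :
    ((∫ v in (0 : ℝ)..u, mangoldtErr v : ℝ) : ℂ) = zeroSum u := by
  rw [← sub_eq_zero]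
  refine eq_zero_of_laplace_eq_zero
    (g := fun u => ((∫ v in (0 : ℝ)..u, mangoldtErr v : ℝ) : ℂ) - zeroSum u) ?_ ?_ ?_ ?_ hu
  · have h1 := continuous_integral_mangoldtErr
    have h2 := continuous_zeroSum_max hRH
    exact (Complex.continuous_ofReal.comp (h1.comp (by fun_prop : Continuous fun u : ℝ =>
      max u 0))).sub h2
  · simp [zeroSum_zero]
  · simp_rw [sub_mul]
    exact (laplace_integral_mangoldtErr (s := 1) (by simp)).1.sub
      (laplace_zeroSum hRH (s := 1) (by simp)).1
  · intro s hs
    have hs : 0 < s.re := by rw [hs]; exact one_pos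
    simp_rw [sub_mul]
    rw [integral_sub (laplace_integral_mangoldtErr hs).1 (laplace_zeroSum hRH hs).1,
      (laplace_integral_mangoldtErr hs).2, (laplace_zeroSum hRH hs).2, sub_self]

end

section

open Filter Complex Topology MeasureTheory Asymptotics

/-- The tail `∑ m e^{-a u} / a²` of the integrated explicit formula. -/
noncomputable def zeroTail (u : ℝ) : ℂ :=
  ∑' i, (exWt i : ℂ) * (cexp (-exPt i * u) / exPt i ^ 2)

lemma norm_exWt_mul (z : ℂ) (i : ExIdx) :
    ‖(exWt i : ℂ) * (z / exPt i ^ 2)‖ = ‖z‖ * (exWt i / ‖exPt i‖ ^ 2) := by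
  rw [norm_mul, norm_div, norm_pow, Complex.norm_real, Real.norm_of_nonneg (exWt_nonneg i)]
  ring

lemma norm_exp_exPt_le (hRH : RiemannHypothesis) {u : ℝ} (hu : 0 ≤ u) (i : ExIdx) :
    ‖cexp (-exPt i * u)‖ ≤ Real.exp (-u / 2) := by
  rw [Complex.norm_exp, Real.exp_le_exp, Complex.re_mul_ofReal, neg_re]
  nlinarith [half_le_exPt_re hRH i]

lemma summable_zeroTail (hRH : RiemannHypothesis) {u : ℝ} (hu : 0 ≤ u) :
    Summable fun i => (exWt i : ℂ) * (cexp (-exPt i * u) / exPt i ^ 2) := by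
  refine Summable.of_norm_bounded (summable_exWt hRH) fun i => ?_
  rw [norm_exWt_mul]
  have h := (norm_exp_exPt_le hRH hu i).trans (Real.exp_le_one_iff.2 (by linarith))
  exact mul_le_of_le_one_left (div_nonneg (exWt_nonneg i) (by positivity)) h

lemma zeroSum_sub_zeroSum (hRH : RiemannHypothesis) {u w : ℝ} (hu : 0 ≤ u) (hw : 0 ≤ w) :
    zeroSum w - zeroSum u = zeroTail u - zeroTail w := by
  have hs : ∀ {v : ℝ}, 0 ≤ v →
      Summable fun i => (exWt i : ℂ) * ((1 - cexp (-exPt i * v)) / exPt i ^ 2) := fun hv =>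
    Summable.of_norm_bounded ((summable_exWt hRH).mul_left 2)
      fun i => norm_zeroSum_term_le hRH hv i
  rw [zeroSum, zeroSum, zeroTail, zeroTail, ← (hs hw).tsum_sub (hs hu),
    ← (summable_zeroTail hRH hu).tsum_sub (summable_zeroTail hRH hw)]
  refine tsum_congr fun i => ?_
  ring

lemma integral_mangoldtErr_eq_zeroTail (hRH : RiemannHypothesis) {u w : ℝ} (hu : 0 ≤ u)
    (hw : 0 ≤ w) : ∫ v in u..w, mangoldtErr v = (zeroTail u).re - (zeroTail w).re := by
  rw [← Complex.sub_re, ← zeroSum_sub_zeroSum hRH hu hw, ← integral_mangoldtErr_eq_zeroSum hRH hw,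
    ← integral_mangoldtErr_eq_zeroSum hRH hu, ← Complex.ofReal_sub, Complex.ofReal_re,
    intervalIntegral.integral_interval_sub_left (intervalIntegrable_mangoldtErr _ _)
      (intervalIntegrable_mangoldtErr _ _)]

lemma norm_zeroTail_le (hRH : RiemannHypothesis) {u : ℝ} (hu : 0 ≤ u) :
    ‖zeroTail u‖ ≤ (Real.eulerMascheroniConstant - Real.log (4 * Real.pi) + 2) *
      Real.exp (-u / 2) +
      (∑' n : ℕ, exWt (Sum.inr n) / ‖exPt (Sum.inr n)‖ ^ 2) * Real.exp (-3 * u) := by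
  have hr : Summable fun n : ℕ => exWt (Sum.inr n) / ‖exPt (Sum.inr n)‖ ^ 2 :=
    (summable_exWt hRH).comp_injective Sum.inr_injective
  have h1 : HasSum (fun ρ : XiZero => exWt (Sum.inl ρ) / ‖exPt (Sum.inl ρ)‖ ^ 2 *
      Real.exp (-u / 2)) _ := (hasSum_xiMult_div_normSq hRH).mul_right _
  have h2 := hr.hasSum.mul_right (Real.exp (-3 * u))
  have h3 := HasSum.sum (f := Sum.elim (fun ρ : XiZero => exWt (Sum.inl ρ) /
    ‖exPt (Sum.inl ρ)‖ ^ 2 * Real.exp (-u / 2)) (fun n : ℕ => exWt (Sum.inr n) /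
      ‖exPt (Sum.inr n)‖ ^ 2 * Real.exp (-3 * u))) h1 h2
  refine tsum_of_norm_bounded h3 fun i => ?_
  rw [norm_exWt_mul, mul_comm]
  have h0 : 0 ≤ exWt i / ‖exPt i‖ ^ 2 := div_nonneg (exWt_nonneg i) (by positivity)
  rcases i with ρ | n
  · exact mul_le_mul_of_nonneg_left (norm_exp_exPt_le hRH hu _) h0
  · refine mul_le_mul_of_nonneg_left ?_ h0
    rw [Complex.norm_exp, Real.exp_le_exp, Complex.re_mul_ofReal, neg_re, exPt_inr_eq,
      Complex.ofReal_re]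
    have : (0 : ℝ) ≤ n := n.cast_nonneg
    nlinarith

lemma eventually_abs_zeroTail_re_le (hRH : RiemannHypothesis) :
    ∀ᶠ u : ℝ in atTop, |(zeroTail u).re| ≤ 0.0499 * Real.exp (-u / 2) := by
  set C := ∑' n : ℕ, exWt (Sum.inr n) / ‖exPt (Sum.inr n)‖ ^ 2
  have hlt := eulerMascheroniConstant_sub_log_four_pi_lt
  set κ := Real.eulerMascheroniConstant - Real.log (4 * Real.pi) + 2
  have ht : Tendsto (fun u : ℝ => C * Real.exp (-((5 / 2) * u))) atTop (𝓝 (C * 0)) :=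
    (Real.tendsto_exp_neg_atTop_nhds_zero.comp
      (tendsto_id.const_mul_atTop (by norm_num))).const_mul C
  rw [mul_zero] at ht
  filter_upwards [ht.eventually_le_const (sub_pos.2 hlt), eventually_ge_atTop 0] with u h1 hu
  refine (Complex.abs_re_le_norm _).trans ((norm_zeroTail_le hRH hu).trans ?_)
  have e : Real.exp (-3 * u) = Real.exp (-((5 / 2) * u)) * Real.exp (-u / 2) := by
    rw [← Real.exp_add]; ring_nf
  rw [e]
  nlinarith [Real.exp_pos (-u / 2)]

/-- The modulus of continuity of the integrated explicit formula. -/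
noncomputable def zeroModulus (h : ℝ) : ℝ :=
  ∑' i, min 2 (2 * ‖exPt i‖ * |h|) * (exWt i / ‖exPt i‖ ^ 2)

lemma tendsto_zeroModulus (hRH : RiemannHypothesis) : Tendsto zeroModulus (𝓝 0) (𝓝 0) := by
  have h := tendsto_tsum_of_dominated_convergence (𝓕 := 𝓝 (0 : ℝ))
    (f := fun h i => min 2 (2 * ‖exPt i‖ * |h|) * (exWt i / ‖exPt i‖ ^ 2))
    (g := fun _ : ExIdx => (0 : ℝ)) ((summable_exWt hRH).mul_left 2) (fun i => ?_) ?_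
  · rw [tsum_zero] at h
    exact h
  · have hc : Continuous fun h : ℝ => min 2 (2 * ‖exPt i‖ * |h|) * (exWt i / ‖exPt i‖ ^ 2) := by
      fun_prop
    simpa using hc.tendsto 0
  · refine Eventually.of_forall fun h i => ?_
    have h0 : 0 ≤ exWt i / ‖exPt i‖ ^ 2 := div_nonneg (exWt_nonneg i) (by positivity)
    rw [Real.norm_of_nonneg (mul_nonneg (le_min (by norm_num) (by positivity)) h0)]
    exact mul_le_mul_of_nonneg_right (min_le_left _ _) h0

lemma norm_one_sub_exp_neg_le {z : ℂ} (hz : 0 ≤ z.re) : ‖1 - cexp (-z)‖ ≤ min 2 (2 * ‖z‖) := by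
  have h2 : ‖1 - cexp (-z)‖ ≤ 2 := by
    refine (norm_sub_le _ _).trans ?_
    have : ‖cexp (-z)‖ ≤ 1 := by
      rw [Complex.norm_exp, Real.exp_le_one_iff, neg_re]
      linarith
    rw [norm_one]
    linarith
  refine le_min h2 ?_
  rcases le_total ‖z‖ 1 with h | h
  · have := Complex.norm_exp_sub_one_le (x := -z) (by rwa [norm_neg])
    rwa [norm_sub_rev, norm_neg] at this
  · linarith

lemma abs_integral_mangoldtErr_le (hRH : RiemannHypothesis) {u h : ℝ} (hu : 0 ≤ u) (hh : 0 ≤ h) :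
    |∫ v in u..u + h, mangoldtErr v| ≤ Real.exp (-u / 2) * zeroModulus h := by
  rw [integral_mangoldtErr_eq_zeroTail hRH hu (by linarith), ← Complex.sub_re]
  refine (Complex.abs_re_le_norm _).trans ?_
  rw [zeroTail, zeroTail,
    ← (summable_zeroTail hRH hu).tsum_sub (summable_zeroTail hRH (add_nonneg hu hh)),
    zeroModulus, ← tsum_mul_left]
  have hb : ∀ i, ‖(exWt i : ℂ) * (cexp (-exPt i * u) / exPt i ^ 2) -
      (exWt i : ℂ) * (cexp (-exPt i * (u + h : ℝ)) / exPt i ^ 2)‖ ≤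
      Real.exp (-u / 2) * (min 2 (2 * ‖exPt i‖ * |h|) * (exWt i / ‖exPt i‖ ^ 2)) := by
    intro i
    have e : (exWt i : ℂ) * (cexp (-exPt i * u) / exPt i ^ 2) -
      (exWt i : ℂ) * (cexp (-exPt i * (u + h : ℝ)) / exPt i ^ 2) =
      (exWt i : ℂ) * ((cexp (-exPt i * u) * (1 - cexp (-(exPt i * h)))) / exPt i ^ 2) := by
      push_cast
      rw [mul_add, Complex.exp_add, neg_mul, neg_mul]
      ring
    have h0 : 0 ≤ exWt i / ‖exPt i‖ ^ 2 := div_nonneg (exWt_nonneg i) (by positivity)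
    rw [e, norm_exWt_mul, norm_mul, ← mul_assoc]
    refine mul_le_mul_of_nonneg_right (mul_le_mul (norm_exp_exPt_le hRH hu i) ?_
      (norm_nonneg _) (Real.exp_pos _).le) h0
    have := norm_one_sub_exp_neg_le (z := exPt i * h) (by
      rw [Complex.re_mul_ofReal]
      exact mul_nonneg (by linarith [half_le_exPt_re hRH i]) hh)
    rwa [norm_mul, Complex.norm_real, Real.norm_eq_abs, ← mul_assoc] at this
  have hs : Summable fun i => Real.exp (-u / 2) *
      (min 2 (2 * ‖exPt i‖ * |h|) * (exWt i / ‖exPt i‖ ^ 2)) := by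
    refine Summable.mul_left _ ?_
    refine Summable.of_nonneg_of_le (fun i => ?_) (fun i => ?_) ((summable_exWt hRH).mul_left 2)
    · exact mul_nonneg (le_min (by norm_num) (by positivity))
        (div_nonneg (exWt_nonneg i) (by positivity))
    · exact mul_le_mul_of_nonneg_right (min_le_left _ _)
        (div_nonneg (exWt_nonneg i) (by positivity))
  exact tsum_of_norm_bounded hs.hasSum hb

lemma abs_mangoldtErr_le (hRH : RiemannHypothesis) {u h : ℝ} (hh : 0 < h) (hu : h ≤ u) :
    |mangoldtErr u| ≤ Real.exp (-(u - h) / 2) * zeroModulus h / h + h := by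
  have hm := monotone_mangoldtErr_add
  have hM : 0 ≤ zeroModulus h := tsum_nonneg fun i =>
    mul_nonneg (le_min (by norm_num) (by positivity)) (div_nonneg (exWt_nonneg i) (by positivity))
  have hc : ∀ a b c : ℝ, ∫ _ in a..b, (c : ℝ) = (b - a) * c := fun a b c => by
    rw [intervalIntegral.integral_const, smul_eq_mul]
  have hup : mangoldtErr u ≤ Real.exp (-(u - h) / 2) * zeroModulus h / h + h := by
    have h1 : ∫ _ in u..u + h, (mangoldtErr u - h) ≤ ∫ v in u..u + h, mangoldtErr v :=
      intervalIntegral.integral_mono_on (by linarith) intervalIntegrable_const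
        (intervalIntegrable_mangoldtErr _ _) fun v hv => by
          have := hm hv.1
          simp only at this
          linarith [hv.2]
    rw [hc] at h1
    have h2 := (le_abs_self _).trans (abs_integral_mangoldtErr_le hRH (hh.le.trans hu) hh.le)
    have h3 : Real.exp (-u / 2) * zeroModulus h ≤ Real.exp (-(u - h) / 2) * zeroModulus h :=
      mul_le_mul_of_nonneg_right (Real.exp_le_exp.2 (by linarith)) hM
    rw [← sub_le_iff_le_add, le_div_iff₀ hh]
    linarith
  have hlo : -mangoldtErr u ≤ Real.exp (-(u - h) / 2) * zeroModulus h / h + h := by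
    have h1 : ∫ v in (u - h)..(u - h) + h, mangoldtErr v ≤
        ∫ _ in (u - h)..(u - h) + h, (mangoldtErr u + h) :=
      intervalIntegral.integral_mono_on (by linarith) 
        (intervalIntegrable_mangoldtErr _ _) intervalIntegrable_const fun v hv => by
          have := hm (hv.2.trans_eq (sub_add_cancel u h))
          simp only at this
          linarith [hv.1]
    rw [hc] at h1
    have h2 := (neg_le_abs _).trans
      (abs_integral_mangoldtErr_le hRH (sub_nonneg.2 hu) hh.le)
    rw [← sub_le_iff_le_add, le_div_iff₀ hh]
    linarith
  exact abs_le.2 ⟨by linarith, hup⟩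

lemma tendsto_exp_neg_div_four : Tendsto (fun u : ℝ => Real.exp (-u / 4)) atTop (𝓝 0) := by
  have := Real.tendsto_exp_neg_atTop_nhds_zero.comp
    (tendsto_id.const_mul_atTop (show (0 : ℝ) < 1 / 4 by norm_num))
  refine this.congr fun u => ?_
  simp only [Function.comp, id]
  ring_nf

theorem mangoldtErr_isLittleO (hRH : RiemannHypothesis) :
    mangoldtErr =o[atTop] fun u : ℝ => Real.exp (-u / 4) := by
  rw [isLittleO_iff]
  intro c hc
  have h1 : Tendsto (fun u : ℝ => c / 2 * Real.exp (-u / 4)) atTop (𝓝 0) := by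
    simpa using tendsto_exp_neg_div_four.const_mul (c / 2)
  have h2 := (tendsto_zeroModulus hRH).comp h1
  have hc2 : 0 < c ^ 2 / 4 * Real.exp (-(1 / 2)) := by positivity
  filter_upwards [h1.eventually_le_const one_pos, h2.eventually_le_const hc2,
    eventually_ge_atTop 1] with u h1 h2 hu
  set h := c / 2 * Real.exp (-u / 4) with hh
  have hpos : 0 < h := by positivity
  rw [Real.norm_eq_abs, Real.norm_of_nonneg (Real.exp_pos _).le]
  refine (abs_mangoldtErr_le hRH hpos (h1.trans hu)).trans ?_
  have e1 : Real.exp (-(u - h) / 2) ≤ Real.exp (1 / 2) * Real.exp (-u / 4) ^ 2 := by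
    rw [← Real.exp_nat_mul, ← Real.exp_add, Real.exp_le_exp]
    push_cast
    linarith
  have e2 : Real.exp (-(u - h) / 2) * zeroModulus h ≤ 
      (Real.exp (1 / 2) * Real.exp (-u / 4) ^ 2) * (c ^ 2 / 4 * Real.exp (-(1 / 2))) :=
    mul_le_mul e1 h2 (tsum_nonneg fun i => mul_nonneg (le_min (by norm_num) (by positivity))
      (div_nonneg (exWt_nonneg i) (by positivity))) (by positivity)
  have e3 : (Real.exp (1 / 2) * Real.exp (-u / 4) ^ 2) * (c ^ 2 / 4 * Real.exp (-(1 / 2))) =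
      h * h := by
    rw [hh, Real.exp_neg (1 / 2)]
    field_simp
    norm_num
  have e4 : Real.exp (-(u - h) / 2) * zeroModulus h / h ≤ h := by
    rw [div_le_iff₀ hpos]
    linarith
  linarith

end

section

open Filter Topology MeasureTheory ArithmeticFunction Asymptotics

/-- The weight `log p / (p - 1)` on primes. -/
noncomputable def primeWt (n : ℕ) : ℝ := if n.Prime then Real.log n / ((n : ℝ) - 1) else 0

/-- The summatory function `∑_{p ≤ e^v} log p / (p - 1)`. -/
noncomputable def primeSum (v : ℝ) : ℝ := ∑ n ∈ Finset.Icc 1 ⌊Real.exp v⌋₊, primeWt n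

/-- The error term `∑_{p ≤ e^v} log p / (p - 1) - v + γ`. -/
noncomputable def primeErr (v : ℝ) : ℝ := primeSum v - v + Real.eulerMascheroniConstant

lemma primeWt_nonneg (n : ℕ) : 0 ≤ primeWt n := by
  unfold primeWt
  split_ifs with h
  · have : (1 : ℝ) ≤ n := by exact_mod_cast h.one_lt.le
    exact div_nonneg (Real.log_nonneg this) (by linarith)
  · exact le_rfl

lemma monotone_primeSum : Monotone primeSum := monotone_sum_Icc_floor_exp primeWt_nonneg

lemma primeSum_nonneg (v : ℝ) : 0 ≤ primeSum v := Finset.sum_nonneg fun n _ => primeWt_nonneg n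

lemma intervalIntegrable_primeErr (a b : ℝ) : IntervalIntegrable primeErr volume a b :=
  (monotone_primeSum.intervalIntegrable.sub (continuous_id.intervalIntegrable a b)).add
    intervalIntegrable_const

lemma sum_Ioc_primeWt_mul {f f₁ G : ℝ → ℝ} {u w : ℝ} (huw : u ≤ w)
    (hf : ∀ v ∈ Set.Icc u w, HasDerivAt f (f₁ v) v) (hG : ∀ v ∈ Set.Icc u w, HasDerivAt G (f v) v)
    (hf₁ : ContinuousOn f₁ (Set.Icc u w)) :
    ∑ n ∈ Finset.Ioc ⌊Real.exp u⌋₊ ⌊Real.exp w⌋₊, primeWt n * f (Real.log n) =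
      G w - G u + f w * primeErr w - f u * primeErr u - ∫ v in u..w, f₁ v * primeErr v := by
  set N := ⌊Real.exp w⌋₊
  set M := ⌊Real.exp u⌋₊
  have hMN : M ≤ N := Nat.floor_mono (Real.exp_le_exp.2 huw)
  have hfc : ContinuousOn f (Set.Icc u w) := fun v hv => (hf v hv).continuousAt.continuousWithinAt
  have hGc : ContinuousOn G (Set.Icc u w) := fun v hv => (hG v hv).continuousAt.continuousWithinAt
  set Φ : ℝ → ℝ := fun v => ∑ n ∈ Finset.Icc 1 N, primeWt n * (f (max v (Real.log n)) -
    f (Real.log n)) - f v * (v - Real.eulerMascheroniConstant) + G v with hΦ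
  have hlog : ∀ n ∈ Finset.Icc 1 N, Real.log n ≤ w := fun n hn =>
    (log_le_iff_mem_Icc (Finset.mem_Icc.1 hn).1 w).2 hn
  have hcont : ContinuousOn Φ (Set.Icc u w) := by
    refine ((continuousOn_finsetSum _ fun n hn => ?_).sub (hfc.mul (by fun_prop))).add hGc
    refine continuousOn_const.mul (ContinuousOn.sub ?_ continuousOn_const)
    exact hfc.comp (by fun_prop) fun v hv => ⟨hv.1.trans (le_max_left _ _), max_le hv.2 (hlog n hn)⟩
  have h := intervalIntegral.integral_eq_sub_of_hasDeriv_right (f := Φ)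
    (f' := fun v => f₁ v * primeErr v) (a := u) (b := w) (by rwa [Set.uIcc_of_le huw]) ?_
    ((intervalIntegrable_primeErr u w).continuousOn_mul (by rwa [Set.uIcc_of_le huw]))
  · have hw : Φ w = f w * primeSum w - ∑ n ∈ Finset.Icc 1 N, primeWt n * f (Real.log n) -
        f w * (w - Real.eulerMascheroniConstant) + G w := by
      simp only [hΦ]
      congr 2
      rw [primeSum, Finset.mul_sum, ← Finset.sum_sub_distrib]
      refine Finset.sum_congr rfl fun n hn => ?_
      rw [max_eq_left (hlog n hn)]
      ring
    have hsplit : ∀ g : ℕ → ℝ, ∑ n ∈ Finset.Icc 1 N, g n =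
        ∑ n ∈ Finset.Icc 1 M, g n + ∑ n ∈ Finset.Ioc M N, g n := by
      intro g
      rw [← Finset.sum_union]
      · congr 1
        ext n
        simp only [Finset.mem_union, Finset.mem_Icc, Finset.mem_Ioc]
        omega
      · rw [Finset.disjoint_left]
        intro n
        simp only [Finset.mem_Icc, Finset.mem_Ioc]
        omega
    have hu : Φ u = f u * primeSum u - ∑ n ∈ Finset.Icc 1 M, primeWt n * f (Real.log n) -
        f u * (u - Real.eulerMascheroniConstant) + G u := by
      simp only [hΦ]
      congr 2
      rw [hsplit, primeSum, Finset.mul_sum, ← Finset.sum_sub_distrib]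
      rw [Finset.sum_eq_zero (s := Finset.Ioc M N), add_zero]
      · refine Finset.sum_congr rfl fun n hn => ?_
        rw [max_eq_left ((log_le_iff_mem_Icc (Finset.mem_Icc.1 hn).1 u).2 hn)]
        ring
      · intro n hn
        have hn' := Finset.mem_Ioc.1 hn
        have h1 : ¬ Real.log n ≤ u := by
          rw [log_le_iff_mem_Icc (by omega)]
          intro h
          exact absurd (Finset.mem_Icc.1 h).2 (by omega)
        rw [max_eq_right (by linarith), sub_self, mul_zero]
    rw [h, hw, hu, hsplit, primeErr, primeErr]
    ring
  · intro x hx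
    rw [min_eq_left huw, max_eq_right huw] at hx
    have hx' : x ∈ Set.Icc u w := ⟨hx.1.le, hx.2.le⟩
    have hterm : ∀ l : ℝ, HasDerivWithinAt (fun v => f (max v l) - f l)
        (if l ≤ x then f₁ x else 0) (Set.Ioi x) x := by
      intro l
      split_ifs with h
      · refine ((hf x hx').sub_const (f l)).hasDerivWithinAt.congr (fun v hv => ?_) ?_
        · rw [max_eq_left (h.trans (le_of_lt hv))]
        · rw [max_eq_left h]
      · push Not at h
        refine ((hasDerivAt_const x (0 : ℝ)).congr_of_eventuallyEq ?_).hasDerivWithinAt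
        filter_upwards [gt_mem_nhds h] with v hv
        rw [max_eq_right (le_of_lt hv), sub_self]
    have h1 : HasDerivWithinAt (fun v => ∑ n ∈ Finset.Icc 1 N, primeWt n *
        (f (max v (Real.log n)) - f (Real.log n)))
        (∑ n ∈ Finset.Icc 1 N, primeWt n * if Real.log n ≤ x then f₁ x else 0)
        (Set.Ioi x) x :=
      HasDerivWithinAt.fun_sum fun n _ => (hterm _).const_mul _
    have h2 : HasDerivWithinAt (fun v => f v * (v - Real.eulerMascheroniConstant))
        (f₁ x * (x - Real.eulerMascheroniConstant) + f x * 1) (Set.Ioi x) x :=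
      ((hf x hx').mul ((hasDerivAt_id x).sub_const _)).hasDerivWithinAt
    convert (h1.sub h2).add (hG x hx').hasDerivWithinAt using 1
    · rfl
    have e : ∑ n ∈ Finset.Icc 1 N, (primeWt n * if Real.log n ≤ x then f₁ x else 0) =
        f₁ x * primeSum x := by
      simp only [mul_ite, mul_zero]
      rw [← Finset.sum_filter, primeSum, Finset.mul_sum]
      refine Finset.sum_congr ?_ fun _ _ => mul_comm _ _
      ext n
      rw [Finset.mem_filter]
      constructor
      · rintro ⟨hn, hx⟩
        rwa [log_le_iff_mem_Icc (Finset.mem_Icc.1 hn).1] at hx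
      · intro hn
        have h1n := (Finset.mem_Icc.1 hn).1
        refine ⟨Finset.Icc_subset_Icc_right (Nat.floor_mono (Real.exp_le_exp.2 hx.2.le)) hn, ?_⟩
        rwa [log_le_iff_mem_Icc h1n]
    rw [e, primeErr]
    ring

lemma sum_vonMangoldt_div (N : ℕ) : ∑ n ∈ Finset.Icc 1 N, vonMangoldt n / (n : ℝ) =
    ∑ p ∈ Finset.Icc 1 N with p.Prime, ∑ k ∈ Finset.Icc 1 (p.log N), Real.log p / (p : ℝ) ^ k := by
  calc _ = ∑ m ∈ ((Finset.Icc 1 N).filter Nat.Prime).biUnion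
        fun p => Finset.image (p ^ ·) (Finset.Icc 1 (p.log N)), vonMangoldt m / (m : ℝ) := by
        refine (Finset.sum_subset (fun q hq => ?_) fun x hx => ?_).symm
        · simp only [Finset.mem_biUnion, Finset.mem_filter, Finset.mem_Icc, Finset.mem_image]
            at hq ⊢
          obtain ⟨p, ⟨⟨h1, h2⟩, hp⟩, k, ⟨_, hk⟩, rfl⟩ := hq
          exact ⟨Nat.one_le_pow _ _ h1, Nat.pow_le_of_le_log (by omega) hk⟩
        · simp only [Finset.mem_biUnion, Finset.mem_filter, Finset.mem_Icc, Finset.mem_image,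
            not_exists, not_and, and_imp, div_eq_zero_iff, vonMangoldt_eq_zero_iff]
          intro h
          left
          rw [isPrimePow_nat_iff]
          rintro ⟨p, k, hp, hk, rfl⟩
          simp only [Finset.mem_Icc] at hx
          have hpn : p ≤ N := (Nat.le_of_dvd (by omega) (dvd_pow_self p hk.ne')).trans hx.2
          exact h p hp.one_le hpn hp k hk (Nat.le_log_of_pow_le hp.one_lt hx.2) rfl
    _ = ∑ p ∈ Finset.Icc 1 N with p.Prime,
        ∑ q ∈ Finset.image (fun k => p ^ k) (Finset.Icc 1 (p.log N)), vonMangoldt q / (q : ℝ) := by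
        rw [Finset.sum_biUnion]
        rw [Finset.pairwiseDisjoint_iff]
        grind [Nat.Prime.pow_inj']
    _ = _ := by
        refine Finset.sum_congr rfl fun p hp => ?_
        have hp := (Finset.mem_filter.1 hp).2
        rw [Finset.sum_image fun a _ b _ hab => Nat.pow_right_injective hp.two_le hab]
        refine Finset.sum_congr rfl fun k hk => ?_
        rw [vonMangoldt_apply_pow (by have := (Finset.mem_Icc.1 hk).1; omega),
          vonMangoldt_apply_prime hp, Nat.cast_pow]

lemma sum_Icc_log_div_pow {p : ℝ} (hp : 1 < p) (l : ℝ) (K : ℕ) :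
    ∑ k ∈ Finset.Icc 1 K, l / p ^ k = l / (p - 1) - l / (p - 1) * (p ^ K)⁻¹ := by
  have h1 : p - 1 ≠ 0 := by linarith
  induction K with
  | zero => simp
  | succ K ih =>
    rw [Finset.sum_Icc_succ_top (by omega), ih]
    have : p ≠ 0 := by linarith
    field_simp
    ring

lemma primeErr_sub_mangoldtErr (v : ℝ) : primeErr v - mangoldtErr v =
    ∑ n ∈ Finset.Icc 1 ⌊Real.exp v⌋₊, primeWt n * ((n : ℝ) ^ n.log ⌊Real.exp v⌋₊)⁻¹ := by
  set N := ⌊Real.exp v⌋₊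
  have h : ∑ n ∈ Finset.Icc 1 N, primeWt n - ∑ n ∈ Finset.Icc 1 N, vonMangoldt n / (n : ℝ) =
      ∑ n ∈ Finset.Icc 1 N, primeWt n * ((n : ℝ) ^ n.log N)⁻¹ := by
    rw [sum_vonMangoldt_div, Finset.sum_filter, ← Finset.sum_sub_distrib]
    refine Finset.sum_congr rfl fun n _ => ?_
    unfold primeWt
    split_ifs with hn
    · rw [sum_Icc_log_div_pow (by exact_mod_cast hn.one_lt)]
      ring
    · simp
  rw [← h, primeErr, mangoldtErr, primeSum]
  ring

lemma primeSum_le (v : ℝ) :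
    primeSum v ≤ 2 * (mangoldtErr v + v - Real.eulerMascheroniConstant) := by
  have : primeSum v ≤ 2 * ∑ n ∈ Finset.Icc 1 ⌊Real.exp v⌋₊, vonMangoldt n / (n : ℝ) := by
    rw [primeSum, Finset.mul_sum]
    refine Finset.sum_le_sum fun n _ => ?_
    unfold primeWt
    split_ifs with hn
    · rw [vonMangoldt_apply_prime hn]
      have h2 : (2 : ℝ) ≤ n := by exact_mod_cast hn.two_le
      have hl : 0 ≤ Real.log n := Real.log_nonneg (by linarith)
      rw [mul_div_assoc', div_le_div_iff₀ (by linarith) (by linarith)]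
      nlinarith
    · exact mul_nonneg zero_le_two (vonMangoldt_div_nonneg n)
  rw [mangoldtErr]
  linarith

/-- The main part `∑ log p / (p (p - 1))` over `e^{v/2} < p ≤ e^v` of the prime power tail. -/
noncomputable def primeTail (v : ℝ) : ℝ :=
  ∑ n ∈ Finset.Ioc ⌊Real.exp (v / 2)⌋₊ ⌊Real.exp v⌋₊, primeWt n * Real.exp (-Real.log n)

lemma primeErr_sub_mangoldtErr_bounds {v : ℝ} (hv : 0 ≤ v) :
    primeTail v ≤ primeErr v - mangoldtErr v ∧
    primeErr v - mangoldtErr v ≤ primeTail v + Real.exp (-(2 / 3) * v) * primeSum (v / 2) := by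
  set N := ⌊Real.exp v⌋₊ with hN
  set M := ⌊Real.exp (v / 2)⌋₊ with hM
  have hMN : M ≤ N := Nat.floor_mono (Real.exp_le_exp.2 (by linarith))
  have hsplit : ∀ g : ℕ → ℝ, ∑ n ∈ Finset.Icc 1 N, g n =
        ∑ n ∈ Finset.Icc 1 M, g n + ∑ n ∈ Finset.Ioc M N, g n := by
    intro g
    rw [← Finset.sum_union]
    · congr 1
      ext n
      simp only [Finset.mem_union, Finset.mem_Icc, Finset.mem_Ioc]
      omega
    · rw [Finset.disjoint_left]
      intro n
      simp only [Finset.mem_Icc, Finset.mem_Ioc]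
      omega
  have e1 : ∑ n ∈ Finset.Ioc M N, primeWt n * ((n : ℝ) ^ n.log N)⁻¹ = primeTail v := by
    refine Finset.sum_congr rfl fun n hn => ?_
    unfold primeWt
    split_ifs with hp
    · have hn' := Finset.mem_Ioc.1 hn
      have hn0 : (0 : ℝ) < n := by exact_mod_cast hp.pos
      have h1 : Real.exp (v / 2) < n := (Nat.floor_lt (Real.exp_pos _).le).1 hn'.1
      have h2 : N < n ^ 2 := by
        rw [hN, Nat.floor_lt (Real.exp_pos _).le]
        have : Real.exp v = Real.exp (v / 2) ^ 2 := by
          rw [← Real.exp_nat_mul]; push_cast; ring_nf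
        rw [this]
        push_cast
        exact pow_lt_pow_left₀ h1 (Real.exp_pos _).le two_ne_zero
      have h3 : n.log N = 1 := by
        rw [Nat.log_eq_iff (Or.inl one_ne_zero)]
        exact ⟨by simpa using hn'.2, h2⟩
      rw [h3, pow_one, Real.exp_neg, Real.exp_log hn0]
    · simp
  have e2 : ∑ n ∈ Finset.Icc 1 M, primeWt n * ((n : ℝ) ^ n.log N)⁻¹ ≤
      Real.exp (-(2 / 3) * v) * primeSum (v / 2) := by
    rw [primeSum, Finset.mul_sum]
    refine Finset.sum_le_sum fun n hn => ?_
    rw [mul_comm]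
    by_cases hp : n.Prime
    swap
    · simp [primeWt, hp]
    refine mul_le_mul_of_nonneg_right ?_ (primeWt_nonneg n)
    have hn0 : (0 : ℝ) < n := by exact_mod_cast hp.pos
    have hn1 : (1 : ℝ) ≤ n := by exact_mod_cast hp.one_lt.le
    have h1 : Real.exp v < (n : ℝ) ^ (n.log N + 1) := by
      have := Nat.lt_pow_succ_log_self hp.one_lt N
      rw [hN, Nat.floor_lt (Real.exp_pos _).le] at this
      exact_mod_cast this
    have h2 : 2 ≤ n.log N := by
      refine Nat.le_log_of_pow_le hp.one_lt ?_
      rw [hN, Nat.le_floor_iff (Real.exp_pos _).le]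
      have h3 : (n : ℝ) ≤ Real.exp (v / 2) :=
        (Nat.le_floor_iff (Real.exp_pos _).le).1 (Finset.mem_Icc.1 hn).2
      have : Real.exp v = Real.exp (v / 2) ^ 2 := by
        rw [← Real.exp_nat_mul]; push_cast; ring_nf
      rw [this]
      push_cast
      exact pow_le_pow_left₀ hn0.le h3 2
    have h4 : Real.exp ((2 / 3) * v) ≤ (n : ℝ) ^ n.log N := by
      refine le_of_pow_le_pow_left₀ (n := 3) (by norm_num) (by positivity) ?_
      calc Real.exp ((2 / 3) * v) ^ 3 = Real.exp v ^ 2 := by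
            rw [← Real.exp_nat_mul, ← Real.exp_nat_mul]; push_cast; ring_nf
        _ ≤ ((n : ℝ) ^ (n.log N + 1)) ^ 2 := pow_le_pow_left₀ (Real.exp_pos _).le h1.le 2
        _ = (n : ℝ) ^ (2 * (n.log N + 1)) := by rw [← pow_mul]; ring_nf
        _ ≤ (n : ℝ) ^ (3 * n.log N) := pow_le_pow_right₀ hn1 (by omega)
        _ = _ := by rw [← pow_mul]; ring_nf
    rw [neg_mul, Real.exp_neg]
    exact inv_anti₀ (Real.exp_pos _) h4
  have e3 : 0 ≤ ∑ n ∈ Finset.Icc 1 M, primeWt n * ((n : ℝ) ^ n.log N)⁻¹ :=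
    Finset.sum_nonneg fun n _ => mul_nonneg (primeWt_nonneg n) (by positivity)
  rw [primeErr_sub_mangoldtErr, hsplit, e1]
  exact ⟨by linarith, by linarith⟩

lemma primeTail_nonneg (v : ℝ) : 0 ≤ primeTail v :=
  Finset.sum_nonneg fun n _ => mul_nonneg (primeWt_nonneg n) (Real.exp_pos _).le

lemma primeTail_le (v : ℝ) : primeTail v ≤ Real.exp (-v / 2) * primeSum v := by
  rw [primeTail, primeSum, Finset.mul_sum]
  refine (Finset.sum_le_sum (g := fun n => Real.exp (-v / 2) * primeWt n) fun n hn => ?_).trans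
    (Finset.sum_le_sum_of_subset_of_nonneg (fun n hn => ?_) fun n _ _ =>
      mul_nonneg (Real.exp_pos _).le (primeWt_nonneg n))
  · rw [mul_comm]
    refine mul_le_mul_of_nonneg_right ?_ (primeWt_nonneg n)
    have h1 := (Nat.floor_lt (Real.exp_pos _).le).1 (Finset.mem_Ioc.1 hn).1
    have h2 : v / 2 ≤ Real.log n := by
      rw [Real.le_log_iff_exp_le ((Real.exp_pos _).trans h1)]
      exact h1.le
    exact Real.exp_le_exp.2 (by linarith)
  · have := Finset.mem_Ioc.1 hn
    exact Finset.mem_Icc.2 ⟨by omega, this.2⟩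

end

section

open Filter Topology MeasureTheory Asymptotics

lemma tendsto_affine_mul_exp_neg {c : ℝ} (hc : 0 < c) (a b : ℝ) :
    Tendsto (fun v : ℝ => (a * v + b) * Real.exp (-c * v)) atTop (𝓝 0) := by
  have h1 : Tendsto (fun v : ℝ => v * Real.exp (-c * v)) atTop (𝓝 0) := by
    simpa using tendsto_rpow_mul_exp_neg_mul_atTop_nhds_zero 1 c hc
  have h2 : Tendsto (fun v : ℝ => Real.exp (-c * v)) atTop (𝓝 0) := by
    simpa using tendsto_rpow_mul_exp_neg_mul_atTop_nhds_zero 0 c hc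
  have h := (h1.const_mul a).add (h2.const_mul b)
  simp only [mul_zero, add_zero] at h
  exact h.congr fun v => by ring

lemma tendsto_of_isLittleO_exp {f : ℝ → ℝ} (hf : f =o[atTop] fun u : ℝ => Real.exp (-u / 4)) :
    Tendsto f atTop (𝓝 0) :=
  hf.isBigO.trans_tendsto tendsto_exp_neg_div_four

lemma eventually_primeSum_le (hRH : RiemannHypothesis) :
    ∀ᶠ v : ℝ in atTop, primeSum v ≤ 2 * (v + 1) := by
  have h := (tendsto_of_isLittleO_exp (mangoldtErr_isLittleO hRH)).eventually_le_const one_pos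
  filter_upwards [h] with v hv
  have := primeSum_le v
  have := Real.one_half_lt_eulerMascheroniConstant
  linarith

lemma primeErr_isLittleO (hRH : RiemannHypothesis) :
    primeErr =o[atTop] fun u : ℝ => Real.exp (-u / 4) := by
  have h1 : (fun v => primeErr v - mangoldtErr v) =O[atTop]
      fun v : ℝ => (4 * v + 4) * Real.exp (-v / 2) := by
    refine IsBigO.of_bound 1 ?_
    filter_upwards [eventually_primeSum_le hRH, eventually_ge_atTop 0] with v hS hv
    obtain ⟨hlo, hup⟩ := primeErr_sub_mangoldtErr_bounds hv
    have h2 := primeTail_le v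
    have h3 := primeTail_nonneg v
    have h4 : Real.exp (-(2 / 3) * v) * primeSum (v / 2) ≤ Real.exp (-v / 2) * primeSum v :=
      mul_le_mul (Real.exp_le_exp.2 (by linarith)) (monotone_primeSum (by linarith))
        (primeSum_nonneg _) (Real.exp_pos _).le
    have h5 : Real.exp (-v / 2) * primeSum v ≤ Real.exp (-v / 2) * (2 * (v + 1)) :=
      mul_le_mul_of_nonneg_left hS (Real.exp_pos _).le
    rw [Real.norm_of_nonneg (by linarith), Real.norm_of_nonneg (by positivity)]
    linarith
  have h2 : (fun v : ℝ => (4 * v + 4) * Real.exp (-v / 2)) =o[atTop]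
      fun u : ℝ => Real.exp (-u / 4) := by
    rw [isLittleO_iff_tendsto' (Eventually.of_forall fun u h => absurd h (Real.exp_pos _).ne')]
    refine (tendsto_affine_mul_exp_neg (show (0 : ℝ) < 1 / 4 by norm_num) 4 4).congr fun v => ?_
    rw [mul_div_assoc, ← Real.exp_sub]
    ring_nf
  have h3 := (h1.trans_isLittleO h2).add (mangoldtErr_isLittleO hRH)
  simpa using h3

lemma abs_integral_exp_neg_mul_le {E : ℝ → ℝ} {u w ε : ℝ} (huw : u ≤ w)
    (h : ∀ v ∈ Set.Icc u w, |E v| ≤ ε) :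
    |∫ v in u..w, -Real.exp (-v) * E v| ≤ ε * (Real.exp (-u) - Real.exp (-w)) := by
  have hc : Continuous fun v : ℝ => ε * Real.exp (-v) := by fun_prop
  refine (intervalIntegral.norm_integral_le_of_norm_le (f := fun v => -Real.exp (-v) * E v)
    (g := fun v => ε * Real.exp (-v)) huw ?_ (hc.intervalIntegrable _ _)).trans ?_
  · refine Eventually.of_forall fun v hv => ?_
    rw [norm_mul, norm_neg, Real.norm_of_nonneg (Real.exp_pos _).le, Real.norm_eq_abs, mul_comm]
    exact mul_le_mul_of_nonneg_right (h v ⟨hv.1.le, hv.2⟩) (Real.exp_pos _).le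
  · have := intervalIntegral.integral_eq_sub_of_hasDerivAt (a := u) (b := w)
      (f := fun v : ℝ => -(ε * Real.exp (-v))) (f' := fun v : ℝ => ε * Real.exp (-v))
      (fun v _ => by
        have := (((hasDerivAt_id v).neg.exp).const_mul ε).fun_neg
        simpa using this) (hc.intervalIntegrable _ _)
    rw [this]
    linarith

lemma tendsto_exp_mul_primeTail (hRH : RiemannHypothesis) :
    Tendsto (fun v => Real.exp (v / 2) * primeTail v) atTop (𝓝 1) := by
  have hA := tendsto_of_isLittleO_exp (primeErr_isLittleO hRH)
  rw [Metric.tendsto_atTop] at hA ⊢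
  intro ε hε
  obtain ⟨X, hX⟩ := hA (min (ε / 8) 1) (by positivity)
  have h0 := (tendsto_affine_mul_exp_neg (show (0 : ℝ) < 1 / 2 by norm_num) 0 2)
  obtain ⟨Y, hY⟩ := (Metric.tendsto_atTop.1 h0) (ε / 2) (by positivity)
  refine ⟨max (max (2 * X) Y) 0, fun v hv => ?_⟩
  have hv1 : 2 * X ≤ v := (le_max_left _ _).trans ((le_max_left _ _).trans hv)
  have hv2 : Y ≤ v := (le_max_right _ _).trans ((le_max_left _ _).trans hv)
  have hv3 : 0 ≤ v := (le_max_right _ _).trans hv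
  have hE : ∀ x, v / 2 ≤ x → |primeErr x| ≤ min (ε / 8) 1 := fun x hx => by
    have := hX x (by linarith)
    rw [Real.dist_eq, sub_zero] at this
    exact this.le
  have hd : ∀ x : ℝ, HasDerivAt (fun x => Real.exp (-x)) (-Real.exp (-x)) x := fun x => by
    simpa using (hasDerivAt_id x).neg.exp
  have hab := sum_Ioc_primeWt_mul (f := fun x => Real.exp (-x)) (f₁ := fun x => -Real.exp (-x))
    (G := fun x => -Real.exp (-x)) (u := v / 2) (w := v) (by linarith) (fun x _ => hd x)
    (fun x _ => by simpa using (hd x).fun_neg) (by fun_prop)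
  have hI := abs_integral_exp_neg_mul_le (u := v / 2) (w := v) (by linarith)
    fun x hx => hE x hx.1
  set Iv := ∫ x in v / 2..v, -Real.exp (-x) * primeErr x
  have hY' := hY v hv2
  rw [Real.dist_eq] at hY' ⊢
  set m := min (ε / 8) 1
  have hm1 : m ≤ ε / 8 := min_le_left _ _
  have hm2 : m ≤ 1 := min_le_right _ _
  have hm0 : 0 < m := by positivity
  have ea : Real.exp (-(v / 2)) = (Real.exp (v / 2))⁻¹ := Real.exp_neg _
  have eb : Real.exp (-v) = (Real.exp (v / 2))⁻¹ ^ 2 := by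
    rw [← Real.exp_neg, ← Real.exp_nat_mul]; push_cast; ring_nf
  have ec : Real.exp (-(1 / 2) * v) = (Real.exp (v / 2))⁻¹ := by
    rw [← Real.exp_neg]; ring_nf
  rw [primeTail, hab]
  simp only [ea, eb, ec] at hI hY' ⊢
  set q := (Real.exp (v / 2))⁻¹ with hq
  have hq0 : 0 < q := by positivity
  have hqe : Real.exp (v / 2) * q = 1 := mul_inv_cancel₀ (Real.exp_pos _).ne'
  set s := Real.exp (v / 2)
  have hs : 0 < s := Real.exp_pos _
  have h1 := hE v (by linarith)
  have h2 := hE (v / 2) le_rfl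
  have hq2 : 2 * q < ε / 2 := by
    rw [zero_mul, zero_add, sub_zero, abs_of_pos (by positivity)] at hY'
    exact hY'
  have e : s * (-q ^ 2 - -q + q ^ 2 * primeErr v - q * primeErr (v / 2) - Iv) - 1 =
      -q + q * primeErr v - primeErr (v / 2) - s * Iv := by
    linear_combination (-q + 1 + q * primeErr v - primeErr (v / 2)) * hqe
  have hsI : |s * Iv| ≤ m := by
    rw [abs_mul, abs_of_pos hs]
    calc s * |Iv| ≤ s * (m * (q - q ^ 2)) := mul_le_mul_of_nonneg_left hI hs.le
      _ = m * (1 - q) := by linear_combination (m - m * q) * hqe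
      _ ≤ m := by nlinarith
  have hqE : |q * primeErr v| ≤ q := by
    rw [abs_mul, abs_of_pos hq0]
    exact mul_le_of_le_one_right hq0.le (h1.trans hm2)
  rw [e, abs_lt]
  rw [abs_le] at hsI hqE h2
  constructor <;> linarith [hsI.1, hsI.2, hqE.1, hqE.2, h2.1, h2.2]

theorem tendsto_exp_mul_primeErr_sub (hRH : RiemannHypothesis) :
    Tendsto (fun v => Real.exp (v / 2) * (primeErr v - mangoldtErr v)) atTop (𝓝 1) := by
  have h1 := tendsto_exp_mul_primeTail hRH
  have h2 := tendsto_affine_mul_exp_neg (show (0 : ℝ) < 1 / 6 by norm_num) 1 2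
  have h3 := h1.add h2
  rw [add_zero] at h3
  have ht : Tendsto (fun v : ℝ => v / 2) atTop atTop := tendsto_id.atTop_div_const two_pos
  refine tendsto_of_tendsto_of_tendsto_of_le_of_le' h1 h3 ?_ ?_
  · filter_upwards [eventually_ge_atTop 0] with v hv
    exact mul_le_mul_of_nonneg_left (primeErr_sub_mangoldtErr_bounds hv).1 (Real.exp_pos _).le
  · filter_upwards [eventually_ge_atTop 0, ht.eventually (eventually_primeSum_le hRH)] with v hv hS
    have h := (primeErr_sub_mangoldtErr_bounds hv).2
    have e : Real.exp (v / 2) * Real.exp (-(2 / 3) * v) = Real.exp (-(1 / 6) * v) := by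
      rw [← Real.exp_add]; ring_nf
    calc _ ≤ Real.exp (v / 2) * (primeTail v + Real.exp (-(2 / 3) * v) * primeSum (v / 2)) :=
          mul_le_mul_of_nonneg_left h (Real.exp_pos _).le
      _ = Real.exp (v / 2) * primeTail v + Real.exp (-(1 / 6) * v) * primeSum (v / 2) := by
          rw [mul_add, ← mul_assoc, e]
      _ ≤ Real.exp (v / 2) * primeTail v + Real.exp (-(1 / 6) * v) * (2 * (v / 2 + 1)) := by
          gcongr
      _ = _ := by ring

end

section

open Filter Topology MeasureTheory Asymptotics

/-- The weight `-log (1 - 1/p)` on primes. -/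
noncomputable def eulerWt (n : ℕ) : ℝ := if n.Prime then -Real.log (1 - 1 / (n : ℝ)) else 0

/-- The summatory function `-∑_{p ≤ e^v} log (1 - 1/p)`. -/
noncomputable def eulerSum (v : ℝ) : ℝ := ∑ n ∈ Finset.Icc 1 ⌊Real.exp v⌋₊, eulerWt n

/-- The error term `-∑_{p ≤ e^v} log (1 - 1/p) - log v - γ` in Mertens' third theorem. -/
noncomputable def eulerErr (v : ℝ) : ℝ := eulerSum v - Real.log v - Real.eulerMascheroniConstant

lemma le_neg_log_one_sub {x : ℝ} (hx : x < 1) : x ≤ -Real.log (1 - x) := by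
  have := Real.log_le_sub_one_of_pos (sub_pos.2 hx)
  linarith

lemma neg_log_one_sub_le {x : ℝ} (hx : x < 1) : -Real.log (1 - x) ≤ x / (1 - x) := by
  have h1 : 0 < 1 - x := sub_pos.2 hx
  have h := Real.log_le_sub_one_of_pos (inv_pos.2 h1)
  rw [Real.log_inv] at h
  refine h.trans_eq ?_
  field_simp
  ring

lemma eulerWt_nonneg (n : ℕ) : 0 ≤ eulerWt n := by
  unfold eulerWt
  split_ifs with h
  · have h2 : (2 : ℝ) ≤ n := by exact_mod_cast h.two_le
    have h3 : 1 / (n : ℝ) < 1 := by rw [div_lt_one (by linarith)]; linarith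
    exact (by positivity : (0 : ℝ) ≤ 1 / n).trans (le_neg_log_one_sub h3)
  · exact le_rfl

lemma monotone_eulerSum : Monotone eulerSum := monotone_sum_Icc_floor_exp eulerWt_nonneg

lemma eulerSum_nonneg (v : ℝ) : 0 ≤ eulerSum v := Finset.sum_nonneg fun n _ => eulerWt_nonneg n

lemma primeWt_div_log_sub_eulerWt {n : ℕ} (hn : 2 ≤ n) :
    0 ≤ primeWt n * (Real.log n)⁻¹ - eulerWt n ∧
    primeWt n * (Real.log n)⁻¹ - eulerWt n ≤ 1 / ((n : ℝ) - 1) - 1 / n := by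
  have h2 : (2 : ℝ) ≤ n := by exact_mod_cast hn
  have h3 : 1 / (n : ℝ) < 1 := by rw [div_lt_one (by linarith)]; linarith
  unfold primeWt eulerWt
  split_ifs with h
  · have hl : Real.log n ≠ 0 := (Real.log_pos (by linarith)).ne'
    have e : Real.log n / ((n : ℝ) - 1) * (Real.log n)⁻¹ = 1 / ((n : ℝ) - 1) := by
      field_simp
    have e2 : 1 / (n : ℝ) / (1 - 1 / n) = 1 / ((n : ℝ) - 1) := by
      have h4 : (n : ℝ) - 1 ≠ 0 := by linarith
      have h5 : (n : ℝ) ≠ 0 := by linarith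
      field_simp
    have h6 := le_neg_log_one_sub h3
    have h7 := neg_log_one_sub_le h3
    rw [e2] at h7
    rw [e]
    constructor <;> linarith
  · simp only [zero_mul, sub_zero, le_refl, true_and, sub_nonneg]
    exact one_div_le_one_div_of_le (by linarith) (by linarith)

lemma sum_Ioc_inv_sub_inv_le {M N : ℕ} (h : M ≤ N) :
    ∑ n ∈ Finset.Ioc M N, (1 / ((n : ℝ) - 1) - 1 / n) = 1 / M - 1 / N := by
  induction N, h using Nat.le_induction with
  | base => simp
  | succ N h ih =>
    rw [Finset.sum_Ioc_succ_top (by omega), ih]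
    push_cast
    ring

lemma sum_Icc_eq_add_sum_Ioc {M N : ℕ} (h : M ≤ N) (g : ℕ → ℝ) :
    ∑ n ∈ Finset.Icc 1 N, g n = ∑ n ∈ Finset.Icc 1 M, g n + ∑ n ∈ Finset.Ioc M N, g n := by
  rw [← Finset.sum_union]
  · congr 1
    ext n
    simp only [Finset.mem_union, Finset.mem_Icc, Finset.mem_Ioc]
    omega
  · rw [Finset.disjoint_left]
    intro n
    simp only [Finset.mem_Icc, Finset.mem_Ioc]
    omega

lemma abs_eulerErr_sub_le {u w : ℝ} (hu : 1 ≤ u) (huw : u ≤ w) :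
    |eulerErr w - eulerErr u - (primeErr w / w - primeErr u / u +
      ∫ v in u..w, primeErr v / v ^ 2)| ≤ 2 * Real.exp (-u) := by
  have hpos : ∀ v ∈ Set.Icc u w, v ≠ 0 := fun v hv => by linarith [hv.1]
  have hab := sum_Ioc_primeWt_mul (f := fun v => v⁻¹) (f₁ := fun v => -(v ^ 2)⁻¹)
    (G := Real.log) huw (fun v hv => hasDerivAt_inv (hpos v hv))
    (fun v hv => Real.hasDerivAt_log (hpos v hv))
    ((continuousOn_id.pow 2).inv₀ fun v hv => pow_ne_zero 2 (hpos v hv)).neg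
  have hint : ∫ v in u..w, -(v ^ 2)⁻¹ * primeErr v = -∫ v in u..w, primeErr v / v ^ 2 := by
    rw [← intervalIntegral.integral_neg]
    congr 1
    ext v
    ring
  rw [hint] at hab
  have hMN : ⌊Real.exp u⌋₊ ≤ ⌊Real.exp w⌋₊ := Nat.floor_mono (Real.exp_le_exp.2 huw)
  have hS : eulerSum w - eulerSum u =
      ∑ n ∈ Finset.Ioc ⌊Real.exp u⌋₊ ⌊Real.exp w⌋₊, eulerWt n := by
    rw [eulerSum, eulerSum, sum_Icc_eq_add_sum_Ioc hMN]
    ring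
  have hM : 1 ≤ ⌊Real.exp u⌋₊ := by
    rw [Nat.one_le_floor_iff]
    exact Real.one_le_exp (by linarith)
  have h2 : ∀ n ∈ Finset.Ioc ⌊Real.exp u⌋₊ ⌊Real.exp w⌋₊, 2 ≤ n := fun n hn => by
    have := (Finset.mem_Ioc.1 hn).1
    omega
  have hlo : 0 ≤ ∑ n ∈ Finset.Ioc ⌊Real.exp u⌋₊ ⌊Real.exp w⌋₊,
      (primeWt n * (Real.log n)⁻¹ - eulerWt n) :=
    Finset.sum_nonneg fun n hn => (primeWt_div_log_sub_eulerWt (h2 n hn)).1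
  have hup : ∑ n ∈ Finset.Ioc ⌊Real.exp u⌋₊ ⌊Real.exp w⌋₊,
      (primeWt n * (Real.log n)⁻¹ - eulerWt n) ≤ 2 * Real.exp (-u) := by
    refine (Finset.sum_le_sum fun n hn => (primeWt_div_log_sub_eulerWt (h2 n hn)).2).trans ?_
    rw [sum_Ioc_inv_sub_inv_le hMN]
    have h3 : (0 : ℝ) < ⌊Real.exp u⌋₊ := by exact_mod_cast hM
    have h4 : Real.exp u / 2 ≤ ⌊Real.exp u⌋₊ := by
      have h5 := Nat.lt_floor_add_one (Real.exp u)
      have h6 : (1 : ℝ) ≤ ⌊Real.exp u⌋₊ := by exact_mod_cast hM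
      linarith
    have h7 : 1 / (⌊Real.exp u⌋₊ : ℝ) ≤ 2 * Real.exp (-u) := by
      rw [Real.exp_neg, ← div_eq_mul_inv, div_le_div_iff₀ h3 (Real.exp_pos _)]
      linarith
    have : 0 ≤ 1 / (⌊Real.exp w⌋₊ : ℝ) := by positivity
    linarith
  rw [Finset.sum_sub_distrib, ← hS, hab] at hlo hup
  rw [eulerErr, eulerErr, abs_le]
  simp only [div_eq_mul_inv] at hlo hup ⊢
  constructor <;> linarith

lemma integral_inv_sq {u w : ℝ} (hu : 0 < u) (huw : u ≤ w) :
    ∫ v in u..w, 1 / v ^ 2 = 1 / u - 1 / w := by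
  have hpos : ∀ v ∈ Set.uIcc u w, v ≠ 0 := fun v hv => by
    rw [Set.uIcc_of_le huw] at hv
    linarith [hv.1]
  have h := intervalIntegral.integral_eq_sub_of_hasDerivAt (a := u) (b := w)
    (f := fun v : ℝ => -v⁻¹) (f' := fun v : ℝ => 1 / v ^ 2)
    (fun v hv => by simpa using (hasDerivAt_inv (hpos v hv)).fun_neg) ?_
  · rw [h]
    ring
  · exact ContinuousOn.intervalIntegrable (continuousOn_const.div (by fun_prop)
      fun v hv => pow_ne_zero 2 (hpos v hv))

lemma abs_integral_div_sq_le {E : ℝ → ℝ} {u w ε : ℝ} (hu : 1 ≤ u) (huw : u ≤ w) (hε : 0 ≤ ε)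
    (h : ∀ v, u ≤ v → |E v| ≤ ε) : |∫ v in u..w, E v / v ^ 2| ≤ ε := by
  have hi : IntervalIntegrable (fun v : ℝ => ε * (1 / v ^ 2)) volume u w := by
    refine ContinuousOn.intervalIntegrable (continuousOn_const.mul
      (continuousOn_const.div (by fun_prop) fun v hv => pow_ne_zero 2 ?_))
    rw [Set.uIcc_of_le huw] at hv
    linarith [hv.1]
  refine (intervalIntegral.norm_integral_le_of_norm_le (f := fun v => E v / v ^ 2)
    (g := fun v => ε * (1 / v ^ 2)) huw ?_ hi).trans ?_
  · refine Eventually.of_forall fun v hv => ?_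
    rw [norm_div, Real.norm_eq_abs, norm_pow, Real.norm_eq_abs, sq_abs, mul_one_div]
    exact div_le_div_of_nonneg_right (h v hv.1.le) (by positivity)
  · rw [intervalIntegral.integral_const_mul, integral_inv_sq (by linarith) huw]
    have h1 : 1 / u ≤ 1 := by rw [div_le_one (by linarith)]; exact hu
    have h2 : 0 ≤ 1 / w := by have : 0 < w := by linarith
                              positivity
    exact mul_le_of_le_one_right hε (by linarith)

lemma exists_tendsto_eulerErr (hRH : RiemannHypothesis) :
    ∃ C, Tendsto eulerErr atTop (𝓝 C) := by
  refine cauchySeq_tendsto_of_complete ?_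
  rw [Metric.cauchySeq_iff']
  intro ε hε
  have hA := tendsto_of_isLittleO_exp (primeErr_isLittleO hRH)
  obtain ⟨X, hX⟩ := Metric.tendsto_atTop.1 hA (ε / 6) (by positivity)
  obtain ⟨Y, hY⟩ := Metric.tendsto_atTop.1 Real.tendsto_exp_neg_atTop_nhds_zero (ε / 6)
    (by positivity)
  set u := max (max X Y) 1
  have hu1 : 1 ≤ u := le_max_right _ _
  have huX : X ≤ u := (le_max_left _ _).trans (le_max_left _ _)
  have huY : Y ≤ u := (le_max_right _ _).trans (le_max_left _ _)
  have hE : ∀ v, u ≤ v → |primeErr v| ≤ ε / 6 := fun v hv => by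
    have := hX v (huX.trans hv)
    rw [Real.dist_eq, sub_zero] at this
    exact this.le
  have hdiv : ∀ v, u ≤ v → |primeErr v / v| ≤ ε / 6 := fun v hv => by
    rw [abs_div, abs_of_pos (by linarith : 0 < v)]
    exact (div_le_self (abs_nonneg _) (by linarith)).trans (hE v hv)
  refine ⟨u, fun w hw => ?_⟩
  have h1 := abs_eulerErr_sub_le hu1 hw
  have h2 := abs_integral_div_sq_le hu1 hw (by positivity) hE
  have h3 := hdiv u le_rfl
  have h4 := hdiv w hw
  have h5 := hY u huY
  rw [Real.dist_eq, sub_zero, abs_of_pos (Real.exp_pos _)] at h5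
  rw [Real.dist_eq]
  rw [abs_le] at h1 h2 h3 h4
  rw [abs_lt]
  constructor <;> linarith [h1.1, h1.2, h2.1, h2.2, h3.1, h3.2, h4.1, h4.2]

end

section

open Filter Topology MeasureTheory Set

/-- The summatory function of `w` over the indices with `l i ≤ u` has Laplace transform
`s⁻¹ ∑ w i e^{-s l i}`. -/
lemma mul_integral_summatory {ι : Type*} [Countable ι] {w l : ι → ℝ} {s : ℝ} (hs : 0 < s)
    (hl : ∀ i, 0 ≤ l i) (hw : Summable fun i => ‖w i * Real.exp (-s * l i)‖) :
    HasSum (fun i => w i * Real.exp (-s * l i))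
      (s * ∫ u in Ioi (0 : ℝ), (∑' i, if l i ≤ u then w i else 0) * Real.exp (-s * u)) := by
  have key : ∀ (c : ℝ) (i : ι), ∫ u in Ioi (0 : ℝ), (Ici (l i)).indicator
      (fun u => c * Real.exp (-s * u)) u = s⁻¹ * (c * Real.exp (-s * l i)) := by
    intro c i
    rw [setIntegral_indicator measurableSet_Ici]
    have h1 : (Ioi (0 : ℝ) ∩ Ici (l i) : Set ℝ) =ᵐ[volume] (Ioi (l i) : Set ℝ) := by
      rcases (hl i).eq_or_lt with h | h
      · rw [← h, inter_eq_left.2 Ioi_subset_Ici_self]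
        exact EventuallyEq.rfl
      · rw [inter_eq_right.2 (show Ici (l i) ⊆ Ioi 0 from fun x hx => h.trans_le hx)]
        exact Ioi_ae_eq_Ici.symm
    rw [setIntegral_congr_set h1, integral_const_mul, integral_exp_mul_Ioi (neg_neg_of_pos hs)]
    field_simp
  have hF : ∀ i, Integrable ((Ici (l i)).indicator fun u => w i * Real.exp (-s * u))
      (volume.restrict (Ioi (0 : ℝ))) := fun i =>
    ((integrableOn_exp_mul_Ioi (neg_neg_of_pos hs) 0).const_mul (w i)).indicator measurableSet_Ici
  have h := hasSum_integral_of_summable_integral_norm hF (by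
    refine (hw.mul_left s⁻¹).congr fun i => ?_
    rw [norm_mul, Real.norm_of_nonneg (Real.exp_pos _).le, ← key]
    refine integral_congr_ae (Eventually.of_forall fun u => ?_)
    simp only [norm_indicator_eq_indicator_norm, norm_mul, Real.norm_eq_abs, Real.abs_exp])
  have h2 := h.mul_left s
  simp only [key, mul_inv_cancel_left₀ hs.ne'] at h2
  convert! h2 using 4 with u
  rw [← tsum_mul_right]
  refine tsum_congr fun i => ?_
  simp only [indicator_apply, mem_Ici, ite_mul, zero_mul]

lemma tendsto_mul_integral_mul_exp {q : ℝ → ℝ} {B C : ℝ} (hm : Measurable q)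
    (hb : ∀ u, 0 < u → |q u| ≤ B) (hq : Tendsto q atTop (𝓝 C)) :
    Tendsto (fun s => s * ∫ u in Ioi (0 : ℝ), q u * Real.exp (-s * u)) (𝓝[>] 0) (𝓝 C) := by
  have h : Tendsto (fun s => ∫ t in Ioi (0 : ℝ), q (s⁻¹ * t) * Real.exp (-t)) (𝓝[>] 0)
      (𝓝 (∫ t in Ioi (0 : ℝ), C * Real.exp (-t))) := by
    refine tendsto_integral_filter_of_dominated_convergence (fun t => B * Real.exp (-t)) ?_ ?_ ?_ ?_
    · exact Eventually.of_forall fun s => by fun_prop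
    · filter_upwards [self_mem_nhdsWithin] with s hs
      refine (ae_restrict_iff' measurableSet_Ioi).2 (Eventually.of_forall fun t ht => ?_)
      rw [norm_mul, Real.norm_eq_abs, Real.norm_eq_abs, Real.abs_exp]
      exact mul_le_mul_of_nonneg_right (hb _ (mul_pos (inv_pos.2 hs) ht)) (Real.exp_pos _).le
    · simpa using (integrableOn_exp_mul_Ioi neg_one_lt_zero 0).const_mul B
    · refine (ae_restrict_iff' measurableSet_Ioi).2 (Eventually.of_forall fun t ht => ?_)
      exact (hq.comp (tendsto_inv_nhdsGT_zero.atTop_mul_const ht)).mul_const _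
  rw [integral_const_mul, integral_exp_neg_Ioi_zero, mul_one] at h
  refine h.congr' ?_
  filter_upwards [self_mem_nhdsWithin] with s hs
  have hs' : 0 < s := hs
  have := integral_comp_mul_left_Ioi (fun u => q u * Real.exp (-s * u)) 0 (inv_pos.2 hs')
  rw [inv_inv, mul_zero, smul_eq_mul] at this
  rw [← this]
  refine integral_congr_ae (Eventually.of_forall fun t => ?_)
  simp only
  congr 2
  field_simp

lemma eulerWt_le (n : ℕ) : eulerWt n ≤ 2 / n := by
  unfold eulerWt
  split_ifs with h
  · have h2 : (2 : ℝ) ≤ n := by exact_mod_cast h.two_le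
    have h3 : 1 / (n : ℝ) ≤ 1 / 2 := one_div_le_one_div_of_le two_pos h2
    refine (neg_log_one_sub_le (by linarith)).trans ?_
    rw [show (2 : ℝ) / n = (1 / n) / (1 / 2) by ring]
    exact div_le_div_of_nonneg_left (by positivity) (by norm_num) (by linarith)
  · positivity

lemma summable_eulerWt_mul_exp {s : ℝ} (hs : 0 < s) :
    Summable fun n : ℕ => eulerWt n * Real.exp (-s * Real.log n) := by
  refine Summable.of_nonneg_of_le (fun n => mul_nonneg (eulerWt_nonneg n) (Real.exp_pos _).le)
    (fun n => ?_) ((Real.summable_nat_rpow.2 (show -(1 + s) < -1 by linarith)).mul_left 2)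
  rcases Nat.eq_zero_or_pos n with rfl | hn
  · simp [eulerWt, Real.rpow_nonneg]
  · have hn' : (0 : ℝ) < n := by exact_mod_cast hn
    have h : (n : ℝ) ^ (-(1 + s)) = 1 / n * Real.exp (-s * Real.log n) := by
      rw [neg_add, Real.rpow_add hn', Real.rpow_neg_one, Real.rpow_def_of_pos hn', one_div,
        mul_comm (Real.log _)]
    rw [h, ← mul_assoc]
    refine mul_le_mul_of_nonneg_right ((eulerWt_le n).trans_eq (by ring)) (Real.exp_pos _).le

/-- The logarithm of the Euler product of `ζ(1 + s)`. -/
lemma hasSum_log_riemannZeta {s : ℝ} (hs : 0 < s) :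
    HasSum (fun n : ℕ => if n.Prime then -Real.log (1 - 1 / n * Real.exp (-s * Real.log n)) else 0)
      (Real.log ‖riemannZeta (1 + s)‖) := by
  set t : ℕ → ℝ := fun n => 1 / n * Real.exp (-s * Real.log n) with ht
  have hrpow : ∀ n : ℕ, 0 < n → (n : ℝ) ^ (-(1 + s)) = t n := by
    intro n hn
    have hn' : (0 : ℝ) < n := by exact_mod_cast hn
    rw [neg_add, Real.rpow_add hn', Real.rpow_neg_one, Real.rpow_def_of_pos hn',
      mul_comm (Real.log _)]
    simp only [ht, one_div]
  have ht0 : ∀ n, 0 ≤ t n := fun n => by positivity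
  have ht2 : ∀ n : ℕ, n.Prime → t n ≤ 1 / 2 := by
    intro n hn
    have h2 : (2 : ℝ) ≤ n := by exact_mod_cast hn.two_le
    refine (mul_le_of_le_one_right (by positivity) ?_).trans
      (one_div_le_one_div_of_le two_pos h2)
    rw [Real.exp_le_one_iff, neg_mul, neg_nonpos]
    exact mul_nonneg hs.le (Real.log_nonneg (by linarith))
  have hsum : Summable fun p : Nat.Primes => -Real.log (1 - t p) := by
    have hst : Summable fun p : Nat.Primes => 2 * (((p : ℕ) : ℝ) ^ (-(1 + s))) :=
      ((Real.summable_nat_rpow.2 (show -(1 + s) < -1 by linarith)).mul_left 2).subtype _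
    refine Summable.of_nonneg_of_le (fun p => ?_) (fun p => ?_) hst
    · exact (ht0 p).trans (le_neg_log_one_sub (by linarith [ht2 p p.2]))
    · have h2 := ht2 p p.2
      refine (neg_log_one_sub_le (by linarith)).trans ?_
      rw [hrpow p p.2.pos, div_le_iff₀ (by linarith)]
      nlinarith [ht0 p]
  have hprod := (riemannZeta_eulerProduct_hasProd (s := 1 + s) (by simpa using hs)).norm
  have hexp : HasProd (fun p : Nat.Primes => ‖(1 - (p : ℂ) ^ (-(1 + (s : ℂ))))⁻¹‖)
      (Real.exp (∑' p : Nat.Primes, -Real.log (1 - t p))) := by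
    convert! hsum.hasSum.rexp using 2 with p
    have h2 := ht2 p p.2
    have hc : (1 : ℂ) - (p : ℂ) ^ (-(1 + (s : ℂ))) = ((1 - t p : ℝ) : ℂ) := by
      rw [← hrpow p p.2.pos, Complex.ofReal_sub, Complex.ofReal_cpow (Nat.cast_nonneg _)]
      push_cast
      rfl
    rw [hc, norm_inv, Complex.norm_real, Real.norm_of_nonneg (by linarith), Function.comp_apply,
      Real.exp_neg, Real.exp_log (by linarith)]
  rw [hprod.unique hexp, Real.log_exp]
  have hi := (hasSum_subtype_iff_indicator (f := fun n : ℕ => -Real.log (1 - t n))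
    (s := {p : ℕ | p.Prime})).1 hsum.hasSum
  convert! hi using 2 with n
  simp only [indicator_apply, mem_ofPred_eq, ht]

lemma abs_log_one_sub_mul_sub_le {x y : ℝ} (hx : 0 ≤ x) (hx2 : x ≤ 1 / 2) (hy : 0 ≤ y)
    (hy1 : y ≤ 1) : |-Real.log (1 - x * y) - -Real.log (1 - x) * y| ≤ 2 * x ^ 2 := by
  have key : ∀ t : ℝ, 0 ≤ t → t ≤ 1 / 2 → t / (1 - t) ≤ t + 2 * t ^ 2 := by
    intro t h0 h1
    rw [div_le_iff₀ (by linarith)]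
    nlinarith [mul_nonneg (sq_nonneg t) (sub_nonneg.2 h1)]
  have hxy : x * y ≤ x := mul_le_of_le_one_right hx hy1
  have hxy0 : 0 ≤ x * y := mul_nonneg hx hy
  have a1 := le_neg_log_one_sub (show x * y < 1 by linarith)
  have a2 := (neg_log_one_sub_le (show x * y < 1 by linarith)).trans (key _ hxy0 (by linarith))
  have b1 := mul_le_mul_of_nonneg_right (le_neg_log_one_sub (show x < 1 by linarith)) hy
  have b2 := mul_le_mul_of_nonneg_right
    ((neg_log_one_sub_le (show x < 1 by linarith)).trans (key _ hx hx2)) hy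
  have c1 : (x * y) ^ 2 ≤ x ^ 2 := pow_le_pow_left₀ hxy0 hxy 2
  have c2 : x ^ 2 * y ≤ x ^ 2 := mul_le_of_le_one_right (sq_nonneg x) hy1
  rw [abs_le]
  constructor <;> nlinarith

lemma tendsto_log_riemannZeta_sub :
    Tendsto (fun s : ℝ => Real.log ‖riemannZeta (1 + s)‖ -
      ∑' n : ℕ, eulerWt n * Real.exp (-s * Real.log n)) (𝓝[>] 0) (𝓝 0) := by
  have h : Tendsto (fun s : ℝ => ∑' n : ℕ, ((if n.Prime then
      -Real.log (1 - 1 / n * Real.exp (-s * Real.log n)) else 0) -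
        eulerWt n * Real.exp (-s * Real.log n))) (𝓝[>] 0) (𝓝 (∑' _ : ℕ, (0 : ℝ))) := by
    refine tendsto_tsum_of_dominated_convergence (bound := fun n : ℕ => 2 * (1 / (n : ℝ) ^ 2))
      ((Real.summable_one_div_nat_pow.2 one_lt_two).mul_left 2) (fun n => ?_) ?_
    · by_cases hn : n.Prime
      · simp only [hn, if_true, eulerWt]
        have h2 : (2 : ℝ) ≤ n := by exact_mod_cast hn.two_le
        have h3 : 1 / (n : ℝ) ≤ 1 / 2 := one_div_le_one_div_of_le two_pos h2
        have hc : ContinuousAt (fun s : ℝ => -Real.log (1 - 1 / n * Real.exp (-s * Real.log n)) -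
            -Real.log (1 - 1 / n) * Real.exp (-s * Real.log n)) 0 := by
          refine ContinuousAt.sub (ContinuousAt.neg (ContinuousAt.log (by fun_prop) ?_))
            (by fun_prop)
          simp only [neg_zero, zero_mul, Real.exp_zero, mul_one]
          linarith
        have := hc.tendsto
        simp only [neg_zero, zero_mul, Real.exp_zero, mul_one, sub_self] at this
        exact this.mono_left nhdsWithin_le_nhds
      · simp [hn, eulerWt]
    · filter_upwards [self_mem_nhdsWithin] with s hs n
      by_cases hn : n.Prime
      · simp only [hn, if_true, eulerWt]
        have h2 : (2 : ℝ) ≤ n := by exact_mod_cast hn.two_le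
        have h3 : 1 / (n : ℝ) ≤ 1 / 2 := one_div_le_one_div_of_le two_pos h2
        refine (abs_log_one_sub_mul_sub_le (by positivity) h3 (Real.exp_pos _).le ?_).trans_eq
          (by ring)
        rw [Real.exp_le_one_iff, neg_mul, neg_nonpos]
        exact mul_nonneg (le_of_lt hs) (Real.log_nonneg (by linarith))
      · simp only [hn, if_false, eulerWt, zero_mul, sub_zero, norm_zero]
        positivity
  rw [tsum_zero] at h
  refine h.congr' ?_
  filter_upwards [self_mem_nhdsWithin] with s hs
  exact ((hasSum_log_riemannZeta hs).sub (summable_eulerWt_mul_exp hs).hasSum).tsum_eq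

lemma tendsto_log_riemannZeta_add :
    Tendsto (fun s : ℝ => Real.log ‖riemannZeta (1 + s)‖ + Real.log (1 - Real.exp (-s)))
      (𝓝[>] 0) (𝓝 0) := by
  have h1 : Tendsto (fun s : ℝ => ‖(s : ℂ) * riemannZeta (1 + s)‖) (𝓝[>] 0) (𝓝 1) := by
    have : Tendsto (fun s : ℝ => (1 : ℂ) + s) (𝓝[>] 0) (𝓝[≠] 1) := by
      refine tendsto_nhdsWithin_iff.2 ⟨?_, ?_⟩
      · have hc : ContinuousAt (fun s : ℝ => (1 : ℂ) + s) 0 := by fun_prop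
        have := hc.tendsto
        simp only [Complex.ofReal_zero, add_zero] at this
        exact this.mono_left nhdsWithin_le_nhds
      · filter_upwards [self_mem_nhdsWithin] with s hs
        have : s ≠ 0 := ne_of_gt hs
        simpa using this
    have h := (riemannZeta_residue_one.comp this).norm
    simpa using h
  have h2 : Tendsto (fun s : ℝ => (1 - Real.exp (-s)) / s) (𝓝[>] 0) (𝓝 1) := by
    have hd : HasDerivAt (fun s : ℝ => -Real.exp (-s)) 1 0 := by
      simpa using ((hasDerivAt_neg' (0 : ℝ)).exp).fun_neg
    refine (hd.tendsto_slope_zero_right).congr fun s => ?_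
    simp only [zero_add, neg_zero, Real.exp_zero, smul_eq_mul]
    rw [div_eq_inv_mul]
    ring
  have h := ((h1.mul h2).log (by norm_num))
  rw [mul_one, Real.log_one] at h
  refine h.congr' ?_
  have hne : ∀ᶠ s : ℝ in 𝓝[>] 0, ‖(s : ℂ) * riemannZeta (1 + s)‖ ≠ 0 :=
    h1.eventually_ne one_ne_zero
  filter_upwards [self_mem_nhdsWithin, hne] with s hs hz
  have hs' : 0 < s := hs
  have he : 0 < 1 - Real.exp (-s) := by
    rw [sub_pos, Real.exp_lt_one_iff]; linarith
  rw [norm_mul] at hz ⊢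
  rw [Complex.norm_real, Real.norm_of_nonneg hs'.le] at hz ⊢
  rw [← Real.log_mul (right_ne_zero_of_mul hz) he.ne']
  congr 1
  field_simp

lemma tendsto_harmonic_floor_sub_log :
    Tendsto (fun u : ℝ => ((harmonic ⌊u⌋₊ : ℚ) : ℝ) - Real.log u) atTop
      (𝓝 Real.eulerMascheroniConstant) := by
  have h1 := Real.tendsto_harmonic_sub_log.comp (tendsto_nat_floor_atTop (α := ℝ))
  have h2 := (tendsto_nat_floor_div_atTop (R := ℝ)).log one_ne_zero
  rw [Real.log_one] at h2
  have h := h1.add h2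
  rw [add_zero] at h
  refine h.congr' ?_
  filter_upwards [eventually_ge_atTop 1] with u hu
  have : 0 < ⌊u⌋₊ := Nat.floor_pos.2 hu
  rw [Real.log_div (by positivity) (by positivity), Function.comp_apply]
  ring

lemma monotone_harmonic_floor : Monotone fun u : ℝ => ((harmonic ⌊u⌋₊ : ℚ) : ℝ) := by
  intro a b hab
  have : Monotone harmonic := monotone_nat_of_le_succ fun n => by
    rw [harmonic_succ]
    exact le_add_of_nonneg_right (by positivity)
  exact Rat.cast_le.2 (this (Nat.floor_le_floor hab))

/-- Mertens' third theorem. -/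
theorem tendsto_eulerErr (hRH : RiemannHypothesis) : Tendsto eulerErr atTop (𝓝 0) := by
  obtain ⟨C, hC⟩ := exists_tendsto_eulerErr hRH
  suffices C = 0 by rwa [this] at hC
  set q : ℝ → ℝ := fun u => eulerSum u - ((harmonic ⌊u⌋₊ : ℚ) : ℝ) with hq
  have hqC : Tendsto q atTop (𝓝 C) := by
    have h := hC.sub (tendsto_harmonic_floor_sub_log.sub_const Real.eulerMascheroniConstant)
    rw [sub_self, sub_zero] at h
    refine h.congr fun u => ?_
    simp only [hq, eulerErr]
    ring
  have hm : Measurable q := monotone_eulerSum.measurable.sub monotone_harmonic_floor.measurable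
  have hH0 : ∀ n : ℕ, (0 : ℝ) ≤ ((harmonic n : ℚ) : ℝ) := fun n => by
    have : 0 ≤ harmonic n := Finset.sum_nonneg fun i _ => by positivity
    exact_mod_cast this
  obtain ⟨B, hB⟩ : ∃ B, ∀ u, 0 < u → |q u| ≤ B := by
    obtain ⟨U, hU⟩ := eventually_atTop.1 (hqC.abs.eventually_le_const (lt_add_one |C|))
    refine ⟨max (|C| + 1) (eulerSum U + ((harmonic ⌊U⌋₊ : ℚ) : ℝ)), fun u _ => ?_⟩
    rcases le_total U u with h | h
    · exact (hU u h).trans (le_max_left _ _)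
    · refine le_trans ?_ (le_max_right _ _)
      have h1 := monotone_eulerSum h
      have h2 := monotone_harmonic_floor h
      have h3 := eulerSum_nonneg u
      have h4 := hH0 ⌊u⌋₊
      simp only [hq, abs_le] at h2 ⊢
      constructor <;> linarith
  have hlim := tendsto_mul_integral_mul_exp hm hB hqC
  have hzeta := tendsto_log_riemannZeta_add.sub tendsto_log_riemannZeta_sub
  rw [sub_zero] at hzeta
  refine tendsto_nhds_unique hlim (hzeta.congr' ?_)
  filter_upwards [self_mem_nhdsWithin] with s hs
  have hs' : 0 < s := hs
  set w : ℕ ⊕ ℕ → ℝ := Sum.elim eulerWt fun n => -(1 / ((n : ℝ) + 1)) with hw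
  set l : ℕ ⊕ ℕ → ℝ := Sum.elim (fun n => Real.log n) fun n => (n : ℝ) + 1 with hl
  have hl0 : ∀ i, 0 ≤ l i := by
    rintro (n | n)
    · exact Real.log_natCast_nonneg n
    · exact add_nonneg (Nat.cast_nonneg n) zero_le_one
  have hlog : HasSum (fun n : ℕ => 1 / ((n : ℝ) + 1) * Real.exp (-s * ((n : ℝ) + 1)))
      (-Real.log (1 - Real.exp (-s))) := by
    have := Real.hasSum_pow_div_log_of_abs_lt_one (x := Real.exp (-s)) (by
      rw [Real.abs_exp, Real.exp_lt_one_iff]; linarith)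
    convert! this using 2 with n
    rw [← Real.exp_nat_mul]
    push_cast
    rw [mul_comm ((n : ℝ) + 1)]
    ring
  have hsum := (summable_eulerWt_mul_exp hs').hasSum
  have hall : HasSum (fun i => w i * Real.exp (-s * l i))
      ((∑' n : ℕ, eulerWt n * Real.exp (-s * Real.log n)) + Real.log (1 - Real.exp (-s))) := by
    refine HasSum.sum hsum ?_
    rw [← neg_neg (Real.log _)]
    convert! hlog.neg using 2 with n
    simp only [hw, hl, Function.comp_apply, Sum.elim_inr, neg_mul]
  have hnorm : Summable fun i => ‖w i * Real.exp (-s * l i)‖ := hall.summable.norm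
  have hrep := (mul_integral_summatory hs' hl0 hnorm).unique hall
  have hqs : ∀ u ∈ Ioi (0 : ℝ), ∑' i, (if l i ≤ u then w i else 0) = q u := by
    intro u hu
    refine HasSum.tsum_eq ?_
    rw [hq]
    simp only
    rw [sub_eq_add_neg]
    refine HasSum.sum ?_ ?_
    · have : HasSum (fun n : ℕ => if Real.log n ≤ u then eulerWt n else 0)
          (∑ n ∈ Finset.Icc 1 ⌊Real.exp u⌋₊, if Real.log n ≤ u then eulerWt n else 0) := by
        refine hasSum_sum_of_ne_finset_zero fun n hn => ?_
        rcases Nat.eq_zero_or_pos n with rfl | h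
        · simp [eulerWt]
        · rw [if_neg fun h2 => hn ((log_le_iff_mem_Icc h u).1 h2)]
      rw [Finset.sum_congr rfl fun n hn =>
        if_pos ((log_le_iff_mem_Icc (Finset.mem_Icc.1 hn).1 u).2 hn)] at this
      exact this
    · have hfl : ∀ n : ℕ, n ∈ Finset.range ⌊u⌋₊ ↔ (n : ℝ) + 1 ≤ u := fun n => by
        rw [Finset.mem_range, ← Nat.add_one_le_iff, Nat.le_floor_iff (le_of_lt hu)]
        push_cast
        rfl
      have : HasSum (fun n : ℕ => if (n : ℝ) + 1 ≤ u then -(1 / ((n : ℝ) + 1)) else 0)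
          (∑ n ∈ Finset.range ⌊u⌋₊, if (n : ℝ) + 1 ≤ u then -(1 / ((n : ℝ) + 1)) else 0) :=
        hasSum_sum_of_ne_finset_zero fun n hn => if_neg fun h => hn ((hfl n).2 h)
      rw [Finset.sum_congr rfl fun n hn => if_pos ((hfl n).1 hn), Finset.sum_neg_distrib] at this
      convert! this using 2
      simp [harmonic]
  have hint : ∫ u in Ioi (0 : ℝ), (∑' i, if l i ≤ u then w i else 0) * Real.exp (-s * u) =
      ∫ u in Ioi (0 : ℝ), q u * Real.exp (-s * u) :=
    setIntegral_congr_fun measurableSet_Ioi fun u hu => by simp only [hqs u hu]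
  rw [← hint, hrep]
  ring

end

section

open Filter Topology MeasureTheory Set Asymptotics

lemma continuousWithinAt_mangoldtErr (x : ℝ) : ContinuousWithinAt mangoldtErr (Ioi x) x := by
  have hfl : ∀ᶠ v in 𝓝[>] x, ⌊Real.exp v⌋₊ = ⌊Real.exp x⌋₊ := by
    have h1 : ∀ᶠ v in 𝓝 x, Real.exp v < ⌊Real.exp x⌋₊ + 1 :=
      (Real.continuous_exp.tendsto x).eventually_lt_const (Nat.lt_floor_add_one _)
    filter_upwards [nhdsWithin_le_nhds h1, self_mem_nhdsWithin] with v hv hxv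
    rw [Nat.floor_eq_iff (Real.exp_pos v).le]
    exact ⟨(Nat.floor_le (Real.exp_pos x).le).trans (Real.exp_le_exp.2 (le_of_lt hxv)), hv⟩
  have hc : ContinuousWithinAt (fun v => (∑ n ∈ Finset.Icc 1 ⌊Real.exp x⌋₊,
      ArithmeticFunction.vonMangoldt n / (n : ℝ)) - v + Real.eulerMascheroniConstant)
      (Ioi x) x := by fun_prop
  refine hc.congr_of_eventuallyEq ?_ rfl
  filter_upwards [hfl] with v hv
  rw [mangoldtErr, hv]

lemma integral_exp_neg_half (u w : ℝ) :
    ∫ v in u..w, Real.exp (-v / 2) = 2 * Real.exp (-u / 2) - 2 * Real.exp (-w / 2) := by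
  have h : ∀ v ∈ uIcc u w, HasDerivAt (fun v => -2 * Real.exp (-v / 2)) (Real.exp (-v / 2)) v := by
    intro v _
    have := (((hasDerivAt_neg' v).div_const 2).exp).const_mul (-2)
    convert! this using 1
    ring
  rw [intervalIntegral.integral_eq_sub_of_hasDerivAt h (by
    apply Continuous.intervalIntegrable; fun_prop)]
  ring

lemma abs_integral_div_pow_le {f : ℝ → ℝ} {u w c : ℝ} (k : ℕ) (hu : 0 < u) (huw : u ≤ w)
    (hc : 0 ≤ c) (hf : ∀ v, u ≤ v → |f v| ≤ c * Real.exp (-v / 2)) :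
    |∫ v in u..w, f v / v ^ k| ≤ 2 * c * Real.exp (-u / 2) / u ^ k := by
  have h1 : ‖∫ v in u..w, f v / v ^ k‖ ≤ ∫ v in u..w, c / u ^ k * Real.exp (-v / 2) := by
    refine intervalIntegral.norm_integral_le_of_norm_le huw
      (Eventually.of_forall fun v hv => ?_) (by apply Continuous.intervalIntegrable; fun_prop)
    have hv' : u ≤ v := hv.1.le
    have hv0 : 0 < v := hu.trans_le hv'
    rw [norm_div, Real.norm_eq_abs, Real.norm_of_nonneg (by positivity), div_mul_eq_mul_div]
    exact div_le_div₀ (by positivity) (hf v hv') (by positivity) (pow_le_pow_left₀ hu.le hv' k)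
  rw [Real.norm_eq_abs, intervalIntegral.integral_const_mul, integral_exp_neg_half] at h1
  refine h1.trans ?_
  rw [show 2 * c * Real.exp (-u / 2) / u ^ k = c / u ^ k * (2 * Real.exp (-u / 2)) by ring]
  refine mul_le_mul_of_nonneg_left ?_ (by positivity)
  linarith [Real.exp_pos (-w / 2)]

/-- Integration by parts against `v⁻²` for a function with exponentially small tails `J`. -/
lemma abs_integral_div_sq_sub_le {f J : ℝ → ℝ} {u w c : ℝ} (hu : 0 < u) (huw : u ≤ w)
    (hc : 0 ≤ c) (hf : IntervalIntegrable f volume u w)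
    (hfr : ∀ x, ContinuousWithinAt f (Ioi x) x) (hfm : Measurable f)
    (hJ : ∀ x, u ≤ x → ∫ v in u..x, f v = J u - J x)
    (hJc : ∀ x, u ≤ x → |J x| ≤ c * Real.exp (-x / 2)) :
    |(∫ v in u..w, f v / v ^ 2) - J u / u ^ 2| ≤
      c * Real.exp (-w / 2) / w ^ 2 + 4 * c * Real.exp (-u / 2) / u ^ 3 := by
  have hw : 0 < w := hu.trans_le huw
  have hpos : ∀ x ∈ uIcc u w, 0 < x := fun x hx => by
    rw [uIcc_of_le huw] at hx; exact hu.trans_le hx.1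
  have hparts := intervalIntegral.integral_mul_deriv_eq_deriv_mul_of_hasDeriv_right
    (a := u) (b := w) (u := fun x => (x ^ 2)⁻¹) (v := fun x => (∫ v in u..x, f v) - J u)
    (u' := fun x => -2 / x ^ 3) (v' := f)
    (ContinuousOn.inv₀ (by fun_prop) fun x hx => pow_ne_zero 2 (hpos x hx).ne')
    ((intervalIntegral.continuousOn_primitive_interval' hf left_mem_uIcc).sub continuousOn_const)
    (fun x hx => by
      rw [min_eq_left huw, max_eq_right huw] at hx
      have hx0 : x ≠ 0 := (hu.trans hx.1).ne'
      have := ((hasDerivAt_pow 2 x).inv (pow_ne_zero 2 hx0)).hasDerivWithinAt (s := Ioi x)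
      convert! this using 1
      push_cast
      field_simp)
    (fun x hx => by
      rw [min_eq_left huw, max_eq_right huw] at hx
      have hfx : IntervalIntegrable f volume u x := hf.mono_set (by
        rw [uIcc_of_le huw, uIcc_of_le hx.1.le]; exact Icc_subset_Icc_right hx.2.le)
      have := intervalIntegral.integral_hasDerivWithinAt_right hfx (s := Ici x) (t := Ioi x)
        hfm.stronglyMeasurable.stronglyMeasurableAtFilter (hfr x)
      exact (this.mono Ioi_subset_Ici_self).sub_const _)
    (ContinuousOn.intervalIntegrable (ContinuousOn.div continuousOn_const (by fun_prop)
      fun x hx => pow_ne_zero 3 (hpos x hx).ne'))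
    hf
  have e1 : ∫ v in u..w, f v / v ^ 2 = ∫ x in u..w, (x ^ 2)⁻¹ * f x := by
    refine intervalIntegral.integral_congr fun x _ => ?_
    simp only [div_eq_inv_mul]
  have e2 : ∫ x in u..w, -2 / x ^ 3 * ((∫ v in u..x, f v) - J u) =
      ∫ x in u..w, 2 * J x / x ^ 3 := by
    refine intervalIntegral.integral_congr fun x hx => ?_
    rw [uIcc_of_le huw] at hx
    simp only [hJ x hx.1]
    ring
  have e3 := abs_integral_div_pow_le (f := fun x => 2 * J x) (c := 2 * c) 3 hu huw (by positivity)
    (fun v hv => by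
      rw [abs_mul, abs_two, mul_assoc]
      exact mul_le_mul_of_nonneg_left (hJc v hv) zero_le_two)
  have e4 : |J w / w ^ 2| ≤ c * Real.exp (-w / 2) / w ^ 2 := by
    rw [abs_div, abs_of_pos (pow_pos hw 2)]
    exact div_le_div_of_nonneg_right (hJc w huw) (by positivity)
  simp only [intervalIntegral.integral_same, hJ w huw] at hparts
  rw [e1, hparts, e2]
  rw [show (w ^ 2)⁻¹ * (J u - J w - J u) - (u ^ 2)⁻¹ * (0 - J u) -
    (∫ x in u..w, 2 * J x / x ^ 3) - J u / u ^ 2 =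
      -(J w / w ^ 2) - ∫ x in u..w, 2 * J x / x ^ 3 by ring]
  refine (abs_sub _ _).trans (add_le_add (by rwa [abs_neg]) (e3.trans_eq (by ring)))

lemma abs_integral_primeErr_div_sq_sub_le (hRH : RiemannHypothesis) {δ : ℝ} (hδ : 0 < δ) :
    ∀ᶠ u in atTop, ∀ w, u ≤ w →
      |(∫ v in u..w, primeErr v / v ^ 2) - 2 * Real.exp (-u / 2) / u ^ 2| ≤
        (0.0499 + 2 * δ) * Real.exp (-u / 2) / u ^ 2 + 3 * Real.exp (-w / 2) / w ^ 2 +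
          12 * Real.exp (-u / 2) / u ^ 3 := by
  have hR : ∀ᶠ v in atTop, |Real.exp (v / 2) * (primeErr v - mangoldtErr v) - 1| < δ := by
    simpa [Real.dist_eq] using (tendsto_exp_mul_primeErr_sub hRH).eventually (Metric.ball_mem_nhds 1 hδ)
  obtain ⟨U, hU⟩ := eventually_atTop.1 (hR.and (eventually_abs_zeroTail_re_le hRH))
  filter_upwards [eventually_ge_atTop U, eventually_gt_atTop 0] with u hUu hu w huw
  have hint : ∀ b, IntervalIntegrable (fun v => Real.exp (-v / 2)) volume u b := fun b => by
    apply Continuous.intervalIntegrable; fun_prop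
  have hmm : Measurable mangoldtErr := by
    have : mangoldtErr = fun v => mangoldtErr v + v - v := by
      ext v
      ring
    rw [this]
    exact monotone_mangoldtErr_add.measurable.sub measurable_id
  set J : ℝ → ℝ := fun v => (zeroTail v).re + 2 * Real.exp (-v / 2) with hJd
  have h1 := abs_integral_div_sq_sub_le (f := fun v => mangoldtErr v + Real.exp (-v / 2)) (J := J)
    (c := 3) hu huw (by norm_num) ((intervalIntegrable_mangoldtErr u w).add (hint w))
    (fun x => (continuousWithinAt_mangoldtErr x).add
      (Continuous.continuousWithinAt (by fun_prop)))
    (hmm.add (by fun_prop))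
    (fun x hx => by
      rw [intervalIntegral.integral_add (intervalIntegrable_mangoldtErr u x) (hint x),
        integral_mangoldtErr_eq_zeroTail hRH hu.le (hu.le.trans hx), integral_exp_neg_half, hJd]
      ring)
    (fun x hx => by
      have h := (hU x (hUu.trans hx)).2
      have he := Real.exp_pos (-x / 2)
      rw [abs_le] at h ⊢
      simp only [hJd]
      constructor <;> linarith)
  have h2 := abs_integral_div_pow_le
    (f := fun v => primeErr v - (mangoldtErr v + Real.exp (-v / 2))) (c := δ) 2 hu huw hδ.le
    (fun v hv => by
      have h := (hU v (hUu.trans hv)).1.le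
      have he := Real.exp_pos (-v / 2)
      have hm : Real.exp (-v / 2) * Real.exp (v / 2) = 1 := by
        rw [← Real.exp_add, neg_div, neg_add_cancel, Real.exp_zero]
      have : primeErr v - (mangoldtErr v + Real.exp (-v / 2)) =
          (Real.exp (v / 2) * (primeErr v - mangoldtErr v) - 1) * Real.exp (-v / 2) := by
        linear_combination (-(primeErr v - mangoldtErr v)) * hm
      rw [this, abs_mul, abs_of_pos he]
      exact mul_le_mul_of_nonneg_right h he.le)
  have hdiv : ∀ {g : ℝ → ℝ}, IntervalIntegrable g volume u w →
      IntervalIntegrable (fun v => g v / v ^ 2) volume u w := fun hg => by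
    simp only [div_eq_mul_inv]
    refine hg.mul_continuousOn (ContinuousOn.inv₀ (by fun_prop) fun x hx => ?_)
    rw [uIcc_of_le huw] at hx
    exact pow_ne_zero 2 (hu.trans_le hx.1).ne'
  have h3 : ∫ v in u..w, primeErr v / v ^ 2 =
      (∫ v in u..w, (mangoldtErr v + Real.exp (-v / 2)) / v ^ 2) +
        ∫ v in u..w, (primeErr v - (mangoldtErr v + Real.exp (-v / 2))) / v ^ 2 := by
    rw [← intervalIntegral.integral_add
      (hdiv ((intervalIntegrable_mangoldtErr u w).add (hint w)))
      (hdiv ((intervalIntegrable_primeErr u w).sub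
        ((intervalIntegrable_mangoldtErr u w).add (hint w))))]
    refine intervalIntegral.integral_congr fun v _ => ?_
    ring
  have h4 : |J u / u ^ 2 - 2 * Real.exp (-u / 2) / u ^ 2| ≤
      0.0499 * Real.exp (-u / 2) / u ^ 2 := by
    rw [← sub_div, abs_div, abs_of_pos (pow_pos hu 2),
      show J u - 2 * Real.exp (-u / 2) = (zeroTail u).re from add_sub_cancel_right _ _]
    refine div_le_div_of_nonneg_right ?_ (by positivity)
    exact (hU u hUu).2
  rw [h3]
  have h5 : (0.0499 + 2 * δ) * Real.exp (-u / 2) / u ^ 2 =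
    0.0499 * Real.exp (-u / 2) / u ^ 2 + 2 * δ * Real.exp (-u / 2) / u ^ 2 := by ring
  rw [h5]
  rw [abs_le] at h1 h2 h4 ⊢
  constructor <;> linarith [h1.1, h1.2, h2.1, h2.2, h4.1, h4.2]

/-- The two error terms combine to `2 e^{-u/2} / u²` up to a factor close to `1`. -/
lemma abs_primeErr_div_sub_eulerErr_sub_le (hRH : RiemannHypothesis) :
    ∀ᶠ u in atTop, |primeErr u / u - eulerErr u - 2 * Real.exp (-u / 2) / u ^ 2| ≤
      0.04999 * (Real.exp (-u / 2) / u ^ 2) := by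
  have hsmall : ∀ᶠ u : ℝ in atTop, u ^ 2 * Real.exp (-u / 2) < 0.00001 := by
    have h := (Real.tendsto_pow_mul_exp_neg_atTop_nhds_zero 2).comp
      (tendsto_id.atTop_div_const (two_pos (α := ℝ)))
    have h' := h.const_mul 4
    rw [mul_zero] at h'
    filter_upwards [h'.eventually_lt_const (show (0 : ℝ) < 0.00001 by norm_num)] with u hu
    refine lt_of_eq_of_lt ?_ hu
    simp only [Function.comp_apply, id, neg_div]
    ring
  filter_upwards [abs_integral_primeErr_div_sq_sub_le hRH (show (0 : ℝ) < 0.00001 by norm_num),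
    hsmall, eventually_ge_atTop 1000000] with u hu hs hu1
  have hu0 : 0 < u := by linarith
  set E := Real.exp (-u / 2) / u ^ 2 with hE
  have hE0 : 0 < E := by positivity
  have hlim : Tendsto (fun w : ℝ => |eulerErr w - eulerErr u - (primeErr w / w - primeErr u / u +
      2 * E)|) atTop (𝓝 |0 - eulerErr u - (0 - primeErr u / u + 2 * E)|) := by
    have hp : Tendsto (fun w => primeErr w / w) atTop (𝓝 0) := by
      have h1 := tendsto_of_isLittleO_exp (primeErr_isLittleO hRH)
      simpa using h1.div_atTop tendsto_id
    exact (((tendsto_eulerErr hRH).sub_const _).sub ((hp.sub_const _).add_const _)).abs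
  have hbd : Tendsto (fun w : ℝ => 2 * Real.exp (-u) + ((0.0499 + 2 * 0.00001) *
      Real.exp (-u / 2) / u ^ 2 + 3 * Real.exp (-w / 2) / w ^ 2 +
          12 * Real.exp (-u / 2) / u ^ 3)) atTop (𝓝 (2 * Real.exp (-u) + ((0.0499 + 2 * 0.00001) *
      Real.exp (-u / 2) / u ^ 2 + 0 + 12 * Real.exp (-u / 2) / u ^ 3))) := by
    have h1 : Tendsto (fun w : ℝ => 3 * Real.exp (-w / 2) / w ^ 2) atTop (𝓝 0) := by
      have h2 : Tendsto (fun w : ℝ => -w / 2) atTop atBot :=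
        tendsto_neg_atTop_atBot.atBot_div_const two_pos
      have h3 := (Real.tendsto_exp_atBot.comp h2).const_mul 3
      exact h3.div_atTop (tendsto_pow_atTop two_ne_zero)
    exact ((h1.const_add _).add_const _).const_add _
  have hle := le_of_tendsto_of_tendsto hlim hbd (by
    filter_upwards [eventually_ge_atTop u] with w hw
    have a1 := abs_eulerErr_sub_le (by linarith) hw
    have a2 := hu w hw
    rw [mul_div_assoc, ← hE] at a2
    rw [abs_le] at a1 a2 ⊢
    constructor <;> linarith [a1.1, a1.2, a2.1, a2.2])
  have e1 : 2 * Real.exp (-u / 2) / u ^ 2 = 2 * E := by rw [hE]; ring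
  have e2 : Real.exp (-u) ≤ 0.00001 * E := by
    have : Real.exp (-u) = Real.exp (-u / 2) * Real.exp (-u / 2) := by
      rw [← Real.exp_add]; ring_nf
    rw [this, hE, ← mul_div_assoc, le_div_iff₀ (by positivity)]
    nlinarith [Real.exp_pos (-u / 2)]
  have e3 : 12 * Real.exp (-u / 2) / u ^ 3 ≤ 0.000012 * E := by
    rw [show 12 * Real.exp (-u / 2) / u ^ 3 = 12 / u * E by rw [hE]; field_simp]
    refine mul_le_mul_of_nonneg_right ?_ hE0.le
    rw [div_le_iff₀ hu0]
    linarith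
  have e4 : (0.0499 + 2 * 0.00001) * Real.exp (-u / 2) / u ^ 2 = (0.0499 + 2 * 0.00001) * E := by
    rw [hE]; ring
  rw [e4] at hle
  rw [e1]
  rw [show primeErr u / u - eulerErr u - 2 * E = 0 - eulerErr u - (0 - primeErr u / u + 2 * E) by
    ring]
  linarith

lemma abs_exp_sub_mul_one_add_sub_le {y z : ℝ} (hy : |y| ≤ 1 / 4) (hz : |z| ≤ 1 / 4) :
    |Real.exp (z - y) * (1 + y) - 1 - z| ≤ 10 * (y ^ 2 + z ^ 2) := by
  have h := Real.abs_exp_sub_one_sub_id_le (x := z - y)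
    ((abs_sub z y).trans (by linarith))
  rw [show Real.exp (z - y) * (1 + y) - 1 - z =
    (Real.exp (z - y) - 1 - (z - y)) * (1 + y) + (z - y) * y by ring]
  rw [abs_le] at hy
  have h1 : |(Real.exp (z - y) - 1 - (z - y)) * (1 + y)| ≤ (z - y) ^ 2 * 2 := by
    rw [abs_mul]
    refine mul_le_mul h ?_ (abs_nonneg _) (sq_nonneg _)
    rw [abs_le]
    constructor <;> linarith
  rw [abs_le] at h1 ⊢
  constructor <;> nlinarith [sq_nonneg (z - y), sq_nonneg (z + y), sq_nonneg z, sq_nonneg y]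

lemma eventually_abs_exp_mul_sub_le (hRH : RiemannHypothesis) :
    ∀ᶠ u in atTop, |Real.exp (-eulerErr u) * (1 + primeErr u / u) - 1 -
      2 * (Real.exp (-u / 2) / u ^ 2)| ≤ 0.05 * (Real.exp (-u / 2) / u ^ 2) := by
  have hexp : ∀ᶠ u : ℝ in atTop, Real.exp (-u / 2) < 0.0000001 := by
    have h2 : Tendsto (fun w : ℝ => -w / 2) atTop atBot :=
      tendsto_neg_atTop_atBot.atBot_div_const two_pos
    exact (Real.tendsto_exp_atBot.comp h2).eventually_lt_const (by norm_num)
  filter_upwards [abs_primeErr_div_sub_eulerErr_sub_le hRH,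
    (primeErr_isLittleO hRH).bound (show (0 : ℝ) < 0.0001 by norm_num), hexp,
    eventually_ge_atTop 1] with u hu hp hs hu1
  have hu0 : 0 < u := by linarith
  set E := Real.exp (-u / 2) / u ^ 2 with hE
  have hE0 : 0 < E := by positivity
  have hEs : E ≤ 0.0000001 := by
    refine (div_le_self (Real.exp_pos _).le (one_le_pow₀ hu1)).trans hs.le
  set y := primeErr u / u with hy
  set z := y - eulerErr u with hz
  rw [show 2 * Real.exp (-u / 2) / u ^ 2 = 2 * E by rw [hE]; ring] at hu
  have hy2 : y ^ 2 ≤ 0.00000001 * E := by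
    rw [Real.norm_eq_abs, Real.norm_of_nonneg (Real.exp_pos _).le] at hp
    have h := pow_le_pow_left₀ (abs_nonneg _) hp 2
    rw [sq_abs, mul_pow, ← Real.exp_nat_mul,
      show ((2 : ℕ) : ℝ) * (-u / 4) = -u / 2 by push_cast; ring] at h
    rw [hy, hE, div_pow, ← mul_div_assoc]
    refine div_le_div_of_nonneg_right (h.trans_eq (by norm_num)) (by positivity)
  have hz2 : |z| ≤ 3 * E := by
    rw [abs_le] at hu ⊢
    constructor <;> linarith [hu.1, hu.2]
  have hz3 : z ^ 2 ≤ 0.0000009 * E := by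
    rw [← sq_abs]
    nlinarith [abs_nonneg z]
  have hya : |y| ≤ 1 / 4 := by
    refine abs_le_of_sq_le_sq ?_ (by norm_num)
    nlinarith
  have key := abs_exp_sub_mul_one_add_sub_le hya (hz2.trans (by linarith))
  rw [show z - y = -eulerErr u by rw [hz]; ring] at key
  rw [abs_le] at key hu ⊢
  constructor <;> linarith [key.1, key.2, hu.1, hu.2]

lemma image_nth_prime_range {r : ℕ} (hr : 1 ≤ r) :
    (Finset.range r).image (Nat.nth Nat.Prime) =
      (Finset.Icc 1 (nthPrime r)).filter Nat.Prime := by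
  have hmono := Nat.nth_strictMono Nat.infinite_setOfPred_prime
  ext n
  simp only [Finset.mem_image, Finset.mem_range, Finset.mem_filter, Finset.mem_Icc, nthPrime]
  constructor
  · rintro ⟨i, hi, rfl⟩
    have hp : (Nat.nth Nat.Prime i).Prime := Nat.prime_nth_prime i
    exact ⟨⟨hp.one_le, hmono.monotone (by omega)⟩, hp⟩
  · rintro ⟨⟨-, h⟩, hn⟩
    refine ⟨Nat.count Nat.Prime n, ?_, Nat.nth_count hn⟩
    rw [← Nat.nth_count hn, hmono.le_iff_le] at h
    omega

lemma gammaR_mul_exp_eq {r : ℕ} (hr : 1 ≤ r) (hu : 0 < Real.log (nthPrime r)) :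
    gammaR r * Real.exp Real.eulerMascheroniConstant =
      Real.exp (-eulerErr (Real.log (nthPrime r))) *
        (1 + primeErr (Real.log (nthPrime r)) / Real.log (nthPrime r)) := by
  have hp : (nthPrime r).Prime := Nat.prime_nth_prime _
  have hp0 : (0 : ℝ) < nthPrime r := by exact_mod_cast hp.pos
  set u := Real.log (nthPrime r) with hud
  have hfl : ⌊Real.exp u⌋₊ = nthPrime r := by
    rw [hud, Real.exp_log hp0, Nat.floor_natCast]
  have h1 : ∏ p ∈ (Finset.Icc 1 (nthPrime r)).filter Nat.Prime, (1 - 1 / (p : ℝ)) =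
      Real.exp (-eulerSum u) := by
    rw [eulerSum, hfl, ← Finset.sum_neg_distrib, Real.exp_sum, Finset.prod_filter]
    refine Finset.prod_congr rfl fun n _ => ?_
    unfold eulerWt
    split_ifs with hn
    · have h2 : (2 : ℝ) ≤ n := by exact_mod_cast hn.two_le
      have h3 : 1 / (n : ℝ) ≤ 1 / 2 := one_div_le_one_div_of_le two_pos h2
      rw [neg_neg, Real.exp_log (by linarith)]
    · rw [neg_zero, Real.exp_zero]
  have h2 : ∑ p ∈ (Finset.Icc 1 (nthPrime r)).filter Nat.Prime, Real.log p / ((p : ℝ) - 1) =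
      primeSum u := by
    rw [primeSum, hfl, Finset.sum_filter]
    rfl
  have h3 : eulerSum u = eulerErr u + Real.log u + Real.eulerMascheroniConstant := by
    rw [eulerErr]; ring
  have h4 : primeSum u = primeErr u + u - Real.eulerMascheroniConstant := by
    rw [primeErr]; ring
  rw [gammaR, gammaP, image_nth_prime_range hr, h1, h2, h3, h4, neg_add, neg_add, Real.exp_add,
    Real.exp_add, Real.exp_neg (Real.log u), Real.exp_log hu,
    Real.exp_neg Real.eulerMascheroniConstant]
  field_simp
  ring

end

/-- On RH, `γ_r = e^{-γ}(1 + g(p_r)/(√p_r (log p_r)^2))` with `1.95 ≤ g(p_r) ≤ 2.05`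
for `p_r` large. -/
theorem gammaR_asymp_of_RH (hRH : RiemannHypothesis) :
    ∃ x₀ : ℝ, ∀ r : ℕ, 1 ≤ r → x₀ ≤ (nthPrime r : ℝ) →
      1.95 ≤ (gammaR r * Real.exp Real.eulerMascheroniConstant - 1) *
          Real.sqrt (nthPrime r) * (Real.log (nthPrime r)) ^ 2 ∧
      (gammaR r * Real.exp Real.eulerMascheroniConstant - 1) *
          Real.sqrt (nthPrime r) * (Real.log (nthPrime r)) ^ 2 ≤ 2.05 := by
  obtain ⟨x₀, hx₀⟩ := eventually_atTop.1 (Real.tendsto_log_atTop.eventually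
    ((eventually_abs_exp_mul_sub_le hRH).and (eventually_gt_atTop 0)))
  refine ⟨x₀, fun r hr hrx => ?_⟩
  obtain ⟨h, hu⟩ := hx₀ _ hrx
  have hp0 : (0 : ℝ) < nthPrime r := by exact_mod_cast (Nat.prime_nth_prime (r - 1)).pos
  rw [← gammaR_mul_exp_eq hr hu] at h
  have hsqrt : Real.exp (-Real.log (nthPrime r) / 2) = (Real.sqrt (nthPrime r))⁻¹ := by
    rw [neg_div, Real.exp_neg, ← Real.log_sqrt hp0.le, Real.exp_log (Real.sqrt_pos.2 hp0)]
  rw [hsqrt] at h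
  set u := Real.log (nthPrime r)
  set S := Real.sqrt (nthPrime r)
  have hS : 0 < S := Real.sqrt_pos.2 hp0
  have hk : S⁻¹ / u ^ 2 * (S * u ^ 2) = 1 := by field_simp
  rw [abs_le] at h
  have hpos : 0 ≤ S * u ^ 2 := by positivity
  have l1 := mul_le_mul_of_nonneg_right h.1 hpos
  have l2 := mul_le_mul_of_nonneg_right h.2 hpos
  rw [mul_assoc]
  constructor <;> nlinarith
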